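/- arXiv:1603.03134 — 3 statements merged into one kernel-verified Lean document; each statement's English description precedes it below -/
import Mathlib

section
/- There is an absolute constant \(C>0\) such that for every integer \(k\geq 1\), every real \(t\) (write \(T=3+|t|\)), every real \(z>0\) and every real \(c\) with \(-k<c<0\), the absolutely convergent integral \(M:=\frac{1}{2\pi}\int_{-\infty}^{\infty}\frac{\Gamma(k+it+c+i\tau)\,\Gamma(k-it+c+i\tau)\,\Gamma(-(c+i\tau))}{\Gamma(2k+c+i\tau)}\,z^{c+i\tau}\,d\tau\) satisfies \(\cosh(\pi t)\,|M|\;\leq\; C\Bigl[\frac{z^{-k}}{\sqrt{T}}\bigl(1+|\log z|+\log k\bigr)+z^{-k-1/2}\,\frac{k+T}{T}\Bigr]\). -/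
open MeasureTheory

/-- The integrand of the Mellin–Barnes integral representing
`Γ(k+it)Γ(k-it)/Γ(2k) · ₂F₁(k+it, k-it, 2k; -z)`, on the vertical line `Re s = c`:
`τ ↦ Γ(k+it+c+iτ) Γ(k-it+c+iτ) Γ(-(c+iτ)) / Γ(2k+c+iτ) · z^(c+iτ)`,
where `z^(c+iτ) = exp((c+iτ) log z)` with the real logarithm. -/
noncomputable def mbIntegrand (k : ℕ) (t c z : ℝ) (τ : ℝ) : ℂ :=
  Complex.Gamma ((k : ℂ) + t * Complex.I + c + τ * Complex.I) *
    Complex.Gamma ((k : ℂ) - t * Complex.I + c + τ * Complex.I) *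
    Complex.Gamma (-((c : ℂ) + τ * Complex.I)) /
    Complex.Gamma (2 * (k : ℂ) + c + τ * Complex.I) *
    Complex.exp (((c : ℂ) + τ * Complex.I) * Real.log z)

namespace MB

open Complex in
lemma norm_Gamma_le {s : ℂ} (hs : 0 < s.re) : ‖Complex.Gamma s‖ ≤ Real.Gamma s.re := by
  rw [Complex.Gamma_eq_integral hs, Real.Gamma_eq_integral hs, Complex.GammaIntegral]
  refine (norm_integral_le_integral_norm _).trans (le_of_eq ?_)
  refine setIntegral_congr_fun measurableSet_Ioi fun x hx => ?_
  have hx : 0 < x := hx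
  simp only [norm_mul, Complex.norm_cpow_eq_rpow_re_of_pos hx, Complex.sub_re, Complex.one_re]
  rw [Complex.norm_of_nonneg (Real.exp_pos _).le]

lemma norm_Gamma_le' {s : ℂ} (hs : 0 < s.re) :
    ‖Complex.Gamma s‖ ≤ Real.Gamma (1 + s.re) / ‖s‖ := by
  have hs0 : s ≠ 0 := by rintro rfl; simp at hs
  rw [le_div_iff₀ (norm_pos_iff.mpr hs0), mul_comm, ← norm_mul, ← Complex.Gamma_add_one s hs0]
  have := norm_Gamma_le (s := s + 1) (by simp; linarith)
  simpa [add_comm] using this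

lemma norm_beta_le {u v : ℂ} (hu : 0 < u.re) (hv : 0 < v.re) :
    ‖Complex.betaIntegral u v‖ ≤
      Real.Gamma u.re * Real.Gamma v.re / Real.Gamma (u.re + v.re) := by
  have h1 : ‖Complex.betaIntegral u v‖ ≤ ‖Complex.betaIntegral (u.re : ℂ) (v.re : ℂ)‖ := by
    have e : Complex.betaIntegral (u.re : ℂ) (v.re : ℂ)
        = ((∫ x in (0:ℝ)..1, x ^ (u.re - 1) * (1 - x) ^ (v.re - 1) : ℝ) : ℂ) := by
      rw [Complex.betaIntegral, intervalIntegral.integral_of_le zero_le_one,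
        intervalIntegral.integral_of_le zero_le_one, ← integral_complex_ofReal]
      refine setIntegral_congr_fun measurableSet_Ioc fun x hx => ?_
      have h0 : 0 ≤ x := hx.1.le
      have h1 : 0 ≤ 1 - x := by linarith [hx.2]
      rw [Complex.ofReal_mul, Complex.ofReal_cpow h0, Complex.ofReal_cpow h1]
      push_cast; rfl
    rw [e, Complex.norm_real, Complex.betaIntegral]
    refine (intervalIntegral.norm_integral_le_integral_norm zero_le_one).trans
      (le_trans (le_of_eq ?_) (le_abs_self _))
    rw [intervalIntegral.integral_of_le zero_le_one,
        intervalIntegral.integral_of_le zero_le_one, integral_Ioc_eq_integral_Ioo,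
        integral_Ioc_eq_integral_Ioo]
    refine setIntegral_congr_fun measurableSet_Ioo fun x hx => ?_
    have h1 : 0 < 1 - x := by linarith [hx.2]
    simp only [norm_mul]
    rw [Complex.norm_cpow_eq_rpow_re_of_pos hx.1, ← Complex.ofReal_one, ← Complex.ofReal_sub,
      Complex.norm_cpow_eq_rpow_re_of_pos h1]
    simp
  refine h1.trans (le_of_eq ?_)
  rw [Complex.betaIntegral_eq_Gamma_mul_div _ _ (by simpa) (by simpa), ← Complex.ofReal_add,
    Complex.Gamma_ofReal, Complex.Gamma_ofReal, Complex.Gamma_ofReal, ← Complex.ofReal_mul,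
    ← Complex.ofReal_div, Complex.norm_real, Real.norm_eq_abs, abs_of_nonneg]
  have a1 := Real.Gamma_pos_of_pos hu
  have a2 := Real.Gamma_pos_of_pos hv
  have a3 := Real.Gamma_pos_of_pos (add_pos hu hv)
  positivity

/-- Ratio bound for Gamma on a common vertical coordinate. -/
lemma norm_ratio_le {w : ℂ} {d : ℝ} (hw : 0 < w.re) (hd : 0 < d) :
    ‖Complex.Gamma w / Complex.Gamma (w + d)‖ ≤ Real.Gamma w.re / Real.Gamma (w.re + d) := by
  have h := norm_beta_le (u := w) (v := (d : ℂ)) hw (by simpa)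
  rw [Complex.betaIntegral_eq_Gamma_mul_div _ _ hw (by simpa), Complex.Gamma_ofReal] at h
  have a2 := Real.Gamma_pos_of_pos hd
  have e : Complex.Gamma w * (Real.Gamma d : ℂ) / Complex.Gamma (w + d)
     = (Real.Gamma d : ℂ) * (Complex.Gamma w / Complex.Gamma (w + d)) := by ring
  rw [e, norm_mul, Complex.norm_real, Real.norm_eq_abs, abs_of_pos a2, Complex.ofReal_re,
    mul_comm (Real.Gamma w.re), mul_div_assoc] at h
  exact le_of_mul_le_mul_left h a2

/-- The Gamma factor. -/
noncomputable def G (k : ℕ) (t : ℝ) (a : ℂ) : ℂ :=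
  Complex.Gamma (a + t * Complex.I) * Complex.Gamma (a - t * Complex.I) *
    Complex.Gamma (k - a) / Complex.Gamma (k + a)

lemma norm_ratio_k {k : ℕ} {a : ℂ} (h0 : 0 < a.re) (h1 : a.re < k) :
    ‖Complex.Gamma (k - a) / Complex.Gamma (k + a)‖
      ≤ Real.Gamma (k - a.re) / Real.Gamma (k + a.re) := by
  have h := norm_ratio_le (w := (starRingEnd ℂ) ((k : ℂ) - a)) (d := 2 * a.re)
    (by simp; linarith) (by linarith)
  have e : (starRingEnd ℂ) ((k : ℂ) - a) + (2 * a.re : ℝ) = k + a := by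
    apply Complex.ext <;> simp; ring
  rw [e, Complex.Gamma_conj, norm_div, RCLike.norm_conj, ← norm_div] at h
  refine h.trans (le_of_eq ?_)
  simp; congr 2; ring

lemma norm_G_le {k : ℕ} (t : ℝ) {a : ℂ} (h0 : 0 < a.re) (h1 : a.re < k) :
    ‖G k t a‖ ≤ (Real.Gamma (1 + a.re) ^ 2 * (Real.Gamma (k - a.re) / Real.Gamma (k + a.re))) *
      (‖a + t * Complex.I‖⁻¹ * ‖a - t * Complex.I‖⁻¹) := by
  have e1 := norm_Gamma_le' (s := a + t * Complex.I) (by simpa)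
  have e2 := norm_Gamma_le' (s := a - t * Complex.I) (by simpa)
  have e3 := norm_ratio_k h0 h1
  have g1 := Real.Gamma_pos_of_pos (s := 1 + a.re) (by linarith)
  have g2 := Real.Gamma_pos_of_pos (s := k - a.re) (by linarith)
  have g3 := Real.Gamma_pos_of_pos (s := k + a.re) (by linarith)
  simp only [Complex.add_re, Complex.sub_re, Complex.mul_re, Complex.ofReal_re, Complex.I_re,
    mul_zero, Complex.ofReal_im, Complex.I_im, mul_one, sub_zero, add_zero, zero_mul] at e1 e2
  rw [G, mul_div_assoc, norm_mul, norm_mul]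
  calc _ ≤ (Real.Gamma (1 + a.re) / ‖a + t * Complex.I‖) *
        (Real.Gamma (1 + a.re) / ‖a - t * Complex.I‖) *
        (Real.Gamma (k - a.re) / Real.Gamma (k + a.re)) := by gcongr
    _ = _ := by ring

lemma mbIntegrand_eq (k : ℕ) (t c z τ : ℝ) : mbIntegrand k t c z τ =
    G k t (((k + c : ℝ) : ℂ) + τ * Complex.I) *
      Complex.exp ((((k + c : ℝ) : ℂ) + τ * Complex.I - k) * Real.log z) := by
  have e1 : (k : ℂ) + t * Complex.I + c + τ * Complex.I =
    ((k + c : ℝ) : ℂ) + τ * Complex.I + t * Complex.I := by push_cast; ring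
  have e2 : (k : ℂ) - t * Complex.I + c + τ * Complex.I =
    ((k + c : ℝ) : ℂ) + τ * Complex.I - t * Complex.I := by push_cast; ring
  have e3 : -((c : ℂ) + τ * Complex.I) = k - (((k + c : ℝ) : ℂ) + τ * Complex.I) := by
    push_cast; ring
  have e4 : 2 * (k : ℂ) + c + τ * Complex.I = k + (((k + c : ℝ) : ℂ) + τ * Complex.I) := by
    push_cast; ring
  have e5 : (c : ℂ) + τ * Complex.I = ((k + c : ℝ) : ℂ) + τ * Complex.I - k := by
    push_cast; ring
  unfold mbIntegrand G
  rw [e1, e2, e3, e4, e5]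

lemma norm_exp_factor (k : ℕ) {z : ℝ} (hz : 0 < z) (a : ℂ) :
    ‖Complex.exp ((a - k) * Real.log z)‖ = z ^ (a.re - k) := by
  rw [Complex.norm_exp, Real.rpow_def_of_pos hz]
  simp; ring

/-- `|1/(x y)| ≤ (1/x²+1/y²)/2` in the shape needed, explicit in `τ`. -/
lemma inv_norm_mul_le {α : ℝ} (hα : 0 < α) (t τ : ℝ) :
    ‖((α : ℂ) + τ * Complex.I) + t * Complex.I‖⁻¹ * ‖((α : ℂ) + τ * Complex.I) - t * Complex.I‖⁻¹
     ≤ ((α ^ 2 + (τ + t) ^ 2)⁻¹ + (α ^ 2 + (τ - t) ^ 2)⁻¹) / 2 := by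
  have n1 : ‖((α : ℂ) + τ * Complex.I) + t * Complex.I‖ ^ 2 = α ^ 2 + (τ + t) ^ 2 := by
    rw [← Complex.normSq_eq_norm_sq, Complex.normSq_apply]; simp; ring
  have n2 : ‖((α : ℂ) + τ * Complex.I) - t * Complex.I‖ ^ 2 = α ^ 2 + (τ - t) ^ 2 := by
    rw [← Complex.normSq_eq_norm_sq, Complex.normSq_apply]; simp; ring
  rw [← n1, ← n2, ← inv_pow, ← inv_pow]
  nlinarith [sq_nonneg (‖((α : ℂ) + τ * Complex.I) + t * Complex.I‖⁻¹ -
    ‖((α : ℂ) + τ * Complex.I) - t * Complex.I‖⁻¹)]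

lemma integrable_lorentz {α : ℝ} (hα : 0 < α) (t : ℝ) :
    Integrable (fun τ : ℝ => (α ^ 2 + (τ + t) ^ 2)⁻¹) ∧
      ∫ τ : ℝ, (α ^ 2 + (τ + t) ^ 2)⁻¹ = Real.pi / α := by
  have e : (fun τ : ℝ => (α ^ 2 + (τ + t) ^ 2)⁻¹) =
      fun τ => (fun x : ℝ => (α ^ 2)⁻¹ * (1 + (x / α) ^ 2)⁻¹) (τ + t) := by
    ext τ; field_simp
  have i0 : Integrable (fun x : ℝ => (α ^ 2)⁻¹ * (1 + (x / α) ^ 2)⁻¹) :=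
    (integrable_inv_one_add_sq.comp_div hα.ne').const_mul _
  constructor
  · rw [e]; exact i0.comp_add_right t
  · rw [e, integral_add_right_eq_self (fun x : ℝ => (α ^ 2)⁻¹ * (1 + (x / α) ^ 2)⁻¹) t,
      integral_const_mul, Measure.integral_comp_div (fun x : ℝ => (1 + x ^ 2)⁻¹) α,
      integral_univ_inv_one_add_sq, abs_of_pos hα]
    simp; field_simp

/-- The dominating constant. -/
noncomputable def Cst (k : ℕ) (α : ℝ) : ℝ :=
  Real.Gamma (1 + α) ^ 2 * (Real.Gamma (k - α) / Real.Gamma (k + α))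

lemma Cst_pos {k : ℕ} {α : ℝ} (h0 : 0 < α) (h1 : α < k) : 0 < Cst k α := by
  have g1 := Real.Gamma_pos_of_pos (s := 1 + α) (by linarith)
  have g2 := Real.Gamma_pos_of_pos (s := k - α) (by linarith)
  have g3 := Real.Gamma_pos_of_pos (s := k + α) (by linarith)
  unfold Cst; positivity

lemma norm_mb_le {k : ℕ} (t : ℝ) {z c : ℝ} (hz : 0 < z) (h0 : -(k:ℝ) < c) (h1 : c < 0) (τ : ℝ) :
    ‖mbIntegrand k t c z τ‖ ≤ Cst k (k + c) * z ^ c *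
      ((((k + c) ^ 2 + (τ + t) ^ 2)⁻¹ + ((k + c) ^ 2 + (τ - t) ^ 2)⁻¹) / 2) := by
  have hα : 0 < (k : ℝ) + c := by linarith
  have hre : (((k + c : ℝ) : ℂ) + τ * Complex.I).re = k + c := by simp
  rw [mbIntegrand_eq, norm_mul, norm_exp_factor _ hz, hre]
  have h := norm_G_le (k := k) t (a := ((k + c : ℝ) : ℂ) + τ * Complex.I) (by rw [hre]; exact hα)
    (by rw [hre]; linarith)
  rw [hre] at h
  have h2 := inv_norm_mul_le hα t τ
  have hp : 0 < z ^ c := Real.rpow_pos_of_pos hz c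
  have hC := Cst_pos hα (show (k:ℝ) + c < k by linarith)
  have : (k : ℝ) + c - k = c := by ring
  rw [this]
  change _ ≤ Cst k (k + c) * _ at h
  calc _ ≤ (Cst k (k + c) * ((((k + c) ^ 2 + (τ + t) ^ 2)⁻¹ + ((k + c) ^ 2 + (τ - t) ^ 2)⁻¹) / 2))
        * z ^ c := by
        gcongr
        exact h.trans (by gcongr)
    _ = _ := by ring

lemma G_diff {k : ℕ} (t : ℝ) {a : ℂ} (h0 : 0 < a.re) (h1 : a.re < k) :
    DifferentiableAt ℂ (G k t) a := by
  have hG : ∀ s : ℂ, 0 < s.re → DifferentiableAt ℂ Complex.Gamma s := fun s hs =>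
    Complex.differentiableAt_Gamma s (by
      intro m hm
      have h : (0:ℝ) ≤ m := by positivity
      rw [hm] at hs; simp at hs; linarith)
  unfold G
  refine DifferentiableAt.div (DifferentiableAt.mul (DifferentiableAt.mul ?_ ?_) ?_) ?_ ?_
  · exact DifferentiableAt.comp a (hG _ (by simpa)) (by fun_prop)
  · exact DifferentiableAt.comp a (hG _ (by simpa)) (by fun_prop)
  · exact DifferentiableAt.comp a (hG _ (by simp; linarith)) (by fun_prop)
  · exact DifferentiableAt.comp a (hG _ (by simp; linarith)) (by fun_prop)
  · exact Complex.Gamma_ne_zero_of_re_pos (by simp; linarith)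

lemma mb_continuous {k : ℕ} (t : ℝ) {z c : ℝ} (h0 : -(k:ℝ) < c) (h1 : c < 0) :
    Continuous (mbIntegrand k t c z) := by
  rw [continuous_iff_continuousAt]
  intro τ
  have hre : (((k + c : ℝ) : ℂ) + τ * Complex.I).re = k + c := by simp
  have e : mbIntegrand k t c z = fun τ : ℝ => G k t (((k + c : ℝ) : ℂ) + τ * Complex.I) *
      Complex.exp ((((k + c : ℝ) : ℂ) + τ * Complex.I - k) * Real.log z) := by
    ext τ; exact mbIntegrand_eq _ _ _ _ _
  rw [e]
  refine ContinuousAt.mul ?_ (by fun_prop)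
  exact ContinuousAt.comp (f := fun τ : ℝ => ((k + c : ℝ) : ℂ) + τ * Complex.I)
    (G_diff t (by rw [hre]; linarith) (by rw [hre]; linarith)).continuousAt (by fun_prop)

lemma mb_dom_integrable {k : ℕ} (t : ℝ) {z c : ℝ} (h0 : -(k:ℝ) < c) :
   Integrable (fun τ : ℝ => Cst k (k + c) * z ^ c *
      ((((k + c) ^ 2 + (τ + t) ^ 2)⁻¹ + ((k + c) ^ 2 + (τ - t) ^ 2)⁻¹) / 2)) := by
  have hα : 0 < (k : ℝ) + c := by linarith
  exact (((integrable_lorentz hα t).1.add (integrable_lorentz hα (-t)).1).div_const 2).const_mul _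

lemma mb_integrable {k : ℕ} (t : ℝ) {z c : ℝ} (hz : 0 < z) (h0 : -(k:ℝ) < c) (h1 : c < 0) :
    Integrable (mbIntegrand k t c z) :=
  (mb_dom_integrable t h0).mono' (mb_continuous t h0 h1).aestronglyMeasurable
    (Filter.Eventually.of_forall (norm_mb_le t hz h0 h1))

lemma mb_norm_integral_le {k : ℕ} (t : ℝ) {z c : ℝ} (hz : 0 < z) (h0 : -(k:ℝ) < c) (h1 : c < 0) :
    ‖∫ τ, mbIntegrand k t c z τ‖ ≤ Cst k (k + c) * z ^ c * (Real.pi / (k + c)) := by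
  have hα : 0 < (k : ℝ) + c := by linarith
  refine (norm_integral_le_of_norm_le (mb_dom_integrable t h0)
    (Filter.Eventually.of_forall (norm_mb_le t hz h0 h1))).trans (le_of_eq ?_)
  have l2 := integrable_lorentz hα (-t)
  simp only [← sub_eq_add_neg] at l2
  rw [integral_const_mul, integral_div, integral_add (integrable_lorentz hα t).1 l2.1,
    (integrable_lorentz hα t).2, l2.2]
  ring
end MB

namespace MB

lemma Gamma_contAt {x : ℝ} (hx : 0 < x) : ContinuousAt Real.Gamma x :=
  (Real.differentiableAt_Gamma (fun m => by
    have : (0:ℝ) ≤ m := by positivity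
    linarith)).continuousAt

lemma Cst_contAt {k : ℕ} {x : ℝ} (h0 : 0 < 1 + x) (h1 : x < k) (h2 : 0 < k + x) :
    ContinuousAt (Cst k) x := by
  have g3 := Real.Gamma_pos_of_pos (s := k + x) (by linarith)
  unfold Cst
  refine ContinuousAt.mul (ContinuousAt.pow ?_ 2) (ContinuousAt.div ?_ ?_ g3.ne')
  · exact ContinuousAt.comp (f := fun x : ℝ => 1 + x) (Gamma_contAt h0) (by fun_prop)
  · exact ContinuousAt.comp (f := fun x : ℝ => (k:ℝ) - x) (Gamma_contAt (by linarith))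
      (by fun_prop)
  · exact ContinuousAt.comp (f := fun x : ℝ => (k:ℝ) + x) (Gamma_contAt (by linarith))
      (by fun_prop)

lemma mb_eq' (k : ℕ) (t z x τ : ℝ) : mbIntegrand k t (x - k) z τ =
    G k t ((x : ℂ) + τ * Complex.I) *
      Complex.exp (((x : ℂ) + τ * Complex.I - k) * Real.log z) := by
  rw [mbIntegrand_eq]
  have : (k : ℝ) + (x - k) = x := by ring
  rw [this]

open Filter Topology in
lemma mb_shift_aux {k : ℕ} (t : ℝ) {z x₁ x₂ : ℝ} (hz : 0 < z) (h0 : 0 < x₁) (h12 : x₁ ≤ x₂)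
    (h1 : x₂ < k) :
    ∫ τ, mbIntegrand k t (x₁ - k) z τ = ∫ τ, mbIntegrand k t (x₂ - k) z τ := by
  set f : ℂ → ℂ := fun s => G k t s * Complex.exp ((s - k) * Real.log z) with hf
  have hfe : ∀ x τ : ℝ, f ((x : ℂ) + τ * Complex.I) = mbIntegrand k t (x - k) z τ :=
    fun x τ => (mb_eq' k t z x τ).symm
  -- bound
  obtain ⟨B, hB⟩ : ∃ B : ℝ, ∀ x ∈ Set.Icc x₁ x₂, Cst k x * z ^ (x - k) ≤ B := by
    have hc : ContinuousOn (fun x : ℝ => Cst k x * z ^ (x - k)) (Set.Icc x₁ x₂) := by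
      intro x hx
      refine ContinuousAt.continuousWithinAt (ContinuousAt.mul (Cst_contAt ?_ ?_ ?_) ?_)
      · linarith [hx.1]
      · linarith [hx.2]
      · linarith [hx.1, hx.2]
      · exact ContinuousAt.comp (f := fun x : ℝ => x - k)
          (Real.continuousAt_const_rpow hz.ne') (by fun_prop)
    obtain ⟨B, hB⟩ := isCompact_Icc.bddAbove_image hc
    exact ⟨B, fun x hx => hB (Set.mem_image_of_mem _ hx)⟩
  have hbound : ∀ R : ℝ, |t| < |R| → ∀ x ∈ Set.Icc x₁ x₂, ‖f ((x : ℂ) + R * Complex.I)‖ ≤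
      B * ((((R + t) ^ 2)⁻¹ + ((R - t) ^ 2)⁻¹) / 2) := by
    intro R hR x hx
    rw [hfe]
    have hp : 0 < (R + t) ^ 2 := by
      have : R + t ≠ 0 := by
        intro h
        have : R = -t := by linarith
        rw [this, abs_neg] at hR; exact lt_irrefl _ hR
      positivity
    have hm : 0 < (R - t) ^ 2 := by
      have : R - t ≠ 0 := by
        intro h
        have : R = t := by linarith
        rw [this] at hR; exact lt_irrefl _ hR
      positivity
    have := norm_mb_le t hz (k := k) (c := x - k) (by linarith [hx.1]) (by linarith [hx.2]) R
    have e : (k : ℝ) + (x - k) = x := by ring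
    rw [e] at this
    have hC := Cst_pos (k := k) (show 0 < x by linarith [hx.1]) (by linarith [hx.2])
    have hzp : 0 < z ^ (x - k) := Real.rpow_pos_of_pos hz _
    have hBB := hB x hx
    refine this.trans ?_
    have q1 : (x ^ 2 + (R + t) ^ 2)⁻¹ ≤ ((R + t) ^ 2)⁻¹ := by
      gcongr; nlinarith [sq_nonneg x]
    have q2 : (x ^ 2 + (R - t) ^ 2)⁻¹ ≤ ((R - t) ^ 2)⁻¹ := by
      gcongr; nlinarith [sq_nonneg x]
    have : 0 ≤ B := le_trans (by positivity) hBB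
    gcongr
  have hlim : ∀ u : ℝ, Tendsto (fun R : ℝ => ((R + u) ^ 2)⁻¹) atTop (𝓝 0) := fun u =>
    tendsto_inv_atTop_zero.comp
      ((tendsto_pow_atTop two_ne_zero).comp (tendsto_atTop_add_const_right _ _ tendsto_id))
  have hdom : Tendsto (fun R : ℝ => B * ((((R + t) ^ 2)⁻¹ + ((R - t) ^ 2)⁻¹) / 2) * |x₂ - x₁|)
      atTop (𝓝 0) := by
    have := ((((hlim t).add (hlim (-t))).div_const 2).const_mul B).mul_const |x₂ - x₁|
    simpa [sub_eq_add_neg] using this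
  have hmem : ∀ x ∈ Set.uIoc x₁ x₂, x ∈ Set.Icc x₁ x₂ := by
    intro x hx
    rw [Set.uIoc_of_le h12] at hx
    exact Set.Ioc_subset_Icc_self hx
  have hH1 : Tendsto (fun R : ℝ => ∫ x : ℝ in x₁..x₂, f (x + ((R : ℝ) : ℂ) * Complex.I)) atTop
      (𝓝 0) := by
    refine squeeze_zero_norm' ?_ hdom
    filter_upwards [eventually_gt_atTop |t|] with R hR
    exact intervalIntegral.norm_integral_le_of_norm_le_const fun x hx =>
      hbound R (hR.trans_le (le_abs_self R)) x (hmem x hx)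
  have hH2 : Tendsto (fun R : ℝ => ∫ x : ℝ in x₁..x₂, f (x + ((-R : ℝ) : ℂ) * Complex.I)) atTop
      (𝓝 0) := by
    refine squeeze_zero_norm' ?_ hdom
    filter_upwards [eventually_gt_atTop |t|] with R hR
    refine intervalIntegral.norm_integral_le_of_norm_le_const fun x hx => ?_
    have := hbound (-R) (by rw [abs_neg]; exact hR.trans_le (le_abs_self R)) x (hmem x hx)
    refine this.trans (le_of_eq ?_)
    have e1 : (-R + t) ^ 2 = (R - t) ^ 2 := by ring
    have e2 : (-R - t) ^ 2 = (R + t) ^ 2 := by ring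
    rw [e1, e2, add_comm]
  have hV : ∀ x : ℝ, x₁ ≤ x → x ≤ x₂ →
      Tendsto (fun R : ℝ => ∫ y in (-R)..R, f ((x : ℂ) + y * Complex.I)) atTop
        (𝓝 (∫ τ, mbIntegrand k t (x - k) z τ)) := by
    intro x hx1 hx2
    simp only [hfe]
    exact intervalIntegral_tendsto_integral
      (mb_integrable t hz (by linarith) (by linarith)) tendsto_neg_atTop_atBot tendsto_id
  have hrect : ∀ R : ℝ, (∫ y in (-R)..R, f ((x₂ : ℂ) + y * Complex.I)) -
      (∫ y in (-R)..R, f ((x₁ : ℂ) + y * Complex.I)) =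
      -Complex.I * ((∫ x : ℝ in x₁..x₂, f (x + ((R : ℝ) : ℂ) * Complex.I)) -
        ∫ x : ℝ in x₁..x₂, f (x + ((-R : ℝ) : ℂ) * Complex.I)) := by
    intro R
    have := Complex.integral_boundary_rect_eq_zero_of_differentiableOn f
      ((x₁ : ℂ) + ((-R : ℝ) : ℂ) * Complex.I) ((x₂ : ℂ) + (R : ℂ) * Complex.I) (by
        intro s hs
        have hsre : s.re ∈ Set.Icc x₁ x₂ := by
          have := hs.1
          simpa [Set.uIcc_of_le h12] using this
        refine DifferentiableAt.differentiableWithinAt ?_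
        refine DifferentiableAt.mul (G_diff t ?_ ?_) (by fun_prop)
        · linarith [hsre.1]
        · linarith [hsre.2])
    simp only [Complex.add_re, Complex.add_im, Complex.mul_re, Complex.mul_im, Complex.ofReal_re,
      Complex.ofReal_im, Complex.I_re, Complex.I_im, mul_zero, mul_one, zero_mul, sub_zero,
      add_zero, zero_add, smul_eq_mul] at this
    have hI : Complex.I * Complex.I = -1 := Complex.I_mul_I
    linear_combination (-Complex.I) * this -
      ((∫ y in (-R)..R, f ((x₂ : ℂ) + y * Complex.I)) -
      (∫ y in (-R)..R, f ((x₁ : ℂ) + y * Complex.I))) * (-hI)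
  have l1 := (hV x₂ h12 le_rfl).sub (hV x₁ le_rfl h12)
  have l2 := (hH1.sub hH2).const_mul (-Complex.I)
  simp only [hrect] at l1
  have := tendsto_nhds_unique l1 l2
  simp only [sub_zero, mul_zero] at this
  exact (sub_eq_zero.mp this).symm

lemma mb_shift {k : ℕ} (t : ℝ) {z c₁ c₂ : ℝ} (hz : 0 < z) (h1 : -(k:ℝ) < c₁) (h1' : c₁ < 0)
    (h2 : -(k:ℝ) < c₂) (h2' : c₂ < 0) :
    ∫ τ, mbIntegrand k t c₁ z τ = ∫ τ, mbIntegrand k t c₂ z τ := by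
  have e1 : c₁ = (c₁ + k) - k := by ring
  have e2 : c₂ = (c₂ + k) - k := by ring
  rcases le_total c₁ c₂ with h | h
  · rw [e1, e2]
    exact mb_shift_aux t hz (by linarith) (by linarith) (by linarith)
  · rw [e1, e2]
    exact (mb_shift_aux t hz (by linarith) (by linarith) (by linarith)).symm

lemma Cst_le_one {α : ℝ} (h0 : 0 < α) (h1 : α < 1) (n : ℕ) : Cst (n + 1) α ≤ Cst 1 α := by
  induction n with
  | zero => simp
  | succ n ih =>
    refine le_trans ?_ ih
    have hn : (0:ℝ) ≤ n := by positivity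
    have g1 := Real.Gamma_pos_of_pos (s := 1 + α) (by linarith)
    have g2 := Real.Gamma_pos_of_pos (s := n + 1 - α) (by linarith)
    have g3 := Real.Gamma_pos_of_pos (s := n + 1 + α) (by linarith)
    have e1 : ((n + 1 + 1 : ℕ) : ℝ) - α = (n + 1 - α) + 1 := by push_cast; ring
    have e2 : ((n + 1 + 1 : ℕ) : ℝ) + α = (n + 1 + α) + 1 := by push_cast; ring
    unfold Cst
    rw [e1, e2, Real.Gamma_add_one (by linarith), Real.Gamma_add_one (by linarith)]
    push_cast
    refine mul_le_mul_of_nonneg_left ?_ (by positivity)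
    rw [mul_div_mul_comm]
    refine mul_le_of_le_one_left (by positivity) ?_
    rw [div_le_one (by linarith)]
    linarith

/-- The trivial bound. -/
lemma mb_trivial : ∃ C₀ : ℝ, 0 < C₀ ∧ ∀ k : ℕ, 1 ≤ k → ∀ t z c : ℝ, 0 < z → -(k:ℝ) < c → c < 0 →
    ‖∫ τ, mbIntegrand k t c z τ‖ ≤ C₀ * (z ^ (-(k:ℝ)) * (1 + |Real.log z|)) := by
  obtain ⟨B, hB⟩ : ∃ B : ℝ, ∀ x ∈ Set.Icc (0:ℝ) (1/2), Cst 1 x ≤ B := by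
    have hc : ContinuousOn (Cst 1) (Set.Icc (0:ℝ) (1/2)) := fun x hx =>
      (Cst_contAt (by linarith [hx.1]) (by push_cast; linarith [hx.2])
        (by push_cast; linarith [hx.1])).continuousWithinAt
    obtain ⟨B, hB⟩ := isCompact_Icc.bddAbove_image hc
    exact ⟨B, fun x hx => hB (Set.mem_image_of_mem _ hx)⟩
  have hBpos : 0 < B := lt_of_lt_of_le
    (Cst_pos (k := 1) (α := 1/2) (by norm_num) (by norm_num)) (hB (1/2) (by norm_num))
  have hpi := Real.pi_pos
  refine ⟨B * Real.exp 1 * (2 * Real.pi), by positivity, ?_⟩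
  intro k hk t z c hz h1 h2
  set L := |Real.log z| with hL
  have hL0 : 0 ≤ L := abs_nonneg _
  set α : ℝ := 1 / (2 * (1 + L)) with hα
  have hα0 : 0 < α := by positivity
  have hα1 : α ≤ 1 / 2 := by
    rw [hα]; apply one_div_le_one_div_of_le <;> linarith
  have hk' : (1:ℝ) ≤ k := by exact_mod_cast hk
  rw [mb_shift t hz h1 h2 (c₂ := α - k) (by linarith) (by linarith)]
  refine (mb_norm_integral_le t hz (by linarith) (by linarith)).trans ?_
  have e : (k:ℝ) + (α - k) = α := by ring
  rw [e]
  have c1 : Cst k α ≤ B := by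
    obtain ⟨n, rfl⟩ : ∃ n, k = n + 1 := ⟨k - 1, by omega⟩
    exact (Cst_le_one hα0 (by linarith) n).trans (hB α ⟨hα0.le, hα1⟩)
  have c2 : z ^ (α - k) ≤ Real.exp 1 * z ^ (-(k:ℝ)) := by
    rw [sub_eq_add_neg, Real.rpow_add hz]
    gcongr
    rw [Real.rpow_def_of_pos hz]
    gcongr
    calc Real.log z * α ≤ L * α := by gcongr; exact le_abs_self _
      _ ≤ 1 := by
        rw [hα, mul_one_div, div_le_one (by positivity)]; linarith
  have c3 : Real.pi / α = 2 * Real.pi * (1 + L) := by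
    rw [hα]; field_simp
  have := Cst_pos (k := k) hα0 (by linarith)
  rw [c3]
  have hzk : 0 < z ^ (-(k:ℝ)) := Real.rpow_pos_of_pos hz _
  calc _ ≤ B * (Real.exp 1 * z ^ (-(k:ℝ))) * (2 * Real.pi * (1 + L)) := by gcongr
    _ = _ := by ring
end MB

namespace MB
open Set

/-- The function whose Mellin transform we compute. -/
noncomputable def f (t : ℝ) (x : ℝ) : ℂ :=
  ((Real.sin (2 * t * Real.arsinh x) / Real.sqrt (1 + x ^ 2) : ℝ) : ℂ)

/-- substitution -/
noncomputable def h (y : ℝ) : ℝ := Real.sinh (-(Real.log y) / 2)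

lemma h_image : Set.image h (Ioo 0 1) = Ioi 0 := by
  ext x
  constructor
  · rintro ⟨y, hy, rfl⟩
    have := Real.log_neg hy.1 hy.2
    exact Real.sinh_pos_iff.mpr (by linarith)
  · intro hx
    have hx : 0 < x := hx
    have hu : 0 < Real.arsinh x := Real.arsinh_pos_iff.mpr hx
    refine ⟨Real.exp (-(2 * Real.arsinh x)), ⟨Real.exp_pos _, ?_⟩, ?_⟩
    · rw [Real.exp_lt_one_iff]; linarith
    · unfold h
      rw [Real.log_exp]
      have : - -(2 * Real.arsinh x) / 2 = Real.arsinh x := by ring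
      rw [this, Real.sinh_arsinh]

lemma h_inj : InjOn h (Ioo 0 1) := by
  intro x hx y hy hxy
  have := Real.sinh_injective hxy
  exact Real.log_injOn_pos (mem_Ioi.mpr hx.1) (mem_Ioi.mpr hy.1) (by linarith)

lemma h_deriv {y : ℝ} (hy : y ∈ Ioo (0:ℝ) 1) :
    HasDerivWithinAt h (Real.cosh (-(Real.log y) / 2) * (-y⁻¹ / 2)) (Ioo 0 1) y := by
  have := ((Real.hasDerivAt_log hy.1.ne').neg.div_const 2).sinh
  exact this.hasDerivWithinAt

lemma h_cpow {y : ℝ} (hy : y ∈ Ioo (0:ℝ) 1) (s : ℂ) :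
    ((h y : ℝ) : ℂ) ^ (s - 1) =
      2 * (2:ℂ) ^ (-s) * ((1 - (y:ℂ)) ^ (s - 1) * (y : ℂ) ^ ((1 - s) / 2)) := by
  have hy0 := hy.1
  have e : h y = (1 - y) * (Real.exp (-(Real.log y) / 2) * (1 / 2)) := by
    unfold h
    rw [Real.sinh_eq]
    have : Real.exp (-(-(Real.log y) / 2)) = y * Real.exp (-(Real.log y) / 2) := by
      nth_rewrite 2 [← Real.exp_log hy0]
      rw [← Real.exp_add]; congr 1; ring
    rw [this]; ring
  rw [e, Complex.ofReal_mul, Complex.mul_cpow_ofReal_nonneg (by linarith [hy.2]) (by positivity),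
    Complex.ofReal_mul, Complex.mul_cpow_ofReal_nonneg (by positivity) (by positivity)]
  have e1 : ((Real.exp (-(Real.log y) / 2) : ℝ) : ℂ) ^ (s - 1) = (y : ℂ) ^ ((1 - s) / 2) := by
    rw [Complex.cpow_def_of_ne_zero (by exact_mod_cast (Real.exp_pos _).ne'),
      Complex.cpow_def_of_ne_zero (by exact_mod_cast hy0.ne'), ← Complex.ofReal_log hy0.le,
      ← Complex.ofReal_log (Real.exp_pos _).le, Real.log_exp]
    congr 1; push_cast; ring
  have e2 : (((1 / 2 : ℝ)) : ℂ) ^ (s - 1) = 2 * (2:ℂ) ^ (-s) := by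
    have : (((1 / 2 : ℝ)) : ℂ) = ((2 : ℝ) : ℂ)⁻¹ := by push_cast; norm_num
    rw [this, Complex.inv_cpow _ _ (by rw [Complex.arg_ofReal_of_nonneg (by norm_num)]; exact Real.pi_pos.ne), ← Complex.cpow_neg,
      show -(s - 1) = 1 + -s by ring]
    push_cast
    rw [Complex.cpow_add _ _ two_ne_zero, Complex.cpow_one]
  rw [e1, e2]; push_cast; ring

lemma sin_cpow {y : ℝ} (hy : 0 < y) (t : ℝ) :
    ((Real.sin (2 * t * (-(Real.log y) / 2)) : ℝ) : ℂ) =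
      ((y:ℂ) ^ (-(t * Complex.I)) - (y:ℂ) ^ (t * Complex.I)) / (2 * Complex.I) := by
  have hyc : (y:ℂ) ≠ 0 := by exact_mod_cast hy.ne'
  rw [Complex.ofReal_sin, Complex.sin, Complex.cpow_def_of_ne_zero hyc,
    Complex.cpow_def_of_ne_zero hyc, ← Complex.ofReal_log hy.le]
  have hI := Complex.I_ne_zero
  field_simp
  rw [Complex.I_sq]
  push_cast
  have e1 : -(2 * (t:ℂ) * (-(Real.log y : ℂ) / 2) * Complex.I) = Real.log y * t * Complex.I := by ring
  have e2 : (2 * (t:ℂ) * (-(Real.log y : ℂ) / 2) * Complex.I) = -(Real.log y * t * Complex.I) := by ring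
  have e3 : (Real.log y : ℂ) * -(t * Complex.I) = -(Real.log y * t * Complex.I) := by ring
  have e4 : (Real.log y : ℂ) * (t * Complex.I) = (Real.log y * t * Complex.I) := by ring
  try simp only [mul_neg, neg_mul] at *
  ring_nf

lemma integrand_subst (t : ℝ) {y : ℝ} (hy : y ∈ Ioo (0:ℝ) 1) (s : ℂ) :
    |Real.cosh (-(Real.log y) / 2) * (-y⁻¹ / 2)| • (((h y : ℝ) : ℂ) ^ (s - 1) • f t (h y)) =
    (2:ℂ) ^ (-s) / (2 * Complex.I) *
      ((y:ℂ) ^ ((1 - s) / 2 - t * Complex.I - 1) * (1 - (y:ℂ)) ^ (s - 1) -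
       (y:ℂ) ^ ((1 - s) / 2 + t * Complex.I - 1) * (1 - (y:ℂ)) ^ (s - 1)) := by
  have hy0 := hy.1
  have hyc : (y:ℂ) ≠ 0 := by exact_mod_cast hy0.ne'
  have hc := Real.cosh_pos (-(Real.log y) / 2)
  have ea : |Real.cosh (-(Real.log y) / 2) * (-y⁻¹ / 2)| =
      Real.cosh (-(Real.log y) / 2) * (y⁻¹ / 2) := by
    rw [abs_mul, abs_of_pos hc]
    congr 1
    rw [neg_div, abs_neg, abs_of_pos (by positivity)]
  have ef : f t (h y) = ((Real.sin (2 * t * (-(Real.log y) / 2)) : ℝ) : ℂ) /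
      ((Real.cosh (-(Real.log y) / 2) : ℝ) : ℂ) := by
    unfold f h
    rw [Real.arsinh_sinh, ← Complex.ofReal_div]
    congr 3
    rw [← Real.cosh_sq', Real.sqrt_sq hc.le]
  rw [ea, ef, h_cpow hy, sin_cpow hy0, Complex.real_smul, smul_eq_mul,
    Complex.cpow_sub _ _ hyc, Complex.cpow_sub _ _ hyc, Complex.cpow_sub _ _ hyc,
    Complex.cpow_add _ _ hyc, Complex.cpow_neg (y:ℂ) (t * Complex.I), Complex.cpow_one]
  have hcc : ((Real.cosh (-(Real.log y) / 2) : ℝ) : ℂ) ≠ 0 := by exact_mod_cast hc.ne'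
  have hI := Complex.I_ne_zero
  have hp : (y:ℂ) ^ ((t:ℂ) * Complex.I) ≠ 0 := by
    rw [Complex.cpow_def_of_ne_zero hyc]; exact Complex.exp_ne_zero _
  rw [Complex.ofReal_mul]
  generalize ((Real.cosh (-(Real.log y) / 2) : ℝ) : ℂ) = cc at hcc ⊢
  push_cast
  field_simp

lemma beta_intOn {u v : ℂ} (hu : 0 < u.re) (hv : 0 < v.re) :
    IntegrableOn (fun x : ℝ => (x:ℂ) ^ (u - 1) * (1 - (x:ℂ)) ^ (v - 1)) (Ioo 0 1) := by
  have := Complex.betaIntegral_convergent hu hv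
  rw [intervalIntegrable_iff_integrableOn_Ioo_of_le zero_le_one] at this
  exact this

lemma beta_eq (u v : ℂ) : ∫ x in Ioo (0:ℝ) 1, (x:ℂ) ^ (u - 1) * (1 - (x:ℂ)) ^ (v - 1) =
    Complex.betaIntegral u v := by
  rw [Complex.betaIntegral, intervalIntegral.integral_of_le zero_le_one,
    integral_Ioc_eq_integral_Ioo]

lemma f_mellin (t : ℝ) {s : ℂ} (h0 : 0 < s.re) (h1 : s.re < 1) :
    MellinConvergent (f t) s ∧ mellin (f t) s =
      (2:ℂ) ^ (-s) / (2 * Complex.I) * (Complex.betaIntegral ((1 - s) / 2 - t * Complex.I) s -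
        Complex.betaIntegral ((1 - s) / 2 + t * Complex.I) s) := by
  have r1 : 0 < ((1 - s) / 2 - t * Complex.I).re := by simp; linarith
  have r2 : 0 < ((1 - s) / 2 + t * Complex.I).re := by simp; linarith
  have i1 := beta_intOn r1 h0
  have i2 := beta_intOn r2 h0
  constructor
  · unfold MellinConvergent
    rw [← h_image, integrableOn_image_iff_integrableOn_abs_deriv_smul measurableSet_Ioo
      (fun y hy => h_deriv hy) h_inj]
    refine IntegrableOn.congr_fun ?_ (fun y hy => (integrand_subst t hy s).symm) measurableSet_Ioo
    exact (i1.sub i2).const_mul _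
  · unfold mellin
    rw [← h_image, integral_image_eq_integral_abs_deriv_smul measurableSet_Ioo
      (fun y hy => h_deriv hy) h_inj]
    rw [setIntegral_congr_fun measurableSet_Ioo (fun y hy => integrand_subst t hy s)]
    rw [integral_const_mul, integral_sub i1 i2, beta_eq, beta_eq]

/-- The Mellin transform of `f`, in Gamma form. -/
noncomputable def Pf (t : ℝ) (a : ℂ) : ℂ :=
  (Real.sinh (Real.pi * t) / (2 * Real.sqrt Real.pi) : ℂ) *
    (Complex.Gamma (a + t * Complex.I) * Complex.Gamma (a - t * Complex.I) *
      (Complex.Gamma (1 - a) / Complex.Gamma (1 / 2 + a)))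

lemma inv_Gamma_one_sub {w : ℂ} (hw : 0 < w.re) (hw' : w.re < 1) :
    (Complex.Gamma (1 - w))⁻¹ = Complex.Gamma w * Complex.sin (Real.pi * w) / Real.pi := by
  have h := Complex.Gamma_mul_Gamma_one_sub w
  have n1 := Complex.Gamma_ne_zero_of_re_pos hw
  have n2 : Complex.Gamma (1 - w) ≠ 0 := Complex.Gamma_ne_zero_of_re_pos (by simp; linarith)
  have hpi : (Real.pi : ℂ) ≠ 0 := by exact_mod_cast Real.pi_ne_zero
  have hs : Complex.sin (Real.pi * w) ≠ 0 := by
    intro h0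
    rw [h0, div_zero] at h
    exact mul_ne_zero n1 n2 h
  rw [eq_div_iff hs] at h
  rw [eq_div_iff hpi, inv_mul_eq_div, div_eq_iff n2]
  linear_combination -h

lemma f_mellin_Gamma (t : ℝ) {a : ℂ} (h0 : 0 < a.re) (h1 : a.re < 1 / 2) :
    mellin (f t) (1 - 2 * a) = Pf t a := by
  rw [(f_mellin t (s := 1 - 2 * a) (by simp; linarith) (by simp; linarith)).2]
  have e0 : (1 - (1 - 2 * a)) / 2 = a := by ring
  have rs : 0 < (1 - 2 * a).re := by simp; linarith
  rw [e0, Complex.betaIntegral_eq_Gamma_mul_div _ _ (by simpa) rs,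
    Complex.betaIntegral_eq_Gamma_mul_div _ _ (by simpa) rs]
  have e1 : a - t * Complex.I + (1 - 2 * a) = 1 - (a + t * Complex.I) := by ring
  have e2 : a + t * Complex.I + (1 - 2 * a) = 1 - (a - t * Complex.I) := by ring
  rw [e1, e2, div_eq_mul_inv _ (Complex.Gamma (1 - (a + t * Complex.I))),
    div_eq_mul_inv _ (Complex.Gamma (1 - (a - t * Complex.I))),
    inv_Gamma_one_sub (w := a + t * Complex.I) (by simpa) (by simp; linarith),
    inv_Gamma_one_sub (w := a - t * Complex.I) (by simpa) (by simp; linarith)]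
  have es : Complex.sin (Real.pi * (a + t * Complex.I)) - Complex.sin (Real.pi * (a - t * Complex.I))
      = 2 * Complex.cos (Real.pi * a) * (Complex.sinh (Real.pi * t) * Complex.I) := by
    rw [mul_add, mul_sub, Complex.sin_add, Complex.sin_sub, ← Complex.sin_mul_I]
    rw [← mul_assoc (Real.pi : ℂ) t]; ring
  -- duplication and reflection
  have hd := Complex.Gamma_mul_Gamma_add_half (1 / 2 - a)
  have e3 : 1 / 2 - a + 1 / 2 = 1 - a := by ring
  have e4 : 2 * (1 / 2 - a) = 1 - 2 * a := by ring
  have e5 : 1 - (1 - 2 * a) = 2 * a := by ring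
  rw [e3, e4, e5] at hd
  have hr := Complex.Gamma_mul_Gamma_one_sub (1 / 2 + a)
  have e6 : 1 - (1 / 2 + a) = 1 / 2 - a := by ring
  have e7 : Complex.sin (Real.pi * (1 / 2 + a)) = Complex.cos (Real.pi * a) := by
    rw [show (Real.pi : ℂ) * (1 / 2 + a) = Real.pi * a + Real.pi / 2 by ring,
      Complex.sin_add_pi_div_two]
  rw [e6, e7] at hr
  have n1 : Complex.Gamma (1 / 2 + a) ≠ 0 :=
    Complex.Gamma_ne_zero_of_re_pos (by simp; linarith)
  have n2 : Complex.Gamma (1 / 2 - a) ≠ 0 :=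
    Complex.Gamma_ne_zero_of_re_pos (by simp; linarith)
  have hpi : (Real.pi : ℂ) ≠ 0 := by exact_mod_cast Real.pi_ne_zero
  have hc : Complex.cos (Real.pi * a) ≠ 0 := by
    intro h0
    rw [h0, div_zero] at hr
    exact mul_ne_zero n1 n2 hr
  have hsp : ((Real.sqrt Real.pi : ℝ) : ℂ) ≠ 0 := by
    exact_mod_cast (Real.sqrt_pos.mpr Real.pi_pos).ne'
  have hsq : ((Real.sqrt Real.pi : ℝ) : ℂ) ^ 2 = Real.pi := by
    exact_mod_cast Real.sq_sqrt Real.pi_pos.le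
  have h22 : (2:ℂ) ^ (-(1 - 2 * a)) * 2 = (2:ℂ) ^ (2 * a) := by
    rw [show -(1 - 2 * a) = 2 * a + (-1) by ring, Complex.cpow_add _ _ two_ne_zero,
      Complex.cpow_neg_one]; field_simp
  have hI := Complex.I_ne_zero
  -- key : 2^(2a) Γ(1-2a) cos = √π Γ(1-a)/Γ(1/2+a)
  have key : (2:ℂ) ^ (2 * a) * Complex.Gamma (1 - 2 * a) * Complex.cos (Real.pi * a) =
      Real.sqrt Real.pi * (Complex.Gamma (1 - a) / Complex.Gamma (1 / 2 + a)) := by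
    rw [eq_div_iff hc] at hr
    rw [mul_div_assoc', eq_div_iff n1]
    apply mul_left_cancel₀ hsp
    apply mul_left_cancel₀ n2
    linear_combination (-Complex.cos (Real.pi * a) * Complex.Gamma (1 / 2 + a) *
      Complex.Gamma (1 / 2 - a)) * hd + (Complex.Gamma (1 / 2 - a) * Complex.Gamma (1 - a)) * hr
      - Complex.Gamma (1 / 2 - a) * Complex.Gamma (1 - a) * hsq
  unfold Pf
  rw [show Complex.Gamma (a + t * Complex.I) * Complex.Gamma (a - t * Complex.I) *
      (Complex.Gamma (1 - a) / Complex.Gamma (1 / 2 + a)) =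
      Complex.Gamma (a + t * Complex.I) * Complex.Gamma (a - t * Complex.I) / Real.sqrt Real.pi *
      (Real.sqrt Real.pi * (Complex.Gamma (1 - a) / Complex.Gamma (1 / 2 + a))) by
        field_simp, ← key, ← h22]
  push_cast
  calc _ = (2:ℂ) ^ (-(1 - 2 * a)) / (2 * Complex.I) * (Complex.Gamma (a - t * Complex.I) *
        Complex.Gamma (a + t * Complex.I) * Complex.Gamma (1 - 2 * a) / Real.pi *
        (Complex.sin (Real.pi * (a + t * Complex.I)) -
          Complex.sin (Real.pi * (a - t * Complex.I)))) := by ring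
    _ = _ := by
      rw [es, ← hsq]
      field_simp
end MB

namespace MB
open Set

/-- The abscissa `3/8`. -/
noncomputable def aa (τ : ℝ) : ℂ := ((3 / 8 : ℝ) : ℂ) + τ * Complex.I

lemma aa_re (τ : ℝ) : (aa τ).re = 3 / 8 := by simp [aa]

lemma aa_im (τ : ℝ) : (aa τ).im = τ := by simp [aa]

lemma Pf_diff (t : ℝ) {a : ℂ} (h0 : 0 < a.re) (h1 : a.re < 1) :
    DifferentiableAt ℂ (Pf t) a := by
  have hG : ∀ s : ℂ, 0 < s.re → DifferentiableAt ℂ Complex.Gamma s := fun s hs =>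
    Complex.differentiableAt_Gamma s (by
      intro m hm
      have h : (0:ℝ) ≤ m := by positivity
      rw [hm] at hs; simp at hs; linarith)
  unfold Pf
  refine DifferentiableAt.const_mul (DifferentiableAt.mul (DifferentiableAt.mul ?_ ?_)
    (DifferentiableAt.div ?_ ?_ ?_)) _
  · exact DifferentiableAt.comp a (hG _ (by simpa)) (by fun_prop)
  · exact DifferentiableAt.comp a (hG _ (by simpa)) (by fun_prop)
  · exact DifferentiableAt.comp a (hG _ (by simp; linarith)) (by fun_prop)
  · exact DifferentiableAt.comp a (hG _ (by simp; linarith)) (by fun_prop)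
  · exact Complex.Gamma_ne_zero_of_re_pos (by simp; linarith)

lemma Pf_integrable (t : ℝ) : Integrable (fun τ : ℝ => Pf t (aa τ)) := by
  have hα : (0:ℝ) < 3 / 8 := by norm_num
  have hdom := (((integrable_lorentz hα t).1.add (integrable_lorentz hα (-t)).1).div_const
    2).const_mul (‖(Real.sinh (Real.pi * t) / (2 * Real.sqrt Real.pi) : ℂ)‖ *
      (Real.Gamma (1 + 3 / 8) ^ 2 * (Real.Gamma (5 / 8) / Real.Gamma (7 / 8))))
  refine hdom.mono' ?_ (Filter.Eventually.of_forall fun τ => ?_)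
  · refine Continuous.aestronglyMeasurable ?_
    rw [continuous_iff_continuousAt]
    intro τ
    refine ContinuousAt.comp (f := aa) (Pf_diff t (by rw [aa_re]; norm_num)
      (by rw [aa_re]; norm_num)).continuousAt ?_
    unfold aa; fun_prop
  · have hre : 0 < (aa τ).re := by rw [aa_re]; norm_num
    have e1 := norm_Gamma_le' (s := aa τ + t * Complex.I) (by simpa)
    have e2 := norm_Gamma_le' (s := aa τ - t * Complex.I) (by simpa)
    have e3 : ‖Complex.Gamma (1 - aa τ) / Complex.Gamma (1 / 2 + aa τ)‖ ≤
        Real.Gamma (5 / 8) / Real.Gamma (7 / 8) := by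
      have h := norm_ratio_le (w := (starRingEnd ℂ) (1 - aa τ)) (d := 1 / 4)
        (by simp [aa_re]; norm_num) (by norm_num)
      have e : (starRingEnd ℂ) (1 - aa τ) + ((1 / 4 : ℝ) : ℂ) = 1 / 2 + aa τ := by
        apply Complex.ext
        · rw [Complex.add_re, Complex.add_re, Complex.conj_re, Complex.sub_re, aa_re, Complex.ofReal_re]
          norm_num
        · rw [Complex.add_im, Complex.add_im, Complex.conj_im, Complex.sub_im, aa_im, Complex.ofReal_im]
          simp
      rw [e, Complex.Gamma_conj, norm_div, RCLike.norm_conj, ← norm_div] at h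
      refine h.trans (le_of_eq ?_)
      simp [aa_re]; norm_num
    have g1 := Real.Gamma_pos_of_pos (s := 1 + 3 / 8) (by norm_num)
    have g2 := Real.Gamma_pos_of_pos (s := 5 / 8) (by norm_num)
    have g3 := Real.Gamma_pos_of_pos (s := 7 / 8) (by norm_num)
    simp only [Complex.add_re, Complex.sub_re, Complex.mul_re, Complex.ofReal_re, Complex.I_re,
      mul_zero, Complex.ofReal_im, Complex.I_im, mul_one, sub_zero, add_zero,
      aa_re] at e1 e2
    have h2 := inv_norm_mul_le hα t τ
    change ‖aa τ + _‖⁻¹ * ‖aa τ - _‖⁻¹ ≤ _ at h2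
    unfold Pf
    rw [norm_mul, norm_mul, norm_mul, mul_assoc ‖((Real.sinh (Real.pi * t) : ℝ) : ℂ) / _‖]
    refine mul_le_mul_of_nonneg_left ?_ (norm_nonneg _)
    calc _ ≤ (Real.Gamma (1 + 3 / 8) / ‖aa τ + t * Complex.I‖) *
        (Real.Gamma (1 + 3 / 8) / ‖aa τ - t * Complex.I‖) *
        (Real.Gamma (5 / 8) / Real.Gamma (7 / 8)) := by gcongr
      _ = Real.Gamma (1 + 3 / 8) ^ 2 * (Real.Gamma (5 / 8) / Real.Gamma (7 / 8)) *
        (‖aa τ + t * Complex.I‖⁻¹ * ‖aa τ - t * Complex.I‖⁻¹) := by ring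
      _ ≤ Real.Gamma (1 + 3 / 8) ^ 2 * (Real.Gamma (5 / 8) / Real.Gamma (7 / 8)) *
        ((((3/8) ^ 2 + (τ + t) ^ 2)⁻¹ + ((3/8) ^ 2 + (τ - t) ^ 2)⁻¹) / 2) := by gcongr
      _ = _ := by simp [sub_eq_add_neg]

lemma f_cont (t : ℝ) : Continuous (f t) := by
  unfold f
  refine Complex.continuous_ofReal.comp (Continuous.div ?_ ?_ ?_)
  · exact Real.continuous_sin.comp (continuous_const.mul Real.continuous_arsinh)
  · fun_prop
  · intro x
    have : 0 < 1 + x ^ 2 := by positivity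
    exact (Real.sqrt_pos.mpr this).ne'

lemma sigma_eq (τ : ℝ) : (((1 / 4 : ℝ)) : ℂ) + ((-2 * τ : ℝ) : ℂ) * Complex.I = 1 - 2 * aa τ := by
  unfold aa; push_cast; ring

lemma mellin_line (t τ : ℝ) :
    mellin (f t) ((((1 / 4 : ℝ)) : ℂ) + ((-2 * τ : ℝ) : ℂ) * Complex.I) = Pf t (aa τ) := by
  rw [sigma_eq, f_mellin_Gamma t (by rw [aa_re]; norm_num) (by rw [aa_re]; norm_num)]

lemma f_inversion (t : ℝ) {x : ℝ} (hx : 0 < x) :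
    ∫ τ : ℝ, (x:ℂ) ^ (2 * aa τ - 1) * Pf t (aa τ) = Real.pi * f t x := by
  have hvi : Complex.VerticalIntegrable (mellin (f t)) (1 / 4 : ℝ) := by
    unfold Complex.VerticalIntegrable
    rw [← integrable_comp_mul_left_iff _ (show (-2:ℝ) ≠ 0 by norm_num)]
    refine (Pf_integrable t).congr (Filter.Eventually.of_forall fun τ => ?_)
    exact (mellin_line t τ).symm
  have hmc : MellinConvergent (f t) ((1 / 4 : ℝ) : ℂ) :=
    (f_mellin t (s := ((1 / 4 : ℝ) : ℂ)) (by rw [Complex.ofReal_re]; norm_num)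
      (by rw [Complex.ofReal_re]; norm_num)).1
  have hinv := mellinInv_mellin_eq (1 / 4 : ℝ) (f t) hx hmc hvi (f_cont t).continuousAt
  unfold mellinInv at hinv
  have hs := Measure.integral_comp_mul_left
    (fun y : ℝ => (x:ℂ) ^ (-((((1 / 4 : ℝ)) : ℂ) + y * Complex.I)) •
      mellin (f t) ((((1 / 4 : ℝ)) : ℂ) + y * Complex.I)) (-2)
  simp only [mellin_line] at hs
  simp only [sigma_eq, smul_eq_mul, neg_sub] at hs
  rw [hs, ← hinv]
  have hpi : (Real.pi : ℂ) ≠ 0 := by exact_mod_cast Real.pi_ne_zero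
  simp only [Complex.real_smul, smul_eq_mul]
  rw [← mul_assoc]
  congr 1
  rw [show |((-2:ℝ))⁻¹| = 1 / 2 by rw [abs_inv]; norm_num]
  push_cast
  field_simp

/-! The sine integrals -/

lemma sin_pos' {φ : ℝ} (h : φ ∈ Ioo 0 (Real.pi / 2)) : 0 < Real.sin φ :=
  Real.sin_pos_of_pos_of_lt_pi h.1 (by linarith [h.2, Real.pi_pos])

lemma sin_rpow_integrable {p : ℝ} (hp : -1 < p) :
    IntegrableOn (fun φ : ℝ => Real.sin φ ^ p) (Ioo 0 (Real.pi / 2)) := by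
  have hpi := Real.pi_pos
  have hm : AEStronglyMeasurable (fun φ : ℝ => Real.sin φ ^ p)
      (volume.restrict (Ioo 0 (Real.pi / 2))) := by
    refine ContinuousOn.aestronglyMeasurable ?_ measurableSet_Ioo
    intro φ hφ
    exact (ContinuousAt.rpow_const Real.continuous_sin.continuousAt
      (Or.inl (sin_pos' hφ).ne')).continuousWithinAt
  have h0 : IntegrableOn (fun φ : ℝ => 1 + (2 / Real.pi) ^ p * φ ^ p) (Ioo 0 (Real.pi / 2)) := by
    have := intervalIntegral.intervalIntegrable_rpow' (a := 0) (b := Real.pi / 2) hp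
    rw [intervalIntegrable_iff_integrableOn_Ioo_of_le (by linarith)] at this
    refine Integrable.add ?_ (this.const_mul _)
    exact integrableOn_const (by simp)
  refine h0.mono' hm ?_
  refine (ae_restrict_iff' measurableSet_Ioo).mpr (Filter.Eventually.of_forall fun φ hφ => ?_)
  have hs := sin_pos' hφ
  rw [Real.norm_eq_abs, abs_of_pos (Real.rpow_pos_of_pos hs _)]
  rcases le_total 0 p with h | h
  · have : 0 ≤ (2 / Real.pi) ^ p * φ ^ p := by
      have := hφ.1.le
      positivity
    have := Real.rpow_le_one hs.le (Real.sin_le_one φ) h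
    linarith
  · have h1 : 2 / Real.pi * φ ≤ Real.sin φ := Real.mul_le_sin hφ.1.le hφ.2.le
    have := Real.rpow_le_rpow_of_nonpos (mul_pos (by positivity) hφ.1) h1 h
    rw [Real.mul_rpow (by positivity) hφ.1.le] at this
    linarith

/-- `S_k(a)`. -/
noncomputable def S (K : ℝ) (a : ℂ) : ℂ :=
  ∫ φ in Ioo 0 (Real.pi / 2), (Real.sin φ : ℂ) ^ (2 * a - 1) * (Real.sin (K * φ) : ℂ)

lemma S_integrable (g : ℝ → ℝ) (hg : Continuous g) (hg1 : ∀ x, |g x| ≤ 1) {a : ℂ}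
    (ha : 0 < a.re) :
    IntegrableOn (fun φ : ℝ => (Real.sin φ : ℂ) ^ (2 * a - 1) * (g φ : ℂ))
      (Ioo 0 (Real.pi / 2)) := by
  refine (sin_rpow_integrable (p := 2 * a.re - 1) (by linarith)).mono' ?_ ?_
  · refine ContinuousOn.aestronglyMeasurable ?_ measurableSet_Ioo
    intro φ hφ
    refine ContinuousAt.continuousWithinAt (ContinuousAt.mul ?_ (by fun_prop))
    exact ContinuousAt.cpow (by fun_prop) continuousAt_const
      (Complex.ofReal_mem_slitPlane.mpr (sin_pos' hφ))
  · refine (ae_restrict_iff' measurableSet_Ioo).mpr (Filter.Eventually.of_forall fun φ hφ => ?_)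
    rw [norm_mul, Complex.norm_cpow_eq_rpow_re_of_pos (sin_pos' hφ), Complex.norm_real]
    have : (2 * a - 1).re = 2 * a.re - 1 := by simp
    rw [this]
    exact mul_le_of_le_one_right (Real.rpow_nonneg (sin_pos' hφ).le _) (hg1 φ)

lemma S_base {a : ℂ} (ha : 0 < a.re) :
    S 1 a = Real.sqrt Real.pi / 2 * (Complex.Gamma (a + 1 / 2) / Complex.Gamma (a + 1)) := by
  have hpi := Real.pi_pos
  have himg : Set.image (fun φ : ℝ => Real.sin φ ^ 2) (Ioo 0 (Real.pi / 2)) = Ioo 0 1 := by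
    ext y
    constructor
    · rintro ⟨φ, hφ, rfl⟩
      have h1 := sin_pos' hφ
      have h2 : 0 < Real.cos φ := Real.cos_pos_of_mem_Ioo ⟨by linarith [hφ.1], hφ.2⟩
      refine ⟨by positivity, ?_⟩
      have := Real.sin_sq_add_cos_sq φ
      simp only
      nlinarith
    · intro hy
      have h1 : 0 < Real.sqrt y := Real.sqrt_pos.mpr hy.1
      have h2 : Real.sqrt y < 1 := by
        rw [Real.sqrt_lt' one_pos]; linarith [hy.2]
      refine ⟨Real.arcsin (Real.sqrt y), ⟨Real.arcsin_pos.mpr h1,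
        Real.arcsin_lt_pi_div_two.mpr h2⟩, ?_⟩
      simp only
      rw [Real.sin_arcsin (by linarith) h2.le, Real.sq_sqrt hy.1.le]
  have hinj : InjOn (fun φ : ℝ => Real.sin φ ^ 2) (Ioo 0 (Real.pi / 2)) := by
    intro x hx y hy hxy
    have h := (sq_eq_sq₀ (sin_pos' hx).le (sin_pos' hy).le).mp hxy
    exact Real.injOn_sin ⟨by linarith [hx.1], hx.2.le⟩ ⟨by linarith [hy.1], hy.2.le⟩ h
  have hder : ∀ φ ∈ Ioo 0 (Real.pi / 2), HasDerivWithinAt (fun φ : ℝ => Real.sin φ ^ 2)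
      (2 * Real.sin φ * Real.cos φ) (Ioo 0 (Real.pi / 2)) φ := by
    intro φ _
    refine HasDerivAt.hasDerivWithinAt (((Real.hasDerivAt_sin φ).fun_pow 2).congr_deriv ?_)
    simp
  have hb := beta_eq (a + 1 / 2) (1 / 2)
  rw [← himg, integral_image_eq_integral_abs_deriv_smul measurableSet_Ioo hder hinj] at hb
  have hcongr : ∀ φ ∈ Ioo 0 (Real.pi / 2),
      |2 * Real.sin φ * Real.cos φ| • (((Real.sin φ ^ 2 : ℝ) : ℂ) ^ (a + 1 / 2 - 1) *
        (1 - ((Real.sin φ ^ 2 : ℝ) : ℂ)) ^ ((1 / 2 : ℂ) - 1)) =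
      2 * ((Real.sin φ : ℂ) ^ (2 * a - 1) * (Real.sin (1 * φ) : ℂ)) := by
    intro φ hφ
    have h1 := sin_pos' hφ
    have h2 : 0 < Real.cos φ := Real.cos_pos_of_mem_Ioo ⟨by linarith [hφ.1], hφ.2⟩
    have ec : (1 - ((Real.sin φ ^ 2 : ℝ) : ℂ)) = ((Real.cos φ ^ 2 : ℝ) : ℂ) := by
      rw [Real.cos_sq']; push_cast; ring
    have e1 : ((Real.sin φ ^ 2 : ℝ) : ℂ) ^ (a + 1 / 2 - 1) = (Real.sin φ : ℂ) ^ (2 * a - 1) := by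
      rw [Complex.cpow_def_of_ne_zero (by exact_mod_cast (pow_pos h1 2).ne'),
        Complex.cpow_def_of_ne_zero (by exact_mod_cast h1.ne'), ← Complex.ofReal_log (by positivity),
        ← Complex.ofReal_log h1.le, Real.log_pow]
      congr 1
      push_cast
      ring
    have e2 : ((Real.cos φ ^ 2 : ℝ) : ℂ) ^ ((1 / 2 : ℂ) - 1) = (Real.cos φ : ℂ)⁻¹ := by
      rw [← Complex.cpow_neg_one, Complex.cpow_def_of_ne_zero (by exact_mod_cast (pow_pos h2 2).ne'),
        Complex.cpow_def_of_ne_zero (by exact_mod_cast h2.ne'), ← Complex.ofReal_log (by positivity),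
        ← Complex.ofReal_log h2.le, Real.log_pow]
      congr 1
      push_cast
      ring
    rw [abs_of_pos (by positivity), Complex.real_smul, ec, e1, e2, one_mul]
    have : (Real.cos φ : ℂ) ≠ 0 := by exact_mod_cast h2.ne'
    rw [Complex.ofReal_mul, Complex.ofReal_mul, Complex.ofReal_ofNat]
    field_simp
  rw [setIntegral_congr_fun measurableSet_Ioo hcongr, integral_const_mul,
    Complex.betaIntegral_eq_Gamma_mul_div _ _ (by simp; linarith) (by simp)] at hb
  have hg : Complex.Gamma (1 / 2) = Real.sqrt Real.pi := by
    rw [Complex.Gamma_one_half_eq, Real.sqrt_eq_rpow, Complex.ofReal_cpow hpi.le]; simp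
  rw [hg, show a + 1 / 2 + 1 / 2 = a + 1 by ring] at hb
  unfold S
  linear_combination hb / 2

lemma S_step {a : ℂ} (ha : 0 < a.re) (k : ℕ) (hk : 1 ≤ k) :
    (k + a) * S (2 * k + 1) a = (k - a) * S (2 * k - 1) a := by
  have hpi := Real.pi_pos
  set g1 : ℝ → ℂ := fun φ => (Real.sin φ : ℂ) ^ (2 * a - 1) * (Real.sin ((2 * k + 1) * φ) : ℂ)
  set g2 : ℝ → ℂ := fun φ => (Real.sin φ : ℂ) ^ (2 * a - 1) * (Real.sin ((2 * k - 1) * φ) : ℂ)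
  have i1 : IntegrableOn g1 (Ioo 0 (Real.pi / 2)) :=
    S_integrable (fun φ => Real.sin ((2 * k + 1) * φ)) (by fun_prop)
      (fun x => Real.abs_sin_le_one _) ha
  have i2 : IntegrableOn g2 (Ioo 0 (Real.pi / 2)) :=
    S_integrable (fun φ => Real.sin ((2 * k - 1) * φ)) (by fun_prop)
      (fun x => Real.abs_sin_le_one _) ha
  have hF := intervalIntegral.integral_eq_sub_of_hasDerivAt_of_le (a := 0) (b := Real.pi / 2)
    (f := fun φ : ℝ => (Real.sin φ : ℂ) ^ (2 * a) * (Real.sin (2 * k * φ) : ℂ))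
    (f' := fun φ => (k + a) * g1 φ - (k - a) * g2 φ) (by linarith) ?_ ?_ ?_
  · rw [intervalIntegral.integral_of_le (by linarith), integral_Ioc_eq_integral_Ioo,
      integral_sub (i1.const_mul _) (i2.const_mul _), integral_const_mul, integral_const_mul] at hF
    have e : Real.sin (2 * k * (Real.pi / 2)) = 0 := by
      rw [show 2 * (k:ℝ) * (Real.pi / 2) = k * Real.pi by ring]; exact Real.sin_nat_mul_pi k
    simp only [e, Complex.ofReal_zero, mul_zero, Real.sin_zero, sub_zero] at hF
    exact sub_eq_zero.mp hF
  · refine ContinuousOn.mul ?_ (by fun_prop)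
    intro φ _
    refine ContinuousAt.continuousWithinAt ?_
    refine ContinuousAt.comp (g := fun x : ℝ => (x : ℂ) ^ (2 * a)) (f := Real.sin)
      (Complex.continuousAt_ofReal_cpow_const _ _ (Or.inl (by simpa))) (by fun_prop)
  · intro φ hφ
    have hs := sin_pos' hφ
    have hsc : (Real.sin φ : ℂ) ≠ 0 := by exact_mod_cast hs.ne'
    have d1 : HasDerivAt (fun φ : ℝ => (Real.sin φ : ℂ)) (Real.cos φ : ℂ) φ :=
      (Real.hasDerivAt_sin φ).ofReal_comp
    have d2 : HasDerivAt (fun φ : ℝ => (Real.sin φ : ℂ) ^ (2 * a))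
        (2 * a * (Real.sin φ : ℂ) ^ (2 * a - 1) * Real.cos φ) φ := by
      have h := (Complex.hasStrictDerivAt_cpow_const (c := 2 * a)
        (Complex.ofReal_mem_slitPlane.mpr hs)).hasDerivAt
      exact h.comp φ d1
    have d3 : HasDerivAt (fun φ : ℝ => (Real.sin (2 * k * φ) : ℂ))
        ((Real.cos (2 * k * φ) * (2 * k) : ℝ) : ℂ) φ := by
      have := ((hasDerivAt_id φ).const_mul (2 * (k:ℝ))).sin.ofReal_comp
      simpa using this
    refine (d2.mul d3).congr_deriv ?_
    simp only [g1, g2]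
    have e0 : (Real.sin φ : ℂ) ^ (2 * a) = (Real.sin φ : ℂ) ^ (2 * a - 1) * Real.sin φ := by
      rw [Complex.cpow_sub _ _ hsc, Complex.cpow_one]; field_simp
    have s1 : Real.sin ((2 * k + 1) * φ) = Real.sin (2 * k * φ) * Real.cos φ +
      Real.cos (2 * k * φ) * Real.sin φ := by rw [← Real.sin_add]; congr 1; ring
    have s2 : Real.sin ((2 * k - 1) * φ) = Real.sin (2 * k * φ) * Real.cos φ -
      Real.cos (2 * k * φ) * Real.sin φ := by rw [← Real.sin_sub]; congr 1; ring
    rw [e0, s1, s2]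
    generalize (Real.sin φ : ℂ) ^ (2 * a - 1) = X
    push_cast
    ring
  · rw [intervalIntegrable_iff_integrableOn_Ioo_of_le (by linarith)]
    exact (i1.const_mul _).sub (i2.const_mul _)

lemma S_eq {a : ℂ} (h0 : 0 < a.re) (h1 : a.re < 1) (n : ℕ) :
    S (2 * ((n + 1 : ℕ) : ℝ) - 1) a = Real.sqrt Real.pi / 2 * Complex.Gamma (1 / 2 + a) *
      (Complex.Gamma ((n + 1 : ℕ) - a) / (Complex.Gamma (1 - a) * Complex.Gamma ((n + 1 : ℕ) + a))) := by
  have n1 : Complex.Gamma (1 - a) ≠ 0 := Complex.Gamma_ne_zero_of_re_pos (by simp; linarith)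
  induction n with
  | zero =>
    have := S_base h0
    norm_num at this ⊢
    rw [this, add_comm a, add_comm a]
    field_simp
  | succ n ih =>
    have hs := S_step h0 (n + 1) (by omega)
    have e1 : 2 * ((n + 1 + 1 : ℕ) : ℝ) - 1 = 2 * ((n + 1 : ℕ) : ℝ) + 1 := by push_cast; ring
    have hn : (0:ℝ) ≤ n := by positivity
    have r1 : (((n + 1 : ℕ) : ℂ) + a) ≠ 0 := by
      intro h
      have := congrArg Complex.re h
      simp at this; linarith
    have r2 : (((n + 1 : ℕ) : ℂ) - a) ≠ 0 := by
      intro h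
      have := congrArg Complex.re h
      simp at this; linarith
    have n2 : Complex.Gamma ((n + 1 : ℕ) + a) ≠ 0 :=
      Complex.Gamma_ne_zero_of_re_pos (by simp; linarith)
    have e2 : ((n + 1 + 1 : ℕ) : ℂ) + a = (((n + 1 : ℕ) : ℂ) + a) + 1 := by push_cast; ring
    have e3 : ((n + 1 + 1 : ℕ) : ℂ) - a = (((n + 1 : ℕ) : ℂ) - a) + 1 := by push_cast; ring
    rw [e1, e2, e3, Complex.Gamma_add_one _ r1, Complex.Gamma_add_one _ r2]
    rw [ih] at hs
    apply mul_left_cancel₀ r1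
    rw [hs]
    field_simp

lemma sinh_G {k : ℕ} (hk : 1 ≤ k) (t : ℝ) {a : ℂ} (h0 : 0 < a.re) (h1 : a.re < 1) :
    (Real.sinh (Real.pi * t) : ℂ) * G k t a = 4 * (Pf t a * S (2 * k - 1) a) := by
  obtain ⟨n, rfl⟩ : ∃ n, k = n + 1 := ⟨k - 1, by omega⟩
  rw [S_eq h0 h1 n]
  unfold G Pf
  have n1 : Complex.Gamma (1 - a) ≠ 0 := Complex.Gamma_ne_zero_of_re_pos (by simp; linarith)
  have n2 : Complex.Gamma (1 / 2 + a) ≠ 0 :=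
    Complex.Gamma_ne_zero_of_re_pos (by simp; linarith)
  have hn : (0:ℝ) ≤ n := by positivity
  have n3 : Complex.Gamma ((n + 1 : ℕ) + a) ≠ 0 :=
    Complex.Gamma_ne_zero_of_re_pos (by simp; linarith)
  have hsp : ((Real.sqrt Real.pi : ℝ) : ℂ) ≠ 0 := by
    exact_mod_cast (Real.sqrt_pos.mpr Real.pi_pos).ne'
  generalize ((Real.sinh (Real.pi * t) : ℝ) : ℂ) = sh
  generalize Complex.Gamma (1 / 2 + a) = X at n2 ⊢
  generalize Complex.Gamma (1 - a) = Y at n1 ⊢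
  generalize Complex.Gamma ((n + 1 : ℕ) + a) = Z at n3 ⊢
  field_simp
  try ring
end MB

namespace MB
open Set

lemma pw_eq (k : ℕ) {z s : ℝ} (hz : 0 < z) (hs : 0 < s) (a : ℂ) :
    (s : ℂ) ^ (2 * a - 1) * Complex.exp ((a - k) * Real.log z) =
      ((z ^ (-(k:ℝ)) * Real.sqrt z : ℝ) : ℂ) * ((Real.sqrt z * s : ℝ) : ℂ) ^ (2 * a - 1) := by
  have hq := Real.sqrt_pos.mpr hz
  have hzs := mul_pos hq hs
  have e : z ^ (-(k:ℝ)) * Real.sqrt z = Real.exp ((-k + 1 / 2) * Real.log z) := by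
    rw [Real.sqrt_eq_rpow, ← Real.rpow_add hz, Real.rpow_def_of_pos hz, mul_comm]
  have hl : Real.log (Real.sqrt z * s) = Real.log z / 2 + Real.log s := by
    rw [Real.log_mul hq.ne' hs.ne', Real.log_sqrt hz.le]
  rw [e, Complex.ofReal_exp, Complex.cpow_def_of_ne_zero (by exact_mod_cast hs.ne'),
    Complex.cpow_def_of_ne_zero (by exact_mod_cast hzs.ne'), ← Complex.ofReal_log hs.le,
    ← Complex.ofReal_log hzs.le, hl, ← Complex.exp_add, ← Complex.exp_add]
  congr 1
  push_cast
  ring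

lemma fubini_int (t : ℝ) {z : ℝ} (hz : 0 < z) (K : ℝ) :
    Integrable (fun p : ℝ × ℝ => Pf t (aa p.1) * (((Real.sqrt z * Real.sin p.2 : ℝ) : ℂ) ^
      (2 * aa p.1 - 1) * (Real.sin (K * p.2) : ℂ)))
      (volume.prod (volume.restrict (Ioo 0 (Real.pi / 2)))) := by
  have hq := Real.sqrt_pos.mpr hz
  have hdom := (Pf_integrable t).norm.mul_prod
    ((sin_rpow_integrable (p := -1 / 4) (by norm_num)).const_mul (Real.sqrt z ^ (-1 / 4 : ℝ)))
  refine hdom.mono' ?_ ?_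
  · refine Measurable.aestronglyMeasurable ?_
    have hPf : Measurable (fun τ : ℝ => Pf t (aa τ)) := by
      refine Continuous.measurable ?_
      rw [continuous_iff_continuousAt]
      intro τ
      refine ContinuousAt.comp (f := aa) (Pf_diff t (by rw [aa_re]; norm_num)
        (by rw [aa_re]; norm_num)).continuousAt ?_
      unfold aa; fun_prop
    have haa : Measurable aa := by
      refine Continuous.measurable ?_
      unfold aa; fun_prop
    refine (hPf.comp measurable_fst).mul (Measurable.mul (Measurable.pow ?_ ?_) ?_)
    · fun_prop
    · exact ((haa.comp measurable_fst).const_mul 2).sub_const 1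
    · fun_prop
  · rw [show (volume : Measure ℝ).prod (volume.restrict (Ioo 0 (Real.pi / 2))) =
      (volume.prod volume).restrict (univ ×ˢ Ioo 0 (Real.pi / 2)) by
        rw [← Measure.prod_restrict, Measure.restrict_univ]]
    refine ae_restrict_of_forall_mem (MeasurableSet.univ.prod measurableSet_Ioo) ?_
    rintro ⟨τ, φ⟩ ⟨_, hφ⟩
    have hs := sin_pos' hφ
    simp only at hs ⊢
    rw [norm_mul, norm_mul, Complex.norm_cpow_eq_rpow_re_of_pos (mul_pos hq hs), Complex.norm_real]
    have : (2 * aa τ - 1).re = -1 / 4 := by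
      simp only [Complex.sub_re, Complex.mul_re, aa_re]; norm_num
    rw [this, Real.mul_rpow hq.le hs.le]
    refine mul_le_mul_of_nonneg_left ?_ (norm_nonneg _)
    exact mul_le_of_le_one_right (by positivity) (Real.abs_sin_le_one _)

lemma mb_osc {k : ℕ} (hk : 1 ≤ k) (t : ℝ) {z : ℝ} (hz : 0 < z) :
    (Real.sinh (Real.pi * t) : ℂ) * ∫ τ, mbIntegrand k t (3 / 8 - k) z τ =
      ((4 * Real.pi * (z ^ (-(k:ℝ)) * Real.sqrt z) *
        ∫ φ in Ioo 0 (Real.pi / 2), Real.sin (2 * t * Real.arsinh (Real.sqrt z * Real.sin φ)) *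
          Real.sin ((2 * k - 1) * φ) / Real.sqrt (1 + z * Real.sin φ ^ 2) : ℝ) : ℂ) := by
  have hq := Real.sqrt_pos.mpr hz
  set W : ℂ := ((z ^ (-(k:ℝ)) * Real.sqrt z : ℝ) : ℂ) with hW
  rw [← integral_const_mul]
  have e1 : ∀ τ : ℝ, (Real.sinh (Real.pi * t) : ℂ) * mbIntegrand k t (3 / 8 - k) z τ =
      4 * W * ∫ φ in Ioo 0 (Real.pi / 2), Pf t (aa τ) * (((Real.sqrt z * Real.sin φ : ℝ) : ℂ) ^
      (2 * aa τ - 1) * (Real.sin ((2 * k - 1) * φ) : ℂ)) := by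
    intro τ
    rw [mb_eq']
    change _ * (G k t (aa τ) * Complex.exp ((aa τ - k) * Real.log z)) = _
    rw [← mul_assoc, sinh_G hk t (by rw [aa_re]; norm_num) (by rw [aa_re]; norm_num),
      integral_const_mul]
    unfold S
    have : ∀ φ ∈ Ioo 0 (Real.pi / 2), ((Real.sqrt z * Real.sin φ : ℝ) : ℂ) ^
      (2 * aa τ - 1) * (Real.sin ((2 * k - 1) * φ) : ℂ) =
      W⁻¹ * Complex.exp ((aa τ - k) * Real.log z) * ((Real.sin φ : ℂ) ^
      (2 * aa τ - 1) * (Real.sin ((2 * k - 1) * φ) : ℂ)) := by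
      intro φ hφ
      have h := pw_eq k hz (sin_pos' hφ) (aa τ)
      have hW0 : W ≠ 0 := by
        have : 0 < z ^ (-(k:ℝ)) * Real.sqrt z := by positivity
        rw [hW]; exact_mod_cast this.ne'
      rw [← hW] at h
      field_simp
      linear_combination (-(Real.sin ((2 * k - 1) * φ) : ℂ)) * h
    rw [setIntegral_congr_fun measurableSet_Ioo this, integral_const_mul]
    have hW0 : W ≠ 0 := by
      have : 0 < z ^ (-(k:ℝ)) * Real.sqrt z := by positivity
      rw [hW]; exact_mod_cast this.ne'
    field_simp
  rw [integral_congr_ae (Filter.Eventually.of_forall e1), integral_const_mul,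
    integral_integral_swap (fubini_int t hz (2 * k - 1))]
  have e2 : ∀ φ ∈ Ioo 0 (Real.pi / 2), ∫ τ : ℝ, Pf t (aa τ) *
      (((Real.sqrt z * Real.sin φ : ℝ) : ℂ) ^ (2 * aa τ - 1) * (Real.sin ((2 * k - 1) * φ) : ℂ)) =
      (((Real.pi * (Real.sin (2 * t * Real.arsinh (Real.sqrt z * Real.sin φ)) *
          Real.sin ((2 * k - 1) * φ) / Real.sqrt (1 + z * Real.sin φ ^ 2))) : ℝ) : ℂ) := by
    intro φ hφ
    have h := f_inversion t (mul_pos hq (sin_pos' hφ))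
    have h3 : ∀ τ : ℝ, Pf t (aa τ) *
      (((Real.sqrt z * Real.sin φ : ℝ) : ℂ) ^ (2 * aa τ - 1) * (Real.sin ((2 * k - 1) * φ) : ℂ)) =
      (Real.sin ((2 * k - 1) * φ) : ℂ) * (((Real.sqrt z * Real.sin φ : ℝ) : ℂ) ^ (2 * aa τ - 1) *
        Pf t (aa τ)) := fun τ => by ring
    simp_rw [h3]
    rw [integral_const_mul, h]
    unfold f
    rw [mul_pow, Real.sq_sqrt hz.le]
    push_cast
    ring
  rw [setIntegral_congr_fun measurableSet_Ioo e2, integral_complex_ofReal, integral_const_mul, hW]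
  push_cast
  ring
end MB

namespace MB
open Set

lemma osc_general {a b : ℝ} (hab : a ≤ b) (g R W r w : ℝ → ℝ) (hg : Continuous g)
    (hR : ∀ x, HasDerivAt R (r x) x) (hW : ∀ x, HasDerivAt W (w x) x)
    (h : ∀ x ∈ Icc a b, |g x - r x| ≤ w x) :
    |∫ x in a..b, g x| ≤ |R b - R a| + (W b - W a) := by
  have hF : ∀ x, HasDerivAt (fun x => ∫ y in a..x, g y) (g x) x := fun x =>
    intervalIntegral.integral_hasDerivAt_right (hg.intervalIntegrable _ _)
      (hg.stronglyMeasurableAtFilter _ _) hg.continuousAt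
  have key1 : MonotoneOn (fun x => W x + R x - ∫ y in a..x, g y) (Icc a b) := by
    have hd : ∀ x, HasDerivAt (fun x => W x + R x - ∫ y in a..x, g y) (w x + r x - g x) x :=
      fun x => ((hW x).add (hR x)).sub (hF x)
    refine monotoneOn_of_deriv_nonneg (convex_Icc a b)
      (fun x _ => (hd x).continuousAt.continuousWithinAt)
      (fun x _ => (hd x).differentiableAt.differentiableWithinAt) (fun x hx => ?_)
    rw [(hd x).deriv]
    have := (abs_le.mp (h x (interior_subset hx))).2
    linarith
  have key2 : MonotoneOn (fun x => W x - R x + ∫ y in a..x, g y) (Icc a b) := by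
    have hd : ∀ x, HasDerivAt (fun x => W x - R x + ∫ y in a..x, g y) (w x - r x + g x) x :=
      fun x => ((hW x).sub (hR x)).add (hF x)
    refine monotoneOn_of_deriv_nonneg (convex_Icc a b)
      (fun x _ => (hd x).continuousAt.continuousWithinAt)
      (fun x _ => (hd x).differentiableAt.differentiableWithinAt) (fun x hx => ?_)
    rw [(hd x).deriv]
    have := (abs_le.mp (h x (interior_subset hx))).1
    linarith
  have k1 := key1 (left_mem_Icc.mpr hab) (right_mem_Icc.mpr hab) hab
  have k2 := key2 (left_mem_Icc.mpr hab) (right_mem_Icc.mpr hab) hab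
  simp only [intervalIntegral.integral_same] at k1 k2
  have := le_abs_self (R b - R a)
  have := neg_abs_le (R b - R a)
  rw [abs_le]
  constructor <;> linarith

/-- `√(1+q² sin² φ)` -/
noncomputable def bB (q φ : ℝ) : ℝ := Real.sqrt (1 + q ^ 2 * Real.sin φ ^ 2)

lemma bB_pos (q φ : ℝ) : 0 < bB q φ := Real.sqrt_pos.mpr (by positivity)

lemma bB_sq (q φ : ℝ) : bB q φ ^ 2 = 1 + q ^ 2 * Real.sin φ ^ 2 :=
  Real.sq_sqrt (by positivity)

lemma bB_deriv (q φ : ℝ) :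
    HasDerivAt (bB q) (q ^ 2 * Real.sin φ * Real.cos φ / bB q φ) φ := by
  have h : HasDerivAt (fun φ : ℝ => 1 + q ^ 2 * Real.sin φ ^ 2)
      (q ^ 2 * (2 * Real.sin φ * Real.cos φ)) φ := by
    refine ((((Real.hasDerivAt_sin φ).fun_pow 2).const_mul (q ^ 2)).const_add 1).congr_deriv ?_
    simp
  have hp : 0 < 1 + q ^ 2 * Real.sin φ ^ 2 := by positivity
  refine (h.sqrt hp.ne').congr_deriv ?_
  unfold bB
  have := Real.sqrt_pos.mpr hp
  field_simp

/-- phase -/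
noncomputable def Ph (q t κ φ : ℝ) : ℝ := 2 * t * Real.arsinh (q * Real.sin φ) + κ * φ

/-- numerator of the phase derivative -/
noncomputable def dD (q t κ φ : ℝ) : ℝ := 2 * t * q * Real.cos φ + κ * bB q φ

/-- derivative of `dD` -/
noncomputable def dE (q t κ φ : ℝ) : ℝ :=
  -(2 * t * q * Real.sin φ) + κ * (q ^ 2 * Real.sin φ * Real.cos φ / bB q φ)

lemma Ph_deriv (q t κ φ : ℝ) : HasDerivAt (Ph q t κ) (dD q t κ φ / bB q φ) φ := by
  have h := (((Real.hasDerivAt_sin φ).const_mul q).arsinh.const_mul (2 * t)).add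
    ((hasDerivAt_id φ).const_mul κ)
  refine h.congr_deriv ?_
  have hb := bB_pos q φ
  have : Real.sqrt (1 + (q * Real.sin φ) ^ 2) = bB q φ := by rw [mul_pow]; rfl
  simp only [smul_eq_mul, this, dD]
  field_simp

lemma dD_deriv (q t κ φ : ℝ) : HasDerivAt (dD q t κ) (dE q t κ φ) φ := by
  refine (((Real.hasDerivAt_cos φ).const_mul (2 * t * q)).add
    ((bB_deriv q φ).const_mul κ)).congr_deriv ?_
  unfold dE; ring

lemma bB_cont (q : ℝ) : Continuous (bB q) := by unfold bB; fun_prop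

lemma g_cont (q t κ : ℝ) : Continuous (fun φ => Real.cos (Ph q t κ φ) / bB q φ) := by
  refine Continuous.div ?_ (bB_cont q) (fun φ => (bB_pos q φ).ne')
  refine Real.continuous_cos.comp ?_
  exact continuous_iff_continuousAt.mpr fun φ => (Ph_deriv q t κ φ).continuousAt

lemma atan_deriv (q t κ l φ : ℝ) (hl : 0 < l) :
    HasDerivAt (fun φ => Real.arctan (dD q t κ φ / l)) (l * (dE q t κ φ / (dD q t κ φ ^ 2 + l ^ 2)))
      φ := by
  refine ((dD_deriv q t κ φ).div_const l).arctan.congr_deriv ?_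
  have : 0 < dD q t κ φ ^ 2 + l ^ 2 := by positivity
  have : 0 < 1 + (dD q t κ φ / l) ^ 2 := by positivity
  have : (1 + (dD q t κ φ / l) ^ 2) = (dD q t κ φ ^ 2 + l ^ 2) / l ^ 2 := by field_simp; ring
  rw [this]
  field_simp

/-- main approximate antiderivative -/
noncomputable def rR (q t κ l φ : ℝ) : ℝ :=
  Real.sin (Ph q t κ φ) * (dD q t κ φ / (dD q t κ φ ^ 2 + l ^ 2))

lemma rR_bound (q t κ l φ : ℝ) (hl : 0 < l) : |rR q t κ l φ| ≤ 1 / (2 * l) := by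
  unfold rR
  rw [abs_mul]
  have hp : 0 < dD q t κ φ ^ 2 + l ^ 2 := by positivity
  have h1 := Real.abs_sin_le_one (Ph q t κ φ)
  have h2 : |dD q t κ φ / (dD q t κ φ ^ 2 + l ^ 2)| ≤ 1 / (2 * l) := by
    rw [abs_div, abs_of_pos hp, div_le_div_iff₀ hp (by positivity), ← sq_abs (dD q t κ φ)]
    nlinarith [sq_nonneg (|dD q t κ φ| - l)]
  calc _ ≤ 1 * (1 / (2 * l)) := mul_le_mul h1 h2 (abs_nonneg _) zero_le_one
    _ = _ := one_mul _

lemma rR_deriv (q t κ l φ : ℝ) (hl : 0 < l) : ∃ r, HasDerivAt (rR q t κ l) r φ ∧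
    |Real.cos (Ph q t κ φ) / bB q φ - r| ≤ |dE q t κ φ| / (dD q t κ φ ^ 2 + l ^ 2) +
      l ^ 2 / (bB q φ * (dD q t κ φ ^ 2 + l ^ 2)) := by
  have hp : 0 < dD q t κ φ ^ 2 + l ^ 2 := by positivity
  have hd := (dD_deriv q t κ φ)
  have hd2 : HasDerivAt (fun φ => dD q t κ φ ^ 2 + l ^ 2) (2 * dD q t κ φ * dE q t κ φ) φ := by
    refine ((hd.fun_pow 2).add_const (l ^ 2)).congr_deriv ?_
    simp
  have h := (Ph_deriv q t κ φ).sin.mul (hd.fun_div hd2 hp.ne')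
  refine ⟨_, h, ?_⟩
  have hb := bB_pos q φ
  have hs := Real.abs_sin_le_one (Ph q t κ φ)
  have hc := Real.abs_cos_le_one (Ph q t κ φ)
  generalize dE q t κ φ = E
  generalize dD q t κ φ = D at *
  generalize bB q φ = b at *
  generalize Real.sin (Ph q t κ φ) = s at *
  generalize Real.cos (Ph q t κ φ) = c at *
  have e : c / b - (c * (D / b) * (D / (D ^ 2 + l ^ 2)) +
      s * ((E * (D ^ 2 + l ^ 2) - D * (2 * D * E)) / (D ^ 2 + l ^ 2) ^ 2)) =
      c * (l ^ 2 / (b * (D ^ 2 + l ^ 2))) +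
        -(s * ((l ^ 2 - D ^ 2) / (D ^ 2 + l ^ 2))) * (E / (D ^ 2 + l ^ 2)) := by
    field_simp; ring
  rw [e]
  refine (abs_add_le _ _).trans ?_
  rw [add_comm (|E| / _)]
  refine add_le_add ?_ ?_
  · rw [abs_mul, abs_of_pos (show 0 < l ^ 2 / (b * (D ^ 2 + l ^ 2)) by positivity)]
    exact mul_le_of_le_one_left (by positivity) hc
  · rw [abs_mul, abs_neg, abs_mul, abs_div E, abs_of_pos hp]
    refine mul_le_of_le_one_left (by positivity) ?_
    have : |(l ^ 2 - D ^ 2) / (D ^ 2 + l ^ 2)| ≤ 1 := by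
      rw [abs_div, abs_of_pos hp, div_le_one hp, abs_le]
      constructor <;> nlinarith [sq_nonneg D, sq_nonneg l]
    exact mul_le_one₀ hs (abs_nonneg _) this

/-- majorants for `∫ 1/B` and `∫ 1/B²` -/
noncomputable def uU (q φ : ℝ) : ℝ := Real.pi / (2 * q) * Real.arsinh (2 * q / Real.pi * φ)
noncomputable def vV (q φ : ℝ) : ℝ := Real.pi / (2 * q) * Real.arctan (2 * q / Real.pi * φ)

lemma sin_ge {φ : ℝ} (h : φ ∈ Icc 0 (Real.pi / 2)) : 2 / Real.pi * φ ≤ Real.sin φ :=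
  Real.mul_le_sin h.1 h.2

lemma bB_ge {q φ : ℝ} (hq : 0 < q) (h : φ ∈ Icc 0 (Real.pi / 2)) :
    1 + (2 * q / Real.pi * φ) ^ 2 ≤ bB q φ ^ 2 := by
  have hpi := Real.pi_pos
  have h0 := h.1
  rw [bB_sq, ← mul_pow]
  have := mul_le_mul_of_nonneg_left (sin_ge h) hq.le
  have e : 2 * q / Real.pi * φ = q * (2 / Real.pi * φ) := by ring
  rw [e]
  gcongr

lemma uU_deriv {q : ℝ} (hq : 0 < q) (φ : ℝ) :
    HasDerivAt (uU q) (1 / Real.sqrt (1 + (2 * q / Real.pi * φ) ^ 2)) φ := by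
  have hpi := Real.pi_pos
  refine (((hasDerivAt_id φ).const_mul (2 * q / Real.pi)).arsinh.const_mul _).congr_deriv ?_
  simp only [smul_eq_mul, id]
  have : 0 < Real.sqrt (1 + (2 * q / Real.pi * φ) ^ 2) := Real.sqrt_pos.mpr (by positivity)
  generalize Real.sqrt (1 + (2 * q / Real.pi * φ) ^ 2) = X at *
  field_simp

lemma vV_deriv {q : ℝ} (hq : 0 < q) (φ : ℝ) :
    HasDerivAt (vV q) (1 / (1 + (2 * q / Real.pi * φ) ^ 2)) φ := by
  have hpi := Real.pi_pos
  refine (((hasDerivAt_id φ).const_mul (2 * q / Real.pi)).arctan.const_mul _).congr_deriv ?_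
  simp only [id]
  have : 0 < (1 + (2 * q / Real.pi * φ) ^ 2) := (by positivity)
  generalize (1 + (2 * q / Real.pi * φ) ^ 2) = X at *
  field_simp

lemma uU_le {q φ : ℝ} (hq : 0 < q) (h : φ ∈ Icc 0 (Real.pi / 2)) :
    1 / bB q φ ≤ 1 / Real.sqrt (1 + (2 * q / Real.pi * φ) ^ 2) := by
  have : 0 < Real.sqrt (1 + (2 * q / Real.pi * φ) ^ 2) := Real.sqrt_pos.mpr (by positivity)
  refine one_div_le_one_div_of_le this ?_
  rw [Real.sqrt_le_left (bB_pos q φ).le]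
  exact bB_ge hq h

lemma vV_le {q φ : ℝ} (hq : 0 < q) (h : φ ∈ Icc 0 (Real.pi / 2)) :
    1 / bB q φ ^ 2 ≤ 1 / (1 + (2 * q / Real.pi * φ) ^ 2) :=
  one_div_le_one_div_of_le (by positivity) (bB_ge hq h)

/-- core inequality, minus phase -/
lemma core_minus {q t K s c b : ℝ} (hq : 0 < q) (ht : 1 ≤ t) (hK : 1 ≤ K) (hs : 0 ≤ s)
    (hc : 0 ≤ c) (hsc : s ^ 2 + c ^ 2 = 1) (hb : 0 < b) (hb2 : b ^ 2 = 1 + q ^ 2 * s ^ 2) :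
    q ^ 2 * t ≤ 3 * (2 * t * q * s + K * (q ^ 2 * s * c / b)) * b +
      ((2 * t * q * c - K * b) ^ 2 + q ^ 2 * t) * (3 / t + 3 * (K / (t * q)) / b) := by
  have ht0 : 0 < t := by linarith
  have hK0 : 0 < K := by linarith
  have hbq : q * s ≤ b := by
    refine le_of_sq_le_sq ?_ hb.le
    nlinarith
  have hb1 : b ≤ 1 + q * s := by
    have : 0 ≤ q * s := by positivity
    refine le_of_sq_le_sq ?_ (by positivity)
    nlinarith
  have eE : 3 * (2 * t * q * s + K * (q ^ 2 * s * c / b)) * b =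
      6 * t * q * s * b + 3 * q ^ 2 * (K * s) * c := by field_simp; ring
  rw [eE]
  have p1 : 0 ≤ 6 * t * q * s * b := by positivity
  have p2 : 0 ≤ 3 * q ^ 2 * (K * s) * c := by positivity
  have p3 : 0 ≤ (2 * t * q * c - K * b) ^ 2 * (3 * (K / (t * q)) / b) := by positivity
  have p4 : 0 ≤ (2 * t * q * c - K * b) ^ 2 * (3 / t) := by positivity
  have p5 : 0 ≤ q ^ 2 * t * (3 * (K / (t * q)) / b) := by positivity
  have p6 : 0 ≤ q ^ 2 * t * (3 / t) := by positivity
  rcases le_or_gt (1 / 2) s with h1 | h1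
  · have : q * (1 / 2) ≤ b := (mul_le_mul_of_nonneg_left h1 hq.le).trans hbq
    have : t * q * ((1 / 2) * (q * (1 / 2))) ≤ t * q * (s * b) := by gcongr
    nlinarith
  · have hc2 : (17 : ℝ) / 20 ≤ c := by
      refine le_of_sq_le_sq ?_ hc
      nlinarith
    rcases le_or_gt (t / 2) (K * s) with h2 | h2
    · have : q ^ 2 * ((t / 2) * (17 / 20)) ≤ q ^ 2 * ((K * s) * c) := by gcongr
      have : 0 ≤ q ^ 2 * t := by positivity
      nlinarith
    · rcases le_or_gt K (t * q / 2) with h3 | h3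
      · have a1 : K * b ≤ t * q := by
          have : K * b ≤ K * (1 + q * s) := by gcongr
          have : q * (K * s) ≤ q * (t / 2) := by gcongr
          nlinarith
        have a2 : t * q * (17 / 20) ≤ t * q * c := by gcongr
        have a3 : t * q * (7 / 10) ≤ 2 * t * q * c - K * b := by nlinarith
        have a4 : (t * q * (7 / 10)) ^ 2 ≤ (2 * t * q * c - K * b) ^ 2 := by gcongr
        have a5 : (t * q * (7 / 10)) ^ 2 * (3 / t) ≤ (2 * t * q * c - K * b) ^ 2 * (3 / t) := by
          gcongr
        have a6 : (t * q * (7 / 10)) ^ 2 * (3 / t) = q ^ 2 * t * (147 / 100) := by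
          field_simp; ring
        have : 0 ≤ q ^ 2 * t := by positivity
        nlinarith
      · have a1 : q * s ≤ 1 := by
          by_contra hcon
          push Not at hcon
          have : K * 1 < K * (q * s) := by gcongr
          have : q * (K * s) < q * (t / 2) := by gcongr
          nlinarith
        have a2 : b ≤ 3 / 2 := by
          refine le_of_sq_le_sq ?_ (by norm_num)
          have : (q * s) ^ 2 ≤ 1 := pow_le_one₀ (by positivity) a1
          rw [hb2]; nlinarith
        have a3 : q ^ 2 * t * (3 * (K / (t * q)) / b) = 3 * q * (K / b) := by field_simp
        have a4 : (t * q / 2) / (3 / 2) ≤ K / b := by gcongr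
        have a5 : 3 * q * ((t * q / 2) / (3 / 2)) ≤ 3 * q * (K / b) := by gcongr
        have a7 : 3 * q * ((t * q / 2) / (3 / 2)) = q ^ 2 * t := by ring
        rw [← a3, a7] at a5
        linarith
end MB

namespace MB
open Set

lemma core_plus {q t s c b : ℝ} (hq : 0 < q) (ht : 1 ≤ t) (hs : 0 ≤ s)
    (hsc : s ^ 2 + c ^ 2 = 1) (hb : 0 < b) (hb2 : b ^ 2 = 1 + q ^ 2 * s ^ 2) :
    q ^ 2 * t ≤ 3 * (2 * t * q * s) * b + ((2 * t * q * c) ^ 2 + q ^ 2 * t) * (3 / t) := by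
  have ht0 : 0 < t := by linarith
  have hbq : q * s ≤ b := by
    refine le_of_sq_le_sq ?_ hb.le
    nlinarith
  have e : ((2 * t * q * c) ^ 2 + q ^ 2 * t) * (3 / t) = 12 * (q ^ 2 * t) * c ^ 2 + 3 * q ^ 2 := by
    field_simp; ring
  rw [e]
  have p1 : 0 ≤ 3 * (2 * t * q * s) * b := by positivity
  have p2 : 0 ≤ q ^ 2 * t := by positivity
  have p3 : 0 ≤ q ^ 2 := by positivity
  rcases le_or_gt (1 / 2) s with h1 | h1
  · have : q * (1 / 2) ≤ b := (mul_le_mul_of_nonneg_left h1 hq.le).trans hbq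
    have : t * q * ((1 / 2) * (q * (1 / 2))) ≤ t * q * (s * b) := by gcongr
    have : 0 ≤ 12 * (q ^ 2 * t) * c ^ 2 := by positivity
    nlinarith
  · have hc2 : (3 : ℝ) / 4 ≤ c ^ 2 := by nlinarith
    have : (q ^ 2 * t) * (3 / 4) ≤ (q ^ 2 * t) * c ^ 2 := by gcongr
    linarith

lemma uU_zero (q : ℝ) : uU q 0 = 0 := by simp [uU]
lemma vV_zero (q : ℝ) : vV q 0 = 0 := by simp [vV]

lemma uU_end (q : ℝ) : uU q (Real.pi / 2) = Real.pi / (2 * q) * Real.arsinh q := by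
  have := Real.pi_pos
  unfold uU; congr 2; field_simp

lemma vV_end {q : ℝ} (hq : 0 < q) : vV q (Real.pi / 2) ≤ Real.pi / (2 * q) * (Real.pi / 2) := by
  have := Real.pi_pos
  unfold vV
  have := (Real.arctan_lt_pi_div_two (2 * q / Real.pi * (Real.pi / 2))).le
  gcongr

lemma arctan_diff (x y : ℝ) : |Real.arctan x - Real.arctan y| ≤ Real.pi := by
  rw [abs_le]
  have := Real.arctan_lt_pi_div_two x
  have := Real.arctan_lt_pi_div_two y
  have := Real.neg_pi_div_two_lt_arctan x
  have := Real.neg_pi_div_two_lt_arctan y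
  constructor <;> linarith

lemma trig_facts {φ : ℝ} (h : φ ∈ Icc 0 (Real.pi / 2)) : 0 ≤ Real.sin φ ∧ 0 ≤ Real.cos φ :=
  ⟨Real.sin_nonneg_of_nonneg_of_le_pi h.1 (by linarith [h.2, Real.pi_pos]),
    Real.cos_nonneg_of_neg_pi_div_two_le_of_le (by linarith [h.1, Real.pi_pos]) h.2⟩

lemma osc_minus {q t K : ℝ} (hq : 0 < q) (ht : 1 ≤ t) (hK : 1 ≤ K) :
    |∫ φ in (0:ℝ)..(Real.pi / 2), Real.cos (Ph q t (-K) φ) / bB q φ| ≤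
      (1 + 4 * Real.pi) / (q * Real.sqrt t) + 3 / t * (Real.pi / (2 * q) * Real.arsinh q) +
        3 * (K / (t * q)) * (Real.pi / (2 * q) * (Real.pi / 2)) := by
  have hpi := Real.pi_pos
  have ht0 : 0 < t := by linarith
  set l := q * Real.sqrt t with hl
  have hl0 : 0 < l := mul_pos hq (Real.sqrt_pos.mpr ht0)
  have hl2 : l ^ 2 = q ^ 2 * t := by rw [hl, mul_pow, Real.sq_sqrt ht0.le]
  choose r hr1 hr2 using fun φ => rR_deriv q t (-K) l φ hl0
  have hW : ∀ φ, HasDerivAt (fun φ => -(4 / l) * Real.arctan (dD q t (-K) φ / l) +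
      3 / t * uU q φ + 3 * (K / (t * q)) * vV q φ) (-(4 / l) *
      (l * (dE q t (-K) φ / (dD q t (-K) φ ^ 2 + l ^ 2))) +
      3 / t * (1 / Real.sqrt (1 + (2 * q / Real.pi * φ) ^ 2)) +
      3 * (K / (t * q)) * (1 / (1 + (2 * q / Real.pi * φ) ^ 2))) φ := fun φ =>
    (((atan_deriv q t (-K) l φ hl0).const_mul _).add ((uU_deriv hq φ).const_mul _)).add
      ((vV_deriv hq φ).const_mul _)
  have main := osc_general (a := 0) (b := Real.pi / 2) (by positivity) _ _ _ _ _
    (g_cont q t (-K)) hr1 hW ?_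
  · refine main.trans ?_
    have b1 := rR_bound q t (-K) l 0 hl0
    have b2 := rR_bound q t (-K) l (Real.pi / 2) hl0
    have b3 : |rR q t (-K) l (Real.pi / 2) - rR q t (-K) l 0| ≤ 1 / l := by
      refine (abs_sub _ _).trans ?_
      have : 1 / l = 1 / (2 * l) + 1 / (2 * l) := by field_simp; norm_num
      linarith
    have b4 := arctan_diff (dD q t (-K) 0 / l) (dD q t (-K) (Real.pi / 2) / l)
    have b5 := (le_abs_self _).trans b4
    have b6 := mul_le_mul_of_nonneg_left b5 (show 0 ≤ 4 / l by positivity)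
    have b7 := mul_le_mul_of_nonneg_left (vV_end hq) (show 0 ≤ 3 * (K / (t * q)) by positivity)
    simp only [uU_zero, vV_zero, uU_end]
    have e : (1 + 4 * Real.pi) / l = 1 / l + 4 / l * Real.pi := by ring
    rw [e]
    linarith
  · intro φ hφ
    refine (hr2 φ).trans ?_
    have hb := bB_pos q φ
    have u1 := mul_le_mul_of_nonneg_left (uU_le hq hφ) (show 0 ≤ 3 / t by positivity)
    have v1 := mul_le_mul_of_nonneg_left (vV_le hq hφ) (show 0 ≤ 3 * (K / (t * q)) by positivity)
    obtain ⟨hs, hc⟩ := trig_facts hφ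
    have core := core_minus hq ht hK hs hc (Real.sin_sq_add_cos_sq φ) hb (bB_sq q φ)
    have eD : dD q t (-K) φ = 2 * t * q * Real.cos φ - K * bB q φ := by unfold dD; ring
    have eE : -dE q t (-K) φ = 2 * t * q * Real.sin φ +
        K * (q ^ 2 * Real.sin φ * Real.cos φ / bB q φ) := by unfold dE; ring
    rw [← eD, ← eE, ← hl2] at core
    have hE : |dE q t (-K) φ| = -dE q t (-K) φ := by
      rw [← abs_neg, abs_of_nonneg]
      rw [eE]; positivity
    rw [hE]
    have hp : 0 < dD q t (-K) φ ^ 2 + l ^ 2 := by positivity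
    refine le_trans ?_ (add_le_add (add_le_add le_rfl u1) v1)
    generalize dE q t (-K) φ = E at *
    generalize dD q t (-K) φ ^ 2 = D at *
    generalize bB q φ = b at *
    have h1 : l ^ 2 / (b * (D + l ^ 2)) ≤ (3 * (-E) * b +
      (D + l ^ 2) * (3 / t + 3 * (K / (t * q)) / b)) / (b * (D + l ^ 2)) := by gcongr
    refine (add_le_add le_rfl h1).trans (le_of_eq ?_)
    field_simp
    ring

lemma osc_plus {q t K : ℝ} (hq : 0 < q) (ht : 1 ≤ t) (hK : 1 ≤ K) :
    |∫ φ in (0:ℝ)..(Real.pi / 2), Real.cos (Ph q t K φ) / bB q φ| ≤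
      (1 + 6 * Real.pi) / (q * Real.sqrt t) + 3 / t * (Real.pi / (2 * q) * Real.arsinh q) := by
  have hpi := Real.pi_pos
  have ht0 : 0 < t := by linarith
  set l := q * Real.sqrt t with hl
  have hl0 : 0 < l := mul_pos hq (Real.sqrt_pos.mpr ht0)
  have hl2 : l ^ 2 = q ^ 2 * t := by rw [hl, mul_pow, Real.sq_sqrt ht0.le]
  choose r hr1 hr2 using fun φ => rR_deriv q t K l φ hl0
  have hW : ∀ φ, HasDerivAt (fun φ => 1 / l * Real.arctan (dD q t K φ / l) +
      -(5 / l) * Real.arctan (dD q t 0 φ / l) +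
      3 / t * uU q φ) (1 / l *
      (l * (dE q t K φ / (dD q t K φ ^ 2 + l ^ 2))) + -(5 / l) *
      (l * (dE q t 0 φ / (dD q t 0 φ ^ 2 + l ^ 2))) +
      3 / t * (1 / Real.sqrt (1 + (2 * q / Real.pi * φ) ^ 2))) φ := fun φ =>
    (((atan_deriv q t K l φ hl0).const_mul _).add ((atan_deriv q t 0 l φ hl0).const_mul _)).add
      ((uU_deriv hq φ).const_mul _)
  have main := osc_general (a := 0) (b := Real.pi / 2) (by positivity) _ _ _ _ _
    (g_cont q t K) hr1 hW ?_
  · refine main.trans ?_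
    have b1 := rR_bound q t K l 0 hl0
    have b2 := rR_bound q t K l (Real.pi / 2) hl0
    have b3 : |rR q t K l (Real.pi / 2) - rR q t K l 0| ≤ 1 / l := by
      refine (abs_sub _ _).trans ?_
      have : 1 / l = 1 / (2 * l) + 1 / (2 * l) := by field_simp; norm_num
      linarith
    have b5 := (le_abs_self _).trans
      (arctan_diff (dD q t 0 0 / l) (dD q t 0 (Real.pi / 2) / l))
    have b6 := mul_le_mul_of_nonneg_left b5 (show 0 ≤ 5 / l by positivity)
    have c5 := (le_abs_self _).trans
      (arctan_diff (dD q t K (Real.pi / 2) / l) (dD q t K 0 / l))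
    have c6 := mul_le_mul_of_nonneg_left c5 (show 0 ≤ 1 / l by positivity)
    simp only [uU_zero, uU_end]
    have e : (1 + 6 * Real.pi) / l = 1 / l + 5 / l * Real.pi + 1 / l * Real.pi := by ring
    rw [e]
    linarith
  · intro φ hφ
    refine (hr2 φ).trans ?_
    have hb := bB_pos q φ
    have u1 := mul_le_mul_of_nonneg_left (uU_le hq hφ) (show 0 ≤ 3 / t by positivity)
    obtain ⟨hs, hc⟩ := trig_facts hφ
    have core := core_plus hq ht hs (Real.sin_sq_add_cos_sq φ) hb (bB_sq q φ)
    have eD : dD q t 0 φ = 2 * t * q * Real.cos φ := by unfold dD; ring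
    have eE : -dE q t 0 φ = 2 * t * q * Real.sin φ := by unfold dE; ring
    have hE0 : 0 ≤ -dE q t 0 φ := by rw [eE]; positivity
    have hD0 : 0 ≤ dD q t 0 φ := by rw [eD]; positivity
    rw [← eD, ← eE, ← hl2] at core
    have hD : dD q t 0 φ ^ 2 ≤ dD q t K φ ^ 2 := by
      refine pow_le_pow_left₀ hD0 ?_ 2
      unfold dD
      have : 0 ≤ K * bB q φ := by positivity
      linarith
    have hE : |dE q t K φ| ≤ dE q t K φ + 2 * (-dE q t 0 φ) := by
      have e : dE q t K φ = dE q t 0 φ + K * (q ^ 2 * Real.sin φ * Real.cos φ / bB q φ) := by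
        unfold dE; ring
      have : 0 ≤ K * (q ^ 2 * Real.sin φ * Real.cos φ / bB q φ) := by positivity
      rw [abs_le]
      constructor <;> linarith
    refine le_trans ?_ (add_le_add le_rfl u1)
    generalize dE q t K φ = E at *
    generalize dD q t K φ ^ 2 = D at *
    generalize dE q t 0 φ = E0 at *
    have hD00 : 0 ≤ dD q t 0 φ ^ 2 := by positivity
    generalize dD q t 0 φ ^ 2 = D0 at *
    generalize bB q φ = b at *
    have hp0 : 0 < D0 + l ^ 2 := by positivity
    have hp : 0 < D + l ^ 2 := by linarith
    have h0 : |E| / (D + l ^ 2) ≤ E / (D + l ^ 2) + 2 * (-E0) / (D0 + l ^ 2) := by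
      calc |E| / (D + l ^ 2) ≤ (E + 2 * (-E0)) / (D + l ^ 2) := by gcongr
        _ = E / (D + l ^ 2) + 2 * (-E0) / (D + l ^ 2) := by ring
        _ ≤ _ := by gcongr
    have h1 : l ^ 2 / (b * (D + l ^ 2)) ≤ (3 * (-E0) * b +
      (D0 + l ^ 2) * (3 / t)) / (b * (D0 + l ^ 2)) := by gcongr
    refine (add_le_add h0 h1).trans (le_of_eq ?_)
    field_simp
    ring

lemma osc_total {q t K : ℝ} (hq : 0 < q) (ht : 1 ≤ t) (hK : 1 ≤ K) :
    |∫ φ in (0:ℝ)..(Real.pi / 2), Real.sin (2 * t * Real.arsinh (q * Real.sin φ)) *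
      Real.sin (K * φ) / bB q φ| ≤
      20 * (1 / (q * Real.sqrt t) + Real.arsinh q / (t * q) + K / (t * q ^ 2)) := by
  have hpi := Real.pi_pos
  have hpi2 := Real.pi_lt_d2
  have ht0 : 0 < t := by linarith
  have h1 := osc_minus hq ht hK
  have h2 := osc_plus hq ht hK
  have e : ∀ φ : ℝ, Real.sin (2 * t * Real.arsinh (q * Real.sin φ)) *
      Real.sin (K * φ) / bB q φ = 1 / 2 * (Real.cos (Ph q t (-K) φ) / bB q φ -
        Real.cos (Ph q t K φ) / bB q φ) := by
    intro φ
    unfold Ph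
    rw [neg_mul, ← sub_eq_add_neg, Real.cos_sub, Real.cos_add]
    ring
  simp_rw [e]
  rw [intervalIntegral.integral_const_mul, intervalIntegral.integral_sub
    ((g_cont q t (-K)).intervalIntegrable _ _) ((g_cont q t K).intervalIntegrable _ _), abs_mul,
    abs_of_pos (show (0:ℝ) < 1 / 2 by norm_num)]
  have h3 := abs_sub (∫ φ in (0:ℝ)..(Real.pi / 2), Real.cos (Ph q t (-K) φ) / bB q φ)
    (∫ φ in (0:ℝ)..(Real.pi / 2), Real.cos (Ph q t K φ) / bB q φ)
  have hars : 0 ≤ Real.arsinh q := Real.arsinh_nonneg_iff.mpr hq.le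
  have t1 : (1 + 4 * Real.pi) / (q * Real.sqrt t) + (1 + 6 * Real.pi) / (q * Real.sqrt t) ≤
      40 * (1 / (q * Real.sqrt t)) := by
    have : 0 < 1 / (q * Real.sqrt t) := by positivity
    calc _ = (2 + 10 * Real.pi) * (1 / (q * Real.sqrt t)) := by ring
      _ ≤ _ := by gcongr; linarith
  have t2 : 3 / t * (Real.pi / (2 * q) * Real.arsinh q) ≤ 20 * (Real.arsinh q / (t * q)) := by
    calc _ = (3 / 2 * Real.pi) * (Real.arsinh q / (t * q)) := by field_simp
      _ ≤ _ := by gcongr; linarith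
  have t3 : 3 * (K / (t * q)) * (Real.pi / (2 * q) * (Real.pi / 2)) ≤ 40 * (K / (t * q ^ 2)) := by
    calc _ = (3 / 4 * (Real.pi * Real.pi)) * (K / (t * q ^ 2)) := by field_simp; norm_num
      _ ≤ _ := by gcongr; nlinarith
  linarith
end MB

namespace MB
open Set

lemma mb_neg (k : ℕ) (t c z : ℝ) : mbIntegrand k (-t) c z = mbIntegrand k t c z := by
  funext τ
  unfold mbIntegrand
  push_cast
  rw [show (k:ℂ) + -t * Complex.I = k - t * Complex.I by ring,
    show (k:ℂ) - -t * Complex.I = k + t * Complex.I by ring,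
    mul_comm (Complex.Gamma ((k:ℂ) - t * Complex.I + c + τ * Complex.I))]

lemma arsinh_le {z : ℝ} (hz : 1 ≤ z) : Real.arsinh (Real.sqrt z) ≤ 2 * (1 + |Real.log z|) := by
  have hz0 : 0 < z := by linarith
  have hq : 1 ≤ Real.sqrt z := Real.one_le_sqrt.mpr hz
  have hq0 : 0 < Real.sqrt z := by linarith
  have h1 : Real.sqrt (1 + Real.sqrt z ^ 2) ≤ 2 * Real.sqrt z := by
    rw [Real.sqrt_le_left (by positivity)]; nlinarith
  unfold Real.arsinh
  have h2 : Real.log (Real.sqrt z + Real.sqrt (1 + Real.sqrt z ^ 2)) ≤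
      Real.log (3 * Real.sqrt z) := by
    refine Real.log_le_log (by positivity) (by linarith)
  rw [Real.log_mul (by norm_num) hq0.ne', Real.log_sqrt hz0.le] at h2
  have h3 : Real.log 3 ≤ 3 - 1 := Real.log_le_sub_one_of_pos (by norm_num)
  have h4 := le_abs_self (Real.log z)
  have h5 := abs_nonneg (Real.log z)
  linarith

lemma N_triv (q t K : ℝ) : |∫ φ in (0:ℝ)..(Real.pi / 2),
    Real.sin (2 * t * Real.arsinh (q * Real.sin φ)) * Real.sin (K * φ) / bB q φ| ≤ 2 := by
  have hpi := Real.pi_pos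
  have := intervalIntegral.norm_integral_le_of_norm_le_const (a := 0) (b := Real.pi / 2) (C := 1)
    (f := fun φ => Real.sin (2 * t * Real.arsinh (q * Real.sin φ)) * Real.sin (K * φ) / bB q φ) ?_
  · rw [Real.norm_eq_abs, sub_zero, abs_of_pos (show 0 < Real.pi / 2 by positivity)] at this
    linarith [Real.pi_le_four]
  · intro φ _
    have hb : 1 ≤ bB q φ := by
      unfold bB; rw [Real.one_le_sqrt]
      have : 0 ≤ q ^ 2 * Real.sin φ ^ 2 := by positivity
      linarith
    rw [Real.norm_eq_abs, abs_div, abs_mul, abs_of_pos (bB_pos q φ), div_le_one (bB_pos q φ)]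
    exact (mul_le_one₀ (Real.abs_sin_le_one _) (abs_nonneg _) (Real.abs_sin_le_one _)).trans hb

lemma mb_cosh {k : ℕ} (hk : 1 ≤ k) {t z c : ℝ} (ht : 1 ≤ t) (hz : 0 < z) (h0 : -(k:ℝ) < c)
    (h1 : c < 0) : Real.cosh (Real.pi * t) *
      ‖(1 / (2 * Real.pi) : ℂ) * ∫ τ : ℝ, mbIntegrand k t c z τ‖ ≤
      4 * (z ^ (-(k:ℝ)) * Real.sqrt z) * |∫ φ in (0:ℝ)..(Real.pi / 2),
        Real.sin (2 * t * Real.arsinh (Real.sqrt z * Real.sin φ)) * Real.sin ((2 * k - 1) * φ) /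
          bB (Real.sqrt z) φ| := by
  have hpi := Real.pi_pos
  have hk' : (1:ℝ) ≤ k := by exact_mod_cast hk
  have hx : 1 ≤ Real.pi * t := by nlinarith [Real.pi_gt_three]
  have hsinh : Real.cosh (Real.pi * t) ≤ 2 * Real.sinh (Real.pi * t) := by
    have e1 := Real.cosh_sub_sinh (Real.pi * t)
    have e2 : Real.exp (-(Real.pi * t)) ≤ 1 := Real.exp_le_one_iff.mpr (by linarith)
    have e3 := Real.self_le_sinh_iff.mpr (show 0 ≤ Real.pi * t by linarith)
    linarith
  have hs0 : 0 ≤ Real.sinh (Real.pi * t) := Real.sinh_nonneg_iff.mpr (by linarith)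
  have hosc := congrArg norm (mb_osc hk t hz)
  rw [norm_mul, Complex.norm_real, Complex.norm_real, Real.norm_eq_abs, abs_of_nonneg hs0,
    Real.norm_eq_abs, abs_mul, abs_of_pos (show 0 < 4 * Real.pi * (z ^ (-(k:ℝ)) * Real.sqrt z) by
      positivity), ← integral_Ioc_eq_integral_Ioo,
    ← intervalIntegral.integral_of_le (by linarith)] at hosc
  have eb : ∀ φ, bB (Real.sqrt z) φ = Real.sqrt (1 + z * Real.sin φ ^ 2) := fun φ => by
    unfold bB; rw [Real.sq_sqrt hz.le]
  simp_rw [eb]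
  rw [mb_shift t hz h0 h1 (c₂ := 3 / 8 - k) (by linarith) (by linarith), norm_mul]
  have en : ‖(1 / (2 * Real.pi) : ℂ)‖ = 1 / (2 * Real.pi) := by
    rw [show (1 / (2 * Real.pi) : ℂ) = ((1 / (2 * Real.pi) : ℝ) : ℂ) by push_cast; rfl,
      Complex.norm_real, Real.norm_eq_abs, abs_of_pos (by positivity)]
  rw [en]
  have hX := norm_nonneg (∫ τ : ℝ, mbIntegrand k t (3 / 8 - k) z τ)
  generalize ‖∫ τ : ℝ, mbIntegrand k t (3 / 8 - k) z τ‖ = X at *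
  calc Real.cosh (Real.pi * t) * (1 / (2 * Real.pi) * X) ≤
      2 * Real.sinh (Real.pi * t) * (1 / (2 * Real.pi) * X) := by gcongr
    _ = 1 / Real.pi * (Real.sinh (Real.pi * t) * X) := by field_simp
    _ = _ := by
      rw [hosc, ← mul_assoc]
      congr 1
      field_simp

lemma final_pos {k : ℕ} (hk : 1 ≤ k) {t z c : ℝ} (ht : 1 ≤ t) (hz : 0 < z) (h0 : -(k:ℝ) < c)
    (h1 : c < 0) : Real.cosh (Real.pi * t) *
      ‖(1 / (2 * Real.pi) : ℂ) * ∫ τ : ℝ, mbIntegrand k t c z τ‖ ≤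
      640 * (z ^ (-(k : ℝ)) / Real.sqrt (3 + |t|) *
              (1 + |Real.log z| + Real.log k) +
            z ^ (-(k : ℝ) - 1 / 2) * (((k : ℝ) + (3 + |t|)) / (3 + |t|))) := by
  refine (mb_cosh hk ht hz h0 h1).trans ?_
  have hk' : (1:ℝ) ≤ k := by exact_mod_cast hk
  have hq : 0 < Real.sqrt z := Real.sqrt_pos.mpr hz
  have ht0 : 0 < t := by linarith
  rw [abs_of_pos ht0]
  have hzk : 0 < z ^ (-(k:ℝ)) := by positivity
  have e : z ^ (-(k : ℝ) - 1 / 2) = z ^ (-(k:ℝ)) / Real.sqrt z := by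
    rw [Real.rpow_sub hz, Real.sqrt_eq_rpow]
  rw [e]
  have hlog := abs_nonneg (Real.log z)
  have hlk : 0 ≤ Real.log k := Real.log_nonneg hk'
  set L := |Real.log z| with hL
  set q := Real.sqrt z with hqd
  set Z := z ^ (-(k:ℝ)) with hZ
  have hT : 0 < Real.sqrt (3 + t) := Real.sqrt_pos.mpr (by linarith)
  have hfac : 1 ≤ (k + (3 + t)) / (3 + t) := by
    rw [le_div_iff₀ (by linarith)]; linarith
  rcases le_total z 1 with hz1 | hz1
  · have hq1 : q ≤ 1 := by rw [hqd, Real.sqrt_le_left zero_le_one]; linarith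
    have hN := N_triv q t (2 * k - 1)
    have a1 : Z * q ≤ Z / q := by
      rw [le_div_iff₀ hq]
      have : q * q ≤ 1 := mul_le_one₀ hq1 hq.le hq1
      nlinarith
    have a2 : 0 ≤ Z / Real.sqrt (3 + t) * (1 + L + Real.log k) := by positivity
    have a3 : Z / q * 1 ≤ Z / q * ((k + (3 + t)) / (3 + t)) := by gcongr
    have a4 := mul_le_mul_of_nonneg_left hN (show 0 ≤ 4 * (Z * q) by positivity)
    have a5 : 0 ≤ Z / q := by positivity
    linarith
  · have hN := osc_total hq ht (show (1:ℝ) ≤ 2 * k - 1 by linarith)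
    have a4 := mul_le_mul_of_nonneg_left hN (show 0 ≤ 4 * (Z * q) by positivity)
    refine a4.trans ?_
    have hst : 0 < Real.sqrt t := Real.sqrt_pos.mpr ht0
    have e2 : 4 * (Z * q) * (20 * (1 / (q * Real.sqrt t) + Real.arsinh q / (t * q) +
        (2 * k - 1) / (t * q ^ 2))) = 80 * (Z * (1 / Real.sqrt t) + Z * (Real.arsinh q * (1 / t)) +
          Z / q * ((2 * k - 1) / t)) := by field_simp; ring
    rw [e2]
    have b1 : 1 / Real.sqrt t ≤ 2 / Real.sqrt (3 + t) := by
      rw [div_le_div_iff₀ hst hT, one_mul, Real.sqrt_le_left (by positivity), mul_pow,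
        Real.sq_sqrt ht0.le]
      linarith
    have b2 : 1 / t ≤ 2 / Real.sqrt (3 + t) := by
      refine le_trans ?_ b1
      refine one_div_le_one_div_of_le hst ?_
      rw [Real.sqrt_le_left ht0.le]; nlinarith
    have b3 := arsinh_le hz1
    rw [← hqd, ← hL] at b3
    have b4 : (2 * k - 1) / t ≤ 8 * ((k + (3 + t)) / (3 + t)) := by
      rw [mul_div_assoc', div_le_div_iff₀ ht0 (by linarith)]
      nlinarith
    have b5 : Real.arsinh q * (1 / t) ≤ 2 * (1 + L) * (2 / Real.sqrt (3 + t)) := by gcongr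
    have c1 : Z * (1 / Real.sqrt t) ≤ Z * (2 / Real.sqrt (3 + t)) := by gcongr
    have c2 : Z * (Real.arsinh q * (1 / t)) ≤ Z * (2 * (1 + L) * (2 / Real.sqrt (3 + t))) := by gcongr
    have c3 : Z / q * ((2 * k - 1) / t) ≤ Z / q * (8 * ((k + (3 + t)) / (3 + t))) := by gcongr
    have d1 : 0 ≤ Z / Real.sqrt (3 + t) := by positivity
    have d2 : 0 ≤ Z / Real.sqrt (3 + t) * L := by positivity
    have d3 : 0 ≤ Z / Real.sqrt (3 + t) * Real.log k := by positivity
    have e3 : Z * (2 / Real.sqrt (3 + t)) = 2 * (Z / Real.sqrt (3 + t)) := by ring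
    have e4 : Z * (2 * (1 + L) * (2 / Real.sqrt (3 + t))) =
      4 * (Z / Real.sqrt (3 + t)) + 4 * (Z / Real.sqrt (3 + t) * L) := by ring
    rw [e3] at c1
    rw [e4] at c2
    linarith
end MB

theorem mellin_barnes_bound :
    ∃ C : ℝ, 0 < C ∧ ∀ (k : ℕ), 1 ≤ k → ∀ (t z c : ℝ), 0 < z →
      -(k : ℝ) < c → c < 0 →
      Integrable (mbIntegrand k t c z) ∧
      Real.cosh (Real.pi * t) *
          ‖(1 / (2 * Real.pi) : ℂ) * ∫ τ : ℝ, mbIntegrand k t c z τ‖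
        ≤ C * (z ^ (-(k : ℝ)) / Real.sqrt (3 + |t|) *
              (1 + |Real.log z| + Real.log k) +
            z ^ (-(k : ℝ) - 1 / 2) * (((k : ℝ) + (3 + |t|)) / (3 + |t|))) := by
  obtain ⟨C₀, hC₀, htriv⟩ := MB.mb_trivial
  refine ⟨640 + 2 * (Real.cosh Real.pi * C₀), by positivity, ?_⟩
  intro k hk t z c hz h0 h1
  refine ⟨MB.mb_integrable t hz h0 h1, ?_⟩
  have hk' : (1:ℝ) ≤ k := by exact_mod_cast hk
  have hlk : 0 ≤ Real.log k := Real.log_nonneg hk'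
  have hpos : 0 ≤ z ^ (-(k : ℝ) - 1 / 2) * (((k : ℝ) + (3 + |t|)) / (3 + |t|)) := by positivity
  have hpos1 : 0 ≤ z ^ (-(k : ℝ)) / Real.sqrt (3 + |t|) * (1 + |Real.log z| + Real.log k) := by
    positivity
  rcases le_total |t| 1 with ht | ht
  · have hpi := Real.pi_pos
    have hX := htriv k hk t z c hz h0 h1
    have hcosh : Real.cosh (Real.pi * t) ≤ Real.cosh Real.pi := by
      rw [Real.cosh_le_cosh, abs_mul, abs_of_pos hpi]
      nlinarith
    have en : ‖(1 / (2 * Real.pi) : ℂ)‖ ≤ 1 := by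
      rw [show (1 / (2 * Real.pi) : ℂ) = ((1 / (2 * Real.pi) : ℝ) : ℂ) by push_cast; rfl,
        Complex.norm_real, Real.norm_eq_abs, abs_of_pos (by positivity),
        div_le_one (by positivity)]
      linarith [Real.pi_gt_three]
    have hT : Real.sqrt (3 + |t|) ≤ 2 := by
      rw [Real.sqrt_le_left (by norm_num)]; linarith
    have hT0 : 0 < Real.sqrt (3 + |t|) := Real.sqrt_pos.mpr (by positivity)
    have hZ : z ^ (-(k : ℝ)) ≤ 2 * (z ^ (-(k : ℝ)) / Real.sqrt (3 + |t|)) := by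
      have : 0 < z ^ (-(k : ℝ)) := by positivity
      rw [mul_div_assoc', le_div_iff₀ hT0]
      nlinarith
    rw [norm_mul]
    calc _ ≤ Real.cosh Real.pi * (1 * (C₀ * (z ^ (-(k:ℝ)) * (1 + |Real.log z|)))) := by
          gcongr
      _ ≤ Real.cosh Real.pi * (1 * (C₀ * (2 * (z ^ (-(k : ℝ)) / Real.sqrt (3 + |t|)) *
            (1 + |Real.log z| + Real.log k)))) := by
          refine mul_le_mul_of_nonneg_left ?_ (Real.cosh_pos _).le
          rw [one_mul, one_mul]
          refine mul_le_mul_of_nonneg_left ?_ hC₀.le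
          refine mul_le_mul hZ (by linarith) (by positivity) (by positivity)
      _ = 2 * (Real.cosh Real.pi * C₀) * (z ^ (-(k : ℝ)) / Real.sqrt (3 + |t|) *
            (1 + |Real.log z| + Real.log k)) := by ring
      _ ≤ _ := by
          refine mul_le_mul ?_ ?_ hpos1 ?_
          · linarith
          · linarith
          · positivity
  · refine le_trans (b := 640 * (z ^ (-(k : ℝ)) / Real.sqrt (3 + |t|) *
              (1 + |Real.log z| + Real.log k) +
            z ^ (-(k : ℝ) - 1 / 2) * (((k : ℝ) + (3 + |t|)) / (3 + |t|)))) ?_ ?_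
    · rcases le_total 0 t with h | h
      · rw [abs_of_nonneg h] at ht
        exact MB.final_pos hk ht hz h0 h1
      · rw [abs_of_nonpos h] at ht
        have := MB.final_pos hk ht hz h0 h1
        rwa [MB.mb_neg, abs_neg, mul_neg, Real.cosh_neg] at this
    · have : 0 < Real.cosh Real.pi * C₀ := by positivity
      gcongr
      linarith
end

section
/- There is an absolute constant \(C>0\) such that for every integer \(k\geq 1\), every real \(t\) and every \(0<z<1\): \(z^{k}\,\Bigl|\frac{\Gamma(k-it)\Gamma(k+it)}{\Gamma(2k)}\,{}_2F_1\bigl(k+it,\,k-it,\,2k;\,z\bigr)\Bigr|\;\leq\; C\,\sqrt{\frac{z}{1-z}}\;\frac{1}{k+|t|}\). -/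
/-- The Gauss hypergeometric series
`₂F₁(a,b,c;z) = Γ(c)/(Γ(a)Γ(b)) ∑_{n≥0} Γ(a+n)Γ(b+n)/Γ(c+n) zⁿ/n!` (convergent for `|z| < 1`). -/
noncomputable def hyp2F1 (a b c z : ℂ) : ℂ :=
  Complex.Gamma c / (Complex.Gamma a * Complex.Gamma b) *
    ∑' n : ℕ, Complex.Gamma (a + n) * Complex.Gamma (b + n) / Complex.Gamma (c + n) *
      z ^ n / (n.factorial : ℂ)

open Finset in
lemma hb_sum (z : ℝ) (h0 : 0 < z) (h1 : z < 1) (M : ℕ) :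
    ∑ n ∈ range M, z ^ n / √((n : ℝ) + 1) ≤ 5 / √(1 - z) := by
  have hw : 0 < 1 - z := by linarith
  set s := √(1 - z) with hs
  have hs0 : 0 < s := Real.sqrt_pos.2 hw
  have hss : s * s = 1 - z := Real.mul_self_sqrt hw.le
  set N := ⌈1 / (1 - z)⌉₊ with hN
  have hN1 : 1 / (1 - z) ≤ N := Nat.le_ceil _
  have hN2 : (N : ℝ) < 1 / (1 - z) + 1 := Nat.ceil_lt_add_one (by positivity)
  have hone : 1 ≤ 1 / (1 - z) := by rw [le_div_iff₀ hw]; linarith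
  have hNpos : (0 : ℝ) < N := by linarith
  have hr1 : 1 / s ≤ √N := by
    apply Real.le_sqrt_of_sq_le
    have : (1 / s) ^ 2 = 1 / (1 - z) := by rw [div_pow, pow_two s, hss]; simp
    linarith
  have hr2 : √N ≤ 2 / s := by
    apply Real.sqrt_le_iff.2 ⟨by positivity, ?_⟩
    have : (2 / s) ^ 2 = 4 * (1 / (1 - z)) := by rw [div_pow, pow_two s, hss]; ring
    linarith
  have hr3 : 1 / √N ≤ s := by
    rw [div_le_iff₀ (Real.sqrt_pos.2 hNpos)]
    rw [div_le_iff₀ hs0] at hr1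
    linarith
  have hterm : ∀ n ∈ range M, z ^ n / √((n : ℝ) + 1) ≤
      2 * (√((min (n + 1) N : ℕ) : ℝ) - √((min n N : ℕ) : ℝ)) + z ^ n * s := by
    intro n _
    have hz0 : 0 ≤ z ^ n := by positivity
    have hz1 : z ^ n ≤ 1 := pow_le_one₀ h0.le h1.le
    have hp : 0 < √((n : ℝ) + 1) := Real.sqrt_pos.2 (by positivity)
    rcases lt_or_ge n N with h | h
    · rw [min_eq_left (by omega), min_eq_left (by omega)]
      push_cast
      have e1 : √((n : ℝ) + 1) * √((n : ℝ) + 1) = n + 1 := Real.mul_self_sqrt (by positivity)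
      have e2 : √(n : ℝ) * √(n : ℝ) = n := Real.mul_self_sqrt (by positivity)
      have : z ^ n / √((n : ℝ) + 1) ≤ 2 * (√((n : ℝ) + 1) - √(n : ℝ)) := by
        rw [div_le_iff₀ hp]
        nlinarith [sq_nonneg (√((n : ℝ) + 1) - √(n : ℝ))]
      have : 0 ≤ z ^ n * s := by positivity
      linarith
    · rw [min_eq_right (by omega), min_eq_right (by omega)]
      have : 1 / √((n : ℝ) + 1) ≤ 1 / √N := by
        apply one_div_le_one_div_of_le (Real.sqrt_pos.2 hNpos)
        apply Real.sqrt_le_sqrt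
        have : (N : ℝ) ≤ n := by exact_mod_cast h
        linarith
      have := mul_le_mul_of_nonneg_left (this.trans hr3) hz0
      rw [div_eq_mul_one_div]
      linarith
  refine (sum_le_sum hterm).trans ?_
  rw [sum_add_distrib, ← mul_sum, ← sum_mul,
    sum_range_sub (fun n => √((min n N : ℕ) : ℝ))]
  have hA : √((min M N : ℕ) : ℝ) ≤ √N := Real.sqrt_le_sqrt (by exact_mod_cast min_le_right _ _)
  have hG : ∑ n ∈ range M, z ^ n ≤ 1 / (1 - z) := by
    rw [geom_sum_eq h1.ne, ← neg_div_neg_eq]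
    apply div_le_div₀ <;> nlinarith [pow_pos h0 M]
  have hG2 := mul_le_mul_of_nonneg_right hG hs0.le
  have : 1 / (1 - z) * s = 1 / s := by rw [← hss]; field_simp
  have : (5 : ℝ) / s = 2 * (2 / s) + 1 / s := by ring
  simp only [Nat.zero_min, Nat.cast_zero, Real.sqrt_zero]
  linarith

lemma hb_fact (j : ℕ) : ∀ n : ℕ, (n + j).factorial ^ 2 * (2 * (n + j + 1) + j * (j + 1)) ≤
    2 * ((n + 2 * j + 1).factorial * n.factorial) := by
  induction j with
  | zero =>
    intro n
    simp [Nat.factorial_succ]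
    apply le_of_eq; ring
  | succ j ih =>
    intro n
    have h := ih (n + 1)
    have e1 : n + 1 + j = n + (j + 1) := by ring
    have e2 : (n + 2 * (j + 1) + 1).factorial =
        (n + 2 * j + 3) * (n + 1 + 2 * j + 1).factorial := by
      rw [show n + 2 * (j + 1) + 1 = (n + 1 + 2 * j + 1) + 1 by ring, Nat.factorial_succ]; ring
    rw [Nat.factorial_succ n, e1] at h
    rw [e2]
    set A := (n + (j + 1)).factorial ^ 2
    set B := (n + 1 + 2 * j + 1).factorial
    set D := n.factorial
    refine Nat.le_of_mul_le_mul_left (?_ : (n + 1) * _ ≤ (n + 1) * _) (Nat.succ_pos n)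
    calc (n + 1) * (A * (2 * (n + (j + 1) + 1) + (j + 1) * (j + 1 + 1)))
        = A * ((n + 1) * (2 * (n + (j + 1) + 1) + (j + 1) * (j + 1 + 1))) := by ring
      _ ≤ A * ((n + 2 * j + 3) * (2 * (n + (j + 1) + 1) + j * (j + 1))) := by
          apply Nat.mul_le_mul_left
          zify; nlinarith [Int.natCast_nonneg n, Int.natCast_nonneg j,
            mul_nonneg (Int.natCast_nonneg n) (Int.natCast_nonneg j),
            mul_nonneg (Int.natCast_nonneg j) (mul_nonneg (Int.natCast_nonneg j) (Int.natCast_nonneg j))]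
      _ = (n + 2 * j + 3) * (A * (2 * (n + (j + 1) + 1) + j * (j + 1))) := by ring
      _ ≤ (n + 2 * j + 3) * (2 * (B * ((n + 1) * D))) := Nat.mul_le_mul_left _ h
      _ = _ := by ring

lemma hb_norm_le (s : ℂ) (hs : 0 < s.re) : ‖Complex.Gamma s‖ ≤ Real.Gamma s.re := by
  rw [Complex.Gamma_eq_integral hs, Real.Gamma_eq_integral hs, Complex.GammaIntegral]
  refine (MeasureTheory.norm_integral_le_integral_norm _).trans (le_of_eq ?_)
  apply MeasureTheory.setIntegral_congr_fun measurableSet_Ioi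
  intro x hx
  have hx : 0 < x := hx
  simp [Complex.norm_cpow_eq_rpow_re_of_pos hx, Complex.norm_exp]

lemma hb_gamma_step (m : ℕ) (hm : 1 ≤ m) (t : ℝ) (p : ℕ) (hp : p ≤ m) :
    ‖Complex.Gamma (m + t * Complex.I)‖ ^ 2 * (1 + t ^ 2 / (4 * m ^ 2)) ^ p *
      Real.Gamma (m + p) ^ 2 ≤
    ‖Complex.Gamma ((m + p : ℝ) + t * Complex.I)‖ ^ 2 * Real.Gamma m ^ 2 := by
  induction p with
  | zero => simp
  | succ p ih =>
    have ih := ih (by omega)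
    have hm0 : (0 : ℝ) < m := by exact_mod_cast hm
    have hpm : (p : ℝ) + 1 ≤ m := by exact_mod_cast hp
    have hp0 : (0 : ℝ) ≤ p := by positivity
    have hx : (0 : ℝ) < m + p := by positivity
    have e1 : Real.Gamma (m + (p + 1 : ℕ)) = (m + p) * Real.Gamma (m + p) := by
      rw [← Real.Gamma_add_one hx.ne']; push_cast; ring_nf
    have hne : (((m + p : ℝ) : ℂ) + t * Complex.I) ≠ 0 := by
      intro h
      have := congrArg Complex.re h
      simp at this
      linarith
    have e2 : Complex.Gamma ((m + (p + 1 : ℕ) : ℝ) + t * Complex.I) =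
        (((m + p : ℝ) : ℂ) + t * Complex.I) * Complex.Gamma ((m + p : ℝ) + t * Complex.I) := by
      rw [← Complex.Gamma_add_one _ hne]; push_cast; ring_nf
    have e3 : ‖(((m + p : ℝ) : ℂ) + t * Complex.I)‖ ^ 2 = (m + p) ^ 2 + t ^ 2 := by
      rw [← Complex.normSq_eq_norm_sq, Complex.normSq_add_mul_I]
    rw [e1, e2, norm_mul, mul_pow, mul_pow, e3, pow_succ]
    have key : (1 + t ^ 2 / (4 * (m : ℝ) ^ 2)) * (m + p) ^ 2 ≤ (m + p) ^ 2 + t ^ 2 := by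
      have : t ^ 2 / (4 * (m : ℝ) ^ 2) * (m + p) ^ 2 ≤ t ^ 2 := by
        rw [div_mul_eq_mul_div, div_le_iff₀ (by positivity)]
        apply mul_le_mul_of_nonneg_left _ (sq_nonneg t)
        nlinarith
      linarith
    calc _ = ((1 + t ^ 2 / (4 * (m : ℝ) ^ 2)) * (m + p) ^ 2) *
        (‖Complex.Gamma (m + t * Complex.I)‖ ^ 2 * (1 + t ^ 2 / (4 * m ^ 2)) ^ p *
      Real.Gamma (m + p) ^ 2) := by ring
      _ ≤ ((m + p) ^ 2 + t ^ 2) * _ := mul_le_mul key ih (by positivity) (by positivity)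
      _ = _ := by ring

lemma hb_gamma (m : ℕ) (hm : 1 ≤ m) (t : ℝ) :
    ‖Complex.Gamma (m + t * Complex.I)‖ ^ 2 * (1 + t ^ 2 / (4 * m)) ≤ Real.Gamma m ^ 2 := by
  have hm0 : (0 : ℝ) < m := by exact_mod_cast hm
  have h := hb_gamma_step m hm t m le_rfl
  have h2 := hb_norm_le ((m + m : ℝ) + t * Complex.I) (by simp; linarith)
  have h3 : ‖Complex.Gamma ((m + m : ℝ) + t * Complex.I)‖ ^ 2 ≤ Real.Gamma (m + m) ^ 2 := by
    apply pow_le_pow_left₀ (norm_nonneg _)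
    simpa using h2
  have h4 : 1 + t ^ 2 / (4 * (m : ℝ)) ≤ (1 + t ^ 2 / (4 * (m : ℝ) ^ 2)) ^ m := by
    refine le_trans (le_of_eq ?_) (one_add_mul_le_pow (a := t ^ 2 / (4 * (m : ℝ) ^ 2)) ?_ m)
    · field_simp
    · have : 0 ≤ t ^ 2 / (4 * (m : ℝ) ^ 2) := by positivity
      linarith
  have hG : 0 < Real.Gamma (m + m) ^ 2 := pow_pos (Real.Gamma_pos_of_pos (by linarith)) 2
  refine le_of_mul_le_mul_right ?_ hG
  calc _ ≤ ‖Complex.Gamma (m + t * Complex.I)‖ ^ 2 * (1 + t ^ 2 / (4 * m ^ 2)) ^ m *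
      Real.Gamma (m + m) ^ 2 := by gcongr
    _ ≤ _ := h
    _ ≤ Real.Gamma (m + m) ^ 2 * Real.Gamma m ^ 2 := by gcongr
    _ = _ := by ring

lemma hb_coef (k : ℕ) (hk : 1 ≤ k) (t : ℝ) (n : ℕ) :
    ‖Complex.Gamma ((k + n : ℕ) + t * Complex.I)‖ ^ 2 / ((2 * k + n - 1).factorial : ℝ) /
      (n.factorial : ℝ) ≤ 4 / (k + |t|) * (1 / √((n : ℝ) + 1)) := by
  obtain ⟨j, rfl⟩ : ∃ j, k = j + 1 := ⟨k - 1, by omega⟩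
  have hf := hb_fact j n
  have hg := hb_gamma (j + 1 + n) (by omega) t
  have e : Real.Gamma ((j + 1 + n : ℕ) : ℝ) = ((n + j).factorial : ℝ) := by
    rw [← Real.Gamma_nat_eq_factorial]; push_cast; ring_nf
  rw [e] at hg
  rw [show 2 * (j + 1) + n - 1 = n + 2 * j + 1 by omega]
  have hf : ((n + j).factorial : ℝ) ^ 2 * (2 * (n + j + 1) + j * (j + 1)) ≤
    2 * (((n + 2 * j + 1).factorial : ℝ) * n.factorial) := by exact_mod_cast hf
  set X := ‖Complex.Gamma ((j + 1 + n : ℕ) + t * Complex.I)‖ ^ 2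
  have hX : 0 ≤ X := by positivity
  have hE : 0 < ((n + j).factorial : ℝ) ^ 2 := by positivity
  set E := ((n + j).factorial : ℝ) ^ 2
  rw [div_div]
  have hD : 0 < ((n + 2 * j + 1).factorial : ℝ) * n.factorial := by positivity
  set D := ((n + 2 * j + 1).factorial : ℝ) * n.factorial
  have hn : (0 : ℝ) ≤ n := by positivity
  have hj : (0 : ℝ) ≤ j := by positivity
  push_cast at hg ⊢
  set m : ℝ := j + 1 + n with hmdef
  have hm : 0 < m := by positivity
  -- a, b
  obtain ⟨a, ha⟩ : ∃ a, a = E / D := ⟨_, rfl⟩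
  obtain ⟨b, hb⟩ : ∃ b, b = X / E := ⟨_, rfl⟩
  have hab : X / D = a * b := by rw [ha, hb]; field_simp
  have ha0 : 0 ≤ a := by rw [ha]; positivity
  have hb0 : 0 ≤ b := by rw [hb]; positivity
  have hf2 : a * (2 * m + j * (j + 1)) ≤ 2 := by
    rw [ha, div_mul_eq_mul_div, div_le_iff₀ hD, hmdef]; linarith
  have hg2 : b * (1 + t ^ 2 / (4 * m)) ≤ 1 := by
    rw [hb, div_mul_eq_mul_div, div_le_iff₀ hE]; linarith
  have ht0 : 0 ≤ t ^ 2 / (4 * m) := by positivity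
  have hb1 : b ≤ 1 := by nlinarith
  have hbt : b * t ^ 2 ≤ 4 * m := by
    have : b * (t ^ 2 / (4 * m)) ≤ 1 := by linarith
    rw [← mul_div_assoc, div_le_one (by positivity)] at this
    exact this
  have ham : a * m ≤ 1 := by nlinarith [mul_nonneg ha0 (mul_nonneg hj (by linarith : (0 : ℝ) ≤ j + 1))]
  have hak : a * (j + 1) ^ 2 ≤ 2 := by
    refine le_trans ?_ hf2
    apply mul_le_mul_of_nonneg_left _ ha0
    rw [hmdef]; nlinarith
  have hT : 0 < (j : ℝ) + 1 + |t| := by positivity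
  have main : (a * b * (j + 1 + |t|)) ^ 2 * m ≤ 12 := by
    have h1 : (j + 1 + |t|) ^ 2 ≤ 2 * ((j : ℝ) + 1) ^ 2 + 2 * t ^ 2 := by
      rw [← sq_abs t]; nlinarith [sq_nonneg ((j : ℝ) + 1 - |t|)]
    have h2 : (a * b) ^ 2 * (j + 1) ^ 2 * m ≤ 2 := by
      have hb2 : b ^ 2 ≤ 1 := pow_le_one₀ hb0 hb1
      calc _ = b ^ 2 * ((a * (j + 1) ^ 2) * (a * m)) := by ring
        _ ≤ 1 * (2 * 1) := by gcongr
        _ = 2 := by ring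
    have h3 : (a * b) ^ 2 * t ^ 2 * m ≤ 4 := by
      calc _ = b * (a * (a * m) * (b * t ^ 2)) := by ring
        _ ≤ 1 * (a * 1 * (4 * m)) := by gcongr
        _ ≤ 4 := by linarith
    calc _ = (a * b) ^ 2 * m * (j + 1 + |t|) ^ 2 := by ring
      _ ≤ (a * b) ^ 2 * m * (2 * ((j : ℝ) + 1) ^ 2 + 2 * t ^ 2) := by gcongr
      _ ≤ 12 := by linarith
  have hnm : (n : ℝ) + 1 ≤ m := by rw [hmdef]; linarith
  have hs : 0 < √((n : ℝ) + 1) := Real.sqrt_pos.2 (by positivity)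
  have hss : √((n : ℝ) + 1) ^ 2 = n + 1 := Real.sq_sqrt (by positivity)
  rw [hab, div_mul_div_comm, mul_one, le_div_iff₀ (by positivity)]
  apply le_of_sq_le_sq _ (by norm_num)
  calc _ = (a * b * (j + 1 + |t|)) ^ 2 * √((n : ℝ) + 1) ^ 2 := by ring
    _ ≤ (a * b * (j + 1 + |t|)) ^ 2 * m := by rw [hss]; gcongr
    _ ≤ 4 ^ 2 := by linarith

/-- There is an absolute constant `C > 0` such that for every integer `k ≥ 1`, real `t` and
`0 < z < 1`:
`z^k |Γ(k-it)Γ(k+it)/Γ(2k) · ₂F₁(k+it, k-it, 2k; z)| ≤ C √(z/(1-z)) / (k+|t|)`. -/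
theorem hypergeometric_bound :
    ∃ C : ℝ, 0 < C ∧ ∀ (k : ℕ), 1 ≤ k → ∀ (t z : ℝ), 0 < z → z < 1 →
      z ^ k * ‖Complex.Gamma ((k : ℂ) - t * Complex.I) *
          Complex.Gamma ((k : ℂ) + t * Complex.I) / Complex.Gamma (2 * (k : ℂ)) *
          hyp2F1 ((k : ℂ) + t * Complex.I) ((k : ℂ) - t * Complex.I) (2 * (k : ℂ)) (z : ℂ)‖
        ≤ C * Real.sqrt (z / (1 - z)) * (1 / ((k : ℝ) + |t|)) := by
  refine ⟨20, by norm_num, ?_⟩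
  intro k hk t z h0 h1
  have hk0 : (0 : ℝ) < k := by exact_mod_cast hk
  have n1 : Complex.Gamma ((k : ℂ) - t * Complex.I) ≠ 0 :=
    Complex.Gamma_ne_zero_of_re_pos (by simpa using hk0)
  have n2 : Complex.Gamma ((k : ℂ) + t * Complex.I) ≠ 0 :=
    Complex.Gamma_ne_zero_of_re_pos (by simpa using hk0)
  have n3 : Complex.Gamma (2 * (k : ℂ)) ≠ 0 :=
    Complex.Gamma_ne_zero_of_re_pos (by simpa using hk0)
  set f : ℕ → ℝ := fun n => ‖Complex.Gamma ((k + n : ℕ) + t * Complex.I)‖ ^ 2 /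
    ((2 * k + n - 1).factorial : ℝ) / (n.factorial : ℝ) * z ^ n with hf
  have hterm : ∀ n : ℕ, Complex.Gamma ((k : ℂ) + t * Complex.I + n) *
      Complex.Gamma ((k : ℂ) - t * Complex.I + n) / Complex.Gamma (2 * (k : ℂ) + n) *
      (z : ℂ) ^ n / (n.factorial : ℂ) = ((f n : ℝ) : ℂ) := by
    intro n
    have e1 : (k : ℂ) + t * Complex.I + n = (k + n : ℕ) + t * Complex.I := by push_cast; ring
    have e2 : (k : ℂ) - t * Complex.I + n =
        (starRingEnd ℂ) ((k + n : ℕ) + t * Complex.I) := by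
      simp; ring
    have e3 : Complex.Gamma (2 * (k : ℂ) + n) = ((2 * k + n - 1).factorial : ℂ) := by
      rw [← Complex.Gamma_nat_eq_factorial]
      congr 1
      have : ((2 * k + n - 1 + 1 : ℕ) : ℂ) = ((2 * k + n : ℕ) : ℂ) := by congr 1; omega
      push_cast at this
      exact this.symm
    rw [e1, e2, Complex.Gamma_conj, e3, Complex.mul_conj, Complex.normSq_eq_norm_sq, hf]
    push_cast
    ring
  have hf0 : ∀ n, 0 ≤ f n := fun n => by rw [hf]; positivity
  unfold hyp2F1
  rw [tsum_congr hterm, ← Complex.ofReal_tsum]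
  have hcancel : ∀ S : ℂ, Complex.Gamma ((k : ℂ) - t * Complex.I) *
          Complex.Gamma ((k : ℂ) + t * Complex.I) / Complex.Gamma (2 * (k : ℂ)) *
      (Complex.Gamma (2 * (k : ℂ)) / (Complex.Gamma ((k : ℂ) + t * Complex.I) *
        Complex.Gamma ((k : ℂ) - t * Complex.I)) * S) = S := by
    intro S
    generalize Complex.Gamma (2 * (k : ℂ)) = G at n3 ⊢
    field_simp
  rw [hcancel, Complex.norm_real, Real.norm_of_nonneg (tsum_nonneg hf0)]
  have hT : 0 < (k : ℝ) + |t| := by positivity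
  have hw : 0 < 1 - z := by linarith
  have hsum : ∑' n, f n ≤ 4 / (k + |t|) * (5 / √(1 - z)) := by
    apply Real.tsum_le_of_sum_range_le hf0
    intro M
    refine le_trans ?_ (mul_le_mul_of_nonneg_left (hb_sum z h0 h1 M) (by positivity))
    rw [Finset.mul_sum]
    apply Finset.sum_le_sum
    intro n _
    calc f n ≤ 4 / (k + |t|) * (1 / √((n : ℝ) + 1)) * z ^ n :=
          mul_le_mul_of_nonneg_right (hb_coef k hk t n) (by positivity)
      _ = _ := by ring
  have hzk : z ^ k ≤ √z := by
    calc z ^ k ≤ z ^ 1 := pow_le_pow_of_le_one h0.le h1.le hk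
      _ = z := pow_one z
      _ ≤ √z := by apply Real.le_sqrt_of_sq_le; nlinarith
  calc _ ≤ √z * (4 / (k + |t|) * (5 / √(1 - z))) :=
        mul_le_mul hzk hsum (tsum_nonneg hf0) (Real.sqrt_nonneg _)
    _ = _ := by rw [Real.sqrt_div h0.le]; ring
end

section
/- Let \(u,v,\lambda\in\mathbb{C}\) with \(\mathrm{Re}\,v=0\), \(\mathrm{Re}\,u\geq 0\) and \(\mathrm{Re}\,\lambda>1+\mathrm{Re}\,u\), and let \(\Delta\) be real with \(1-2\mathrm{Re}\,\lambda<\Delta<-1-2\mathrm{Re}\,u\). Let \(F\) be the unique analytic function on \(\mathbb{C}\setminus[1,\infty)\) that agrees with the Gauss hypergeometric series \({}_2F_1(\lambda-u+v,\lambda-u-v,2\lambda;\,w)\) for \(|w|<1\). Then for every real \(z<0\), \(\frac{1}{2}(-z)^{1/2-\lambda}\cdot\frac{1}{2\pi}\int_{-\infty}^{\infty}\Gamma(u,v,\lambda;\Delta+i\tau)\,(-1/z)^{(\Delta+i\tau)/2}\,d\tau \;=\; \frac{\Gamma(\lambda-u+v)\Gamma(\lambda-u-v)}{\Gamma(2\lambda)}\,F(z)\),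 where the integral converges absolutely. -/
open MeasureTheory

/-- `Γ(u,v,λ;s) = Γ(λ-1/2+s/2)/Γ(λ+1/2-s/2) · Γ(1/2-u+v-s/2) · Γ(1/2-u-v-s/2)`. -/
noncomputable def gammaFactor (u v lam s : ℂ) : ℂ :=
  Complex.Gamma (lam - 1 / 2 + s / 2) / Complex.Gamma (lam + 1 / 2 - s / 2) *
    Complex.Gamma (1 / 2 - u + v - s / 2) * Complex.Gamma (1 / 2 - u - v - s / 2)


lemma aux_cpow {x : ℝ} (hx : 0 < x) (s : ℂ) : (x : ℂ) ^ s = Complex.exp (s * (Real.log x : ℝ)) := by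
  rw [Complex.cpow_def_of_ne_zero (by exact_mod_cast hx.ne'), Complex.ofReal_log hx.le, mul_comm]

lemma aux_norm_Gamma_le {s : ℂ} (hs : 0 < s.re) : ‖Complex.Gamma s‖ ≤ Real.Gamma s.re := by
  rw [Complex.Gamma_eq_integral hs, Real.Gamma_eq_integral hs, Complex.GammaIntegral]
  refine (norm_integral_le_integral_norm _).trans (le_of_eq ?_)
  refine setIntegral_congr_fun measurableSet_Ioi fun x hx => ?_
  have hx : 0 < x := hx
  simp only [norm_mul, Complex.norm_real, Complex.norm_cpow_eq_rpow_re_of_pos hx]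
  simp [abs_of_pos (Real.exp_pos _)]

lemma aux_mellinConvergent {a w : ℂ} (hw : 0 < w.re) (haw : w.re < a.re) :
    MellinConvergent (fun y : ℝ => ((1 + y : ℝ) : ℂ) ^ (-a)) w := by
  have hc : ContinuousOn (fun y : ℝ => ((1 + y : ℝ) : ℂ) ^ (-a)) (Set.Ici 0) := by
    intro y hy
    have hy : 0 ≤ y := hy
    apply ContinuousAt.continuousWithinAt
    refine ContinuousAt.cpow (by fun_prop) continuousAt_const ?_
    left; simp; linarith
  refine mellinConvergent_of_isBigO_rpow (a := a.re) (b := 0) ?_ ?_ haw ?_ hw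
  · exact (hc.mono Set.Ioi_subset_Ici_self).locallyIntegrableOn measurableSet_Ioi
  · refine Asymptotics.IsBigO.of_bound 1 ?_
    filter_upwards [Filter.eventually_gt_atTop 0] with y hy
    rw [Complex.norm_cpow_eq_rpow_re_of_pos (by linarith), Real.norm_of_nonneg (by positivity), one_mul,
      Complex.neg_re]
    exact Real.rpow_le_rpow_of_nonpos hy (by linarith) (by linarith)
  · refine Asymptotics.IsBigO.of_bound 1 ?_
    filter_upwards [self_mem_nhdsWithin] with y hy
    have hy : 0 < y := hy
    rw [Complex.norm_cpow_eq_rpow_re_of_pos (by linarith)]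
    simp only [neg_zero, Real.rpow_zero, norm_one, mul_one, Complex.neg_re]
    exact Real.rpow_le_one_of_one_le_of_nonpos (by linarith) (by linarith)

lemma aux_mellin {a w : ℂ} (hw : 0 < w.re) (haw : w.re < a.re) :
    mellin (fun y : ℝ => ((1 + y : ℝ) : ℂ) ^ (-a)) w =
      Complex.Gamma w * Complex.Gamma (a - w) / Complex.Gamma a := by
  have hG := Complex.Gamma_mul_Gamma_eq_betaIntegral hw (t := a - w) (by simp; linarith)
  rw [hG, add_sub_cancel, mul_div_cancel_left₀ _ (Complex.Gamma_ne_zero_of_re_pos (by linarith))]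
  have him : (fun t : ℝ => t / (1 - t)) '' Set.Ioo 0 1 = Set.Ioi 0 := by
    ext y
    simp only [Set.mem_image, Set.mem_Ioo, Set.mem_Ioi]
    constructor
    · rintro ⟨t, ⟨h0, h1⟩, rfl⟩
      exact div_pos h0 (by linarith)
    · intro hy
      refine ⟨y / (1 + y), ⟨by positivity, ?_⟩, ?_⟩
      · rw [div_lt_one (by linarith)]; linarith
      · have : 1 + y ≠ 0 := by linarith
        field_simp
        ring_nf
  rw [mellin, ← him, integral_image_eq_integral_abs_deriv_smul (f' := fun t => 1 / (1 - t) ^ 2)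
    measurableSet_Ioo, Complex.betaIntegral, intervalIntegral.integral_of_le zero_le_one,
    integral_Ioc_eq_integral_Ioo]
  · refine setIntegral_congr_fun measurableSet_Ioo fun t ⟨h0, h1⟩ => ?_
    have h2 : 0 < 1 - t := by linarith
    have e : 1 + t / (1 - t) = (1 - t)⁻¹ := by field_simp; ring
    have e1 : (1 - (t : ℂ)) = ((1 - t : ℝ) : ℂ) := by push_cast; ring
    simp only [e, e1]
    rw [abs_of_pos (by positivity), aux_cpow (by positivity), aux_cpow (by positivity),
      aux_cpow h0, aux_cpow h2, Real.log_div h0.ne' h2.ne', Real.log_inv]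
    have e3 : (1 : ℝ) / (1 - t) ^ 2 = Real.exp (-2 * Real.log (1 - t)) := by
      rw [show -2 * Real.log (1 - t) = -(2 * Real.log (1 - t)) by ring, Real.exp_neg, one_div,
        show 2 * Real.log (1 - t) = Real.log (1 - t) + Real.log (1 - t) by ring, Real.exp_add,
        Real.exp_log h2, sq]
    rw [e3, smul_eq_mul, Complex.real_smul, Complex.ofReal_exp, ← Complex.exp_add, ← Complex.exp_add,
      ← Complex.exp_add]
    congr 1
    push_cast
    ring
  · intro t ht
    have h2 : 1 - t ≠ 0 := by have := ht.2; intro h; linarith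
    have := ((hasDerivAt_id t).div ((hasDerivAt_id t).const_sub 1) h2)
    refine (this.congr_deriv ?_).hasDerivWithinAt
    simp
  · intro s hs t ht h
    have h1 : 1 - s ≠ 0 := by have := hs.2; intro h; linarith
    have h2 : 1 - t ≠ 0 := by have := ht.2; intro h; linarith
    have h : s / (1 - s) = t / (1 - t) := h
    rw [div_eq_div_iff h1 h2] at h
    linarith

lemma aux_vert {a : ℂ} {σ : ℝ} (hσ : 0 < σ) (ha : σ < a.re) :
    Integrable (fun y : ℝ => Complex.Gamma (σ + y * Complex.I) *
      Complex.Gamma (a - (σ + y * Complex.I))) := by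
  have hne : ∀ (s : ℂ), 0 < s.re → ∀ m : ℕ, s ≠ -m := by
    intro s hs m h
    have := congrArg Complex.re h
    simp at this
    have : (0 : ℝ) ≤ m := Nat.cast_nonneg m
    linarith
  have hcont : Continuous (fun y : ℝ => Complex.Gamma (σ + y * Complex.I) *
      Complex.Gamma (a - (σ + y * Complex.I))) := by
    rw [continuous_iff_continuousAt]
    intro y
    apply ContinuousAt.mul
    · exact ContinuousAt.comp (g := Complex.Gamma) (f := fun y : ℝ => (σ + y * Complex.I : ℂ))
        (Complex.differentiableAt_Gamma _ (hne _ (by simpa))).continuousAt (by fun_prop)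
    · exact ContinuousAt.comp (g := Complex.Gamma) (f := fun y : ℝ => (a - (σ + y * Complex.I) : ℂ))
        (Complex.differentiableAt_Gamma _ (hne _ (by simpa))).continuousAt (by fun_prop)
  set m := min (σ ^ 2) 1
  have hm : 0 < m := lt_min (by positivity) one_pos
  refine Integrable.mono' ((integrable_inv_one_add_sq.const_mul
    (m⁻¹ * (Real.Gamma (σ + 2) * Real.Gamma (a.re - σ))))) hcont.aestronglyMeasurable
    (Filter.Eventually.of_forall fun y => ?_)
  set w : ℂ := σ + y * Complex.I with hw
  have hwre : w.re = σ := by simp [hw]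
  have hwim : w.im = y := by simp [hw]
  have hw0 : w ≠ 0 := by intro h; rw [h] at hwre; simp at hwre; linarith
  have hw1 : w + 1 ≠ 0 := by
    intro h; have := congrArg Complex.re h; simp [hwre] at this; linarith
  have h1 : Complex.Gamma (w + 2) = (w + 1) * (w * Complex.Gamma w) := by
    rw [← Complex.Gamma_add_one _ hw0, ← Complex.Gamma_add_one _ hw1]; ring_nf
  have h2 := aux_norm_Gamma_le (s := w + 2) (by simp [hwre]; linarith)
  have h3 := aux_norm_Gamma_le (s := a - w) (by simp [hwre]; linarith)
  simp only [Complex.add_re, Complex.sub_re, hwre, Complex.re_ofNat] at h2 h3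
  have h4 : m * (1 + y ^ 2) ≤ ‖w‖ * ‖w + 1‖ := by
    have e1 : ‖w‖ ^ 2 = σ ^ 2 + y ^ 2 := by
      rw [← Complex.normSq_eq_norm_sq, Complex.normSq_apply, hwre, hwim]; ring
    have e2 : ‖w + 1‖ ^ 2 = (σ + 1) ^ 2 + y ^ 2 := by
      rw [← Complex.normSq_eq_norm_sq, Complex.normSq_apply]; simp [hwre, hwim]; ring
    have e3 : ‖w‖ ≤ ‖w + 1‖ := by
      apply le_of_sq_le_sq _ (norm_nonneg _); rw [e1, e2]; nlinarith
    have e4 : m * (1 + y ^ 2) ≤ ‖w‖ ^ 2 := by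
      rw [e1]
      have i1 : m ≤ σ ^ 2 := min_le_left _ _
      have i2 : m ≤ 1 := min_le_right _ _
      nlinarith [sq_nonneg y]
    nlinarith [norm_nonneg w]
  rw [h1, norm_mul, norm_mul] at h2
  have h5 : (m * (1 + y ^ 2)) * ‖Complex.Gamma w‖ ≤ Real.Gamma (σ + 2) := by
    refine le_trans ?_ h2
    nlinarith [norm_nonneg (Complex.Gamma w)]
  rw [norm_mul]
  have h6 : ‖Complex.Gamma w‖ ≤ Real.Gamma (σ + 2) / (m * (1 + y ^ 2)) := by
    rw [le_div_iff₀ (by positivity)]; linarith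
  calc _ ≤ Real.Gamma (σ + 2) / (m * (1 + y ^ 2)) * Real.Gamma (a.re - σ) := by
        gcongr
    _ = _ := by field_simp

lemma aux_inversion {a : ℂ} {σ : ℝ} (hσ : 0 < σ) (ha : σ < a.re) {x : ℝ} (hx : 0 < x) :
    (1 / (2 * Real.pi) : ℂ) * ∫ y : ℝ, (x : ℂ) ^ (-(σ + y * Complex.I)) *
      (Complex.Gamma (σ + y * Complex.I) * Complex.Gamma (a - (σ + y * Complex.I))) =
      Complex.Gamma a * ((1 + x : ℝ) : ℂ) ^ (-a) := by
  have hmel : ∀ y : ℝ, mellin (fun y : ℝ => ((1 + y : ℝ) : ℂ) ^ (-a)) (σ + y * Complex.I) =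
      Complex.Gamma (σ + y * Complex.I) * Complex.Gamma (a - (σ + y * Complex.I)) /
        Complex.Gamma a := fun y => aux_mellin (by simpa) (by simpa)
  have hG : Complex.Gamma a ≠ 0 := Complex.Gamma_ne_zero_of_re_pos (by linarith)
  have := mellinInv_mellin_eq σ (fun y : ℝ => ((1 + y : ℝ) : ℂ) ^ (-a)) hx
    (aux_mellinConvergent (by simpa) (by simpa)) (by
      unfold Complex.VerticalIntegrable
      simp only [hmel]
      exact (aux_vert hσ ha).div_const _) (by
      refine ContinuousAt.cpow (by fun_prop) continuousAt_const ?_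
      left; simp; linarith)
  rw [← this, mellinInv]
  simp only [hmel, smul_eq_mul]
  simp_rw [← mul_div_assoc]
  rw [integral_div, Complex.real_smul]
  have e : ∀ A : ℂ, (1 / (2 * Real.pi) : ℂ) * A =
      Complex.Gamma a * (((1 / (2 * Real.pi) : ℝ) : ℂ) * (A / Complex.Gamma a)) := by
    intro A
    push_cast
    field_simp
  rw [e]

lemma aux_slit {w : ℂ} (hw : w.re < 1) {t : ℝ} (ht : t ∈ Set.Icc (0 : ℝ) 1) :
    1 - w * t ∈ Complex.slitPlane := by
  left
  obtain ⟨h0, h1⟩ := ht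
  simp
  rcases le_or_gt w.re 0 with h | h <;> nlinarith

lemma aux_beta_int {p q : ℂ} (hp : 0 < p.re) (hq : 0 < q.re) :
    IntegrableOn (fun t : ℝ => (t : ℂ) ^ (p - 1) * (1 - (t : ℂ)) ^ (q - 1)) (Set.Ioo 0 1) := by
  have := Complex.betaIntegral_convergent hp hq
  rw [intervalIntegrable_iff_integrableOn_Ioo_of_le zero_le_one] at this
  exact this

lemma aux_beta_val {p q : ℂ} (hp : 0 < p.re) (hq : 0 < q.re) :
    ∫ t in Set.Ioo (0 : ℝ) 1, (t : ℂ) ^ (p - 1) * (1 - (t : ℂ)) ^ (q - 1) =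
      Complex.Gamma p * Complex.Gamma q / Complex.Gamma (p + q) := by
  rw [Complex.Gamma_mul_Gamma_eq_betaIntegral hp hq, mul_div_cancel_left₀ _
    (Complex.Gamma_ne_zero_of_re_pos (by simp; linarith)), Complex.betaIntegral,
    intervalIntegral.integral_of_le zero_le_one, integral_Ioc_eq_integral_Ioo]

lemma aux_diff (a : ℂ) (k : ℝ → ℂ) (hk : IntegrableOn k (Set.Ioo 0 1)) :
    DifferentiableOn ℂ (fun w : ℂ => ∫ t in Set.Ioo (0 : ℝ) 1, k t * (1 - w * t) ^ (-a))
      {w | w.re < 1} := by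
  intro w0 hw0
  apply DifferentiableAt.differentiableWithinAt
  have hopen : IsOpen {w : ℂ | w.re < 1} := isOpen_lt Complex.continuous_re continuous_const
  obtain ⟨ε, hε, hball⟩ := Metric.nhds_basis_closedBall.mem_iff.1 (hopen.mem_nhds hw0)
  have hcont : ∀ s : ℂ, ContinuousOn (fun p : ℂ × ℝ => (1 - p.1 * p.2) ^ s)
      ({w : ℂ | w.re < 1} ×ˢ Set.Icc (0 : ℝ) 1) := by
    intro s p hp
    apply ContinuousAt.continuousWithinAt
    refine ContinuousAt.cpow (by fun_prop) continuousAt_const ?_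
    exact aux_slit hp.1 hp.2
  have hcont1 : ∀ s w : ℂ, w.re < 1 →
      ContinuousOn (fun t : ℝ => (1 - w * t) ^ s) (Set.Icc (0 : ℝ) 1) := by
    intro s w hw t ht
    apply ContinuousAt.continuousWithinAt
    refine ContinuousAt.cpow (by fun_prop) continuousAt_const ?_
    exact aux_slit hw ht
  have hmeas : ∀ s w : ℂ, w.re < 1 → AEStronglyMeasurable (fun t : ℝ => (1 - w * t) ^ s)
      (volume.restrict (Set.Ioo (0 : ℝ) 1)) := fun s w hw =>
    ((hcont1 s w hw).mono Set.Ioo_subset_Icc_self).aestronglyMeasurable measurableSet_Ioo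
  obtain ⟨C, hC⟩ := ((isCompact_closedBall w0 ε).prod
    (isCompact_Icc (a := (0 : ℝ)) (b := 1))).exists_bound_of_continuousOn
    (f := fun p : ℂ × ℝ => a * p.2 * (1 - p.1 * p.2) ^ (-a - 1)) (by
      apply ContinuousOn.mul (by fun_prop)
      exact (hcont (-a - 1)).mono (Set.prod_mono hball subset_rfl))
  obtain ⟨C0, hC0⟩ := (isCompact_Icc (a := (0 : ℝ)) (b := 1)).exists_bound_of_continuousOn
    (hcont1 (-a) w0 hw0)
  refine (hasDerivAt_integral_of_dominated_loc_of_deriv_le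
    (F := fun w t => k t * (1 - w * (t : ℂ)) ^ (-a))
    (F' := fun w t => k t * (a * t * (1 - w * (t : ℂ)) ^ (-a - 1)))
    (bound := fun t => ‖k t‖ * C)
    (Metric.closedBall_mem_nhds w0 hε) ?_ ?_ ?_ ?_ ?_ ?_).2.differentiableAt
  · filter_upwards [hopen.mem_nhds hw0] with w hw
    exact hk.aestronglyMeasurable.mul (hmeas _ w hw)
  · refine Integrable.mul_bdd (c := C0) hk (hmeas _ w0 hw0) ?_
    filter_upwards [ae_restrict_mem measurableSet_Ioo] with t ht
    exact hC0 t (Set.Ioo_subset_Icc_self ht)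
  · refine hk.aestronglyMeasurable.mul (AEStronglyMeasurable.mul ?_ (hmeas _ w0 hw0))
    exact Continuous.aestronglyMeasurable (by fun_prop)
  · filter_upwards [ae_restrict_mem measurableSet_Ioo] with t ht w hw
    rw [norm_mul]
    gcongr
    exact hC (w, t) ⟨hw, Set.Ioo_subset_Icc_self ht⟩
  · exact hk.norm.mul_const C
  · filter_upwards [ae_restrict_mem measurableSet_Ioo] with t ht w hw
    have h1 : HasDerivAt (fun w : ℂ => 1 - w * (t : ℂ)) (-(t : ℂ)) w := by
      simpa using ((hasDerivAt_id w).mul_const (t : ℂ)).const_sub 1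
    have h2 := (h1.cpow_const (c := -a) (aux_slit (hball hw) (Set.Ioo_subset_Icc_self ht))).const_mul (k t)
    refine h2.congr_deriv ?_
    ring

lemma aux_coeff {a : ℂ} (ha : 0 < a.re) (n : ℕ) :
    Ring.choose (a + n - 1) n = Complex.Gamma (a + n) / (Complex.Gamma a * n.factorial) := by
  have hG := Complex.Gamma_ne_zero_of_re_pos ha
  have h1 := Ring.factorial_nsmul_multichoose_eq_ascPochhammer a n
  rw [← Ring.multichoose_eq, eq_div_iff (mul_ne_zero hG (by exact_mod_cast n.factorial_ne_zero))]
  rw [Polynomial.ascPochhammer_smeval_eq_eval, nsmul_eq_mul] at h1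
  have h2 : ∀ n : ℕ, (ascPochhammer ℂ n).eval a * Complex.Gamma a = Complex.Gamma (a + n) := by
    intro n
    induction n with
    | zero => simp
    | succ n ih =>
      rw [ascPochhammer_succ_eval, Nat.cast_succ, ← add_assoc, Complex.Gamma_add_one, ← ih]
      · ring
      · intro h
        have := congrArg Complex.re h
        simp at this
        have : (0 : ℝ) ≤ n := Nat.cast_nonneg n
        linarith
  rw [← h2, ← h1]
  ring

lemma aux_binom {a : ℂ} (ha : 0 < a.re) {x : ℂ} (hx : ‖x‖ < 1) :
    HasSum (fun n : ℕ => Complex.Gamma (a + n) / (Complex.Gamma a * n.factorial) * x ^ n)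
      ((1 - x) ^ (-a)) := by
  have := (Complex.one_div_one_sub_cpow_hasFPowerSeriesOnBall_zero a).hasSum (y := x) (by
    simpa [← ofReal_norm, ← enorm_eq_nnnorm] using hx)
  simp only [FormalMultilinearSeries.ofScalars_apply_eq, aux_coeff ha, smul_eq_mul, zero_add] at this
  rwa [one_div, ← Complex.cpow_neg] at this

lemma aux_series {a b c w : ℂ} (ha : 0 < a.re) (hb : 0 < b.re) (hcb : b.re < c.re) (hw : ‖w‖ < 1) :
    Complex.Gamma a * ∫ t in Set.Ioo (0 : ℝ) 1,
      ((t : ℂ) ^ (b - 1) * (1 - (t : ℂ)) ^ (c - b - 1)) * (1 - w * t) ^ (-a) =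
    Complex.Gamma (c - b) * ∑' n : ℕ, Complex.Gamma (a + n) * Complex.Gamma (b + n) /
            Complex.Gamma (c + n) * w ^ n / (n.factorial : ℂ) := by
  have hG := Complex.Gamma_ne_zero_of_re_pos ha
  have hcb' : 0 < (c - b).re := by simp; linarith
  have hk := aux_beta_int hb hcb'
  set k : ℝ → ℂ := fun t => (t : ℂ) ^ (b - 1) * (1 - (t : ℂ)) ^ (c - b - 1) with hkdef
  set d : ℕ → ℂ := fun n => Complex.Gamma (a + n) / (Complex.Gamma a * n.factorial) with hd
  have hsum : Summable fun n => ‖d n * w ^ n‖ := (aux_binom ha hw).summable.norm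
  have key := hasSum_integral_of_dominated_convergence (μ := volume.restrict (Set.Ioo (0 : ℝ) 1))
    (F := fun n t => k t * (d n * (w * t) ^ n)) (f := fun t => k t * (1 - w * t) ^ (-a))
    (fun n t => ‖k t‖ * ‖d n * w ^ n‖) ?_ ?_ ?_ ?_ ?_
  · have hval : ∀ n : ℕ, ∫ t in Set.Ioo (0 : ℝ) 1, k t * (d n * (w * t) ^ n) =
        d n * w ^ n * (Complex.Gamma (b + n) * Complex.Gamma (c - b) / Complex.Gamma (c + n)) := by
      intro n
      have := aux_beta_val (p := b + n) (q := c - b) (by simp; positivity) hcb'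
      rw [show b + n + (c - b) = c + n by ring] at this
      rw [← this, ← integral_const_mul]
      refine setIntegral_congr_fun measurableSet_Ioo fun t ht => ?_
      have ht0 : (t : ℂ) ≠ 0 := by exact_mod_cast ht.1.ne'
      simp only [hkdef]
      rw [show b + n - 1 = (b - 1) + n by ring, Complex.cpow_add _ _ ht0, Complex.cpow_natCast]
      ring
    simp only [hval] at key
    rw [← key.tsum_eq, ← tsum_mul_left, ← tsum_mul_left]
    refine tsum_congr fun n => ?_
    simp only [hd]
    field_simp
  · intro n
    exact hk.aestronglyMeasurable.mul (Continuous.aestronglyMeasurable (by fun_prop))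
  · intro n
    filter_upwards [ae_restrict_mem measurableSet_Ioo] with t ht
    rw [norm_mul, mul_pow, ← mul_assoc, norm_mul (d n * w ^ n)]
    have : ‖(t : ℂ) ^ n‖ ≤ 1 := by
      rw [norm_pow, Complex.norm_real, Real.norm_of_nonneg ht.1.le]
      exact pow_le_one₀ ht.1.le ht.2.le
    gcongr
    exact mul_le_of_le_one_right (norm_nonneg _) this
  · filter_upwards with t
    exact hsum.mul_left _
  · simp_rw [tsum_mul_left]
    exact hk.norm.mul_const _
  · filter_upwards [ae_restrict_mem measurableSet_Ioo] with t ht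
    refine (aux_binom ha ?_).mul_left _
    rw [norm_mul, Complex.norm_real, Real.norm_of_nonneg ht.1.le]
    nlinarith [norm_nonneg w, ht.1, ht.2]

lemma aux_euler {a b c : ℂ} (ha : 0 < a.re) (hb : 0 < b.re) (hcb : b.re < c.re)
    (F : ℂ → ℂ)
    (hF : AnalyticOnNhd ℂ F {w : ℂ | ¬(w.im = 0 ∧ 1 ≤ w.re)})
    (hFseries : ∀ w : ℂ, ‖w‖ < 1 →
      F w = Complex.Gamma c / (Complex.Gamma a * Complex.Gamma b) *
          ∑' n : ℕ, Complex.Gamma (a + n) * Complex.Gamma (b + n) /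
            Complex.Gamma (c + n) * w ^ n / (n.factorial : ℂ)) {w : ℂ} (hw : w.re < 1) :
    Complex.Gamma (c - b) * (Complex.Gamma a * Complex.Gamma b / Complex.Gamma c * F w) =
    Complex.Gamma a * ∫ t in Set.Ioo (0 : ℝ) 1,
      ((t : ℂ) ^ (b - 1) * (1 - (t : ℂ)) ^ (c - b - 1)) * (1 - w * t) ^ (-a) := by
  have hGa := Complex.Gamma_ne_zero_of_re_pos ha
  have hGb := Complex.Gamma_ne_zero_of_re_pos hb
  have hGc := Complex.Gamma_ne_zero_of_re_pos (hb.trans hcb)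
  have hcb' : 0 < (c - b).re := by simp; linarith
  have hopen : IsOpen {w : ℂ | w.re < 1} := isOpen_lt Complex.continuous_re continuous_const
  have h1 : AnalyticOnNhd ℂ (fun w => Complex.Gamma (c - b) *
      (Complex.Gamma a * Complex.Gamma b / Complex.Gamma c * F w)) {w | w.re < 1} := by
    refine analyticOnNhd_const.mul (analyticOnNhd_const.mul (hF.mono ?_))
    rintro w hw ⟨_, h⟩
    exact absurd h (not_le.2 hw)
  have h2 := ((aux_diff a _ (aux_beta_int hb hcb')).const_mul (Complex.Gamma a)).analyticOnNhd hopen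
  refine h1.eqOn_of_preconnected_of_eventuallyEq h2 (convex_halfSpace_re_lt 1).isPreconnected
    (z₀ := 0) (by simp) ?_ hw
  filter_upwards [Metric.ball_mem_nhds (0 : ℂ) one_pos] with w hw
  have hw : ‖w‖ < 1 := by simpa using hw
  rw [aux_series ha hb hcb hw, hFseries w hw]
  field_simp

lemma aux_barnes {a b c : ℂ} {σ : ℝ} (hσ : 0 < σ) (ha : σ < a.re) (hb : σ < b.re)
    (hcb : b.re < c.re) {x : ℝ} (hx : 0 < x) :
    Integrable (fun y : ℝ => Complex.Gamma (σ + y * Complex.I) *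
      Complex.Gamma (a - (σ + y * Complex.I)) * Complex.Gamma (b - (σ + y * Complex.I)) /
      Complex.Gamma (c - (σ + y * Complex.I)) * (x : ℂ) ^ (-(σ + y * Complex.I))) ∧
    Complex.Gamma (c - b) * ((1 / (2 * Real.pi) : ℂ) * ∫ y : ℝ, Complex.Gamma (σ + y * Complex.I) *
      Complex.Gamma (a - (σ + y * Complex.I)) * Complex.Gamma (b - (σ + y * Complex.I)) /
      Complex.Gamma (c - (σ + y * Complex.I)) * (x : ℂ) ^ (-(σ + y * Complex.I))) =
    Complex.Gamma a * ∫ t in Set.Ioo (0 : ℝ) 1,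
      ((t : ℂ) ^ (b - 1) * (1 - (t : ℂ)) ^ (c - b - 1)) * (1 - (-x : ℂ) * t) ^ (-a) := by
  have hcb' : 0 < (c - b).re := by simp; linarith
  have hGcb := Complex.Gamma_ne_zero_of_re_pos hcb'
  set g : ℝ → ℂ := fun y : ℝ => Complex.Gamma (σ + y * Complex.I) *
      Complex.Gamma (a - (σ + y * Complex.I)) * Complex.Gamma (b - (σ + y * Complex.I)) /
      Complex.Gamma (c - (σ + y * Complex.I)) * (x : ℂ) ^ (-(σ + y * Complex.I)) with hg
  set B : ℝ → ℂ := fun y => Complex.Gamma (σ + y * Complex.I) *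
      Complex.Gamma (a - (σ + y * Complex.I)) with hB
  set H : ℝ × ℝ → ℂ := fun p =>
    Complex.exp (-(p.2 * Complex.I) * (Real.log p.1 + Real.log x : ℝ)) *
    (((p.1 : ℂ) ^ (b - σ - 1) * (1 - (p.1 : ℂ)) ^ (c - b - 1)) * (x ^ (-σ : ℂ) * B p.2)) with hH
  have hHint : Integrable H ((volume.restrict (Set.Ioo (0 : ℝ) 1)).prod volume) := by
    have h1 := aux_beta_int (p := b - σ) (q := c - b) (by simp; linarith) hcb'
    have h2 := (aux_vert hσ ha).const_mul ((x : ℂ) ^ (-σ : ℂ))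
    refine Integrable.bdd_mul (c := 1) (h1.mul_prod h2) ?_ ?_
    · exact Measurable.aestronglyMeasurable (by fun_prop)
    · filter_upwards with p
      rw [Complex.norm_exp]
      simp
  have hinner1 : ∀ y : ℝ, ∫ t in Set.Ioo (0 : ℝ) 1, H (t, y) = Complex.Gamma (c - b) * g y := by
    intro y
    have h1 := aux_beta_val (p := b - (σ + y * Complex.I)) (q := c - b) (by simp; linarith) hcb'
    rw [show b - (σ + y * Complex.I) + (c - b) = c - (σ + y * Complex.I) by ring] at h1
    have h2 : Complex.Gamma (c - b) * g y = (B y * (x : ℂ) ^ (-(σ + y * Complex.I))) *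
        ∫ t in Set.Ioo (0 : ℝ) 1, (t : ℂ) ^ (b - (σ + y * Complex.I) - 1) *
          (1 - (t : ℂ)) ^ (c - b - 1) := by
      rw [h1]; simp only [hg, hB]; ring
    rw [h2, ← integral_const_mul]
    refine setIntegral_congr_fun measurableSet_Ioo fun t ht => ?_
    simp only [hH]
    rw [aux_cpow ht.1, aux_cpow ht.1, aux_cpow hx, aux_cpow hx,
      show -(y * Complex.I) * ((Real.log t + Real.log x : ℝ) : ℂ) =
        -(y * Complex.I) * (Real.log t : ℝ) + -(y * Complex.I) * (Real.log x : ℝ) by push_cast; ring,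
      show (b - (σ + y * Complex.I) - 1) * (Real.log t : ℂ) =
        (b - σ - 1) * (Real.log t : ℂ) + -(y * Complex.I) * (Real.log t : ℝ) by ring,
      show -(σ + y * Complex.I) * (Real.log x : ℂ) =
        (-σ) * (Real.log x : ℂ) + -(y * Complex.I) * (Real.log x : ℝ) by ring,
      Complex.exp_add, Complex.exp_add, Complex.exp_add]
    ring
  have hinner2 : ∀ t ∈ Set.Ioo (0 : ℝ) 1, (1 / (2 * Real.pi) : ℂ) * ∫ y : ℝ, H (t, y) =
      Complex.Gamma a * (((t : ℂ) ^ (b - 1) * (1 - (t : ℂ)) ^ (c - b - 1)) *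
        (1 - (-x : ℂ) * t) ^ (-a)) := by
    intro t ht
    have h1 := aux_inversion hσ ha (mul_pos hx ht.1)
    have h2 : ∀ y, H (t, y) = ((t : ℂ) ^ (b - 1) * (1 - (t : ℂ)) ^ (c - b - 1)) *
        (((x * t : ℝ) : ℂ) ^ (-(σ + y * Complex.I)) * B y) := by
      intro y
      simp only [hH]
      rw [aux_cpow ht.1, aux_cpow ht.1, aux_cpow hx, aux_cpow (mul_pos hx ht.1),
        Real.log_mul hx.ne' ht.1.ne',
        show -(y * Complex.I) * ((Real.log t + Real.log x : ℝ) : ℂ) =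
          -(y * Complex.I) * (Real.log t : ℝ) + -(y * Complex.I) * (Real.log x : ℝ) by
            push_cast; ring,
        show (b - σ - 1) * (Real.log t : ℂ) =
          (b - 1) * (Real.log t : ℂ) + -σ * (Real.log t : ℝ) by ring,
        show -(σ + y * Complex.I) * ((Real.log x + Real.log t : ℝ) : ℂ) =
          (-σ * (Real.log x : ℂ) + -(y * Complex.I) * (Real.log x : ℝ)) +
          (-σ * (Real.log t : ℂ) + -(y * Complex.I) * (Real.log t : ℝ)) by push_cast; ring,
        Complex.exp_add, Complex.exp_add, Complex.exp_add, Complex.exp_add, Complex.exp_add]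
      ring
    simp_rw [h2]
    rw [integral_const_mul, mul_left_comm, h1]
    push_cast
    rw [sub_eq_add_neg 1 (-(x : ℂ) * t), neg_mul, neg_neg]
    ring
  have hint := hHint.integral_prod_right
  simp only [hinner1] at hint
  refine ⟨?_, ?_⟩
  · have := hint.const_mul (Complex.Gamma (c - b))⁻¹
    simpa [← mul_assoc, inv_mul_cancel₀ hGcb] using this
  · rw [mul_left_comm, ← integral_const_mul]
    rw [show (fun y => Complex.Gamma (c - b) * g y) = fun y => ∫ t in Set.Ioo (0 : ℝ) 1, H (t, y) from
      funext fun y => (hinner1 y).symm]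
    rw [← integral_integral_swap (f := fun t y => H (t, y)) hHint, ← integral_const_mul,
      ← integral_const_mul]
    exact setIntegral_congr_fun measurableSet_Ioo hinner2

/-- Let `Re v = 0`, `Re u ≥ 0`, `Re λ > 1 + Re u`, and `1 - 2Re λ < Δ < -1 - 2Re u`.
If `F` is an analytic function on `ℂ ∖ [1,∞)` agreeing with the Gauss hypergeometric series
`₂F₁(λ-u+v, λ-u-v, 2λ; w)` for `|w| < 1`, then for every real `z < 0`,
`(1/2)(-z)^{1/2-λ} · (1/2π) ∫_ℝ Γ(u,v,λ;Δ+iτ) (-1/z)^{(Δ+iτ)/2} dτ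
  = Γ(λ-u+v)Γ(λ-u-v)/Γ(2λ) · F(z)`, the integral being absolutely convergent. -/
theorem H_lambda_eq_hypergeometric (u v lam : ℂ) (hv : v.re = 0) (hu : 0 ≤ u.re)
    (hlam : 1 + u.re < lam.re) (Δ : ℝ) (hΔ1 : 1 - 2 * lam.re < Δ) (hΔ2 : Δ < -1 - 2 * u.re)
    (F : ℂ → ℂ)
    (hF : AnalyticOnNhd ℂ F {w : ℂ | ¬(w.im = 0 ∧ 1 ≤ w.re)})
    (hFseries : ∀ w : ℂ, ‖w‖ < 1 →
      F w = Complex.Gamma (2 * lam) /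
          (Complex.Gamma (lam - u + v) * Complex.Gamma (lam - u - v)) *
          ∑' n : ℕ, Complex.Gamma (lam - u + v + n) * Complex.Gamma (lam - u - v + n) /
            Complex.Gamma (2 * lam + n) * w ^ n / (n.factorial : ℂ))
    (z : ℝ) (hz : z < 0) :
    Integrable (fun τ : ℝ => gammaFactor u v lam (Δ + τ * Complex.I) *
        Complex.exp (((Δ : ℂ) + τ * Complex.I) / 2 * Real.log (-1 / z))) ∧
    (1 / 2 : ℂ) * Complex.exp ((1 / 2 - lam) * Real.log (-z)) *
        ((1 / (2 * Real.pi) : ℂ) * ∫ τ : ℝ, gammaFactor u v lam (Δ + τ * Complex.I) *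
          Complex.exp (((Δ : ℂ) + τ * Complex.I) / 2 * Real.log (-1 / z)))
      = Complex.Gamma (lam - u + v) * Complex.Gamma (lam - u - v) / Complex.Gamma (2 * lam) *
          F (z : ℂ) := by
  have hx : 0 < -z := by linarith
  have har : (lam - u + v).re = lam.re - u.re := by simp [hv]
  have hbr : (lam - u - v).re = lam.re - u.re := by simp [hv]
  have hcr : (2 * lam).re = 2 * lam.re := by simp
  obtain ⟨σ, hσ⟩ : ∃ σ : ℝ, σ = lam.re - 1 / 2 + Δ / 2 := ⟨_, rfl⟩
  obtain ⟨hI, hE⟩ := aux_barnes (a := lam - u + v) (b := lam - u - v) (c := 2 * lam) (σ := σ)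
    (x := -z) (by linarith) (by linarith) (by linarith) (by linarith) hx
  have hEu := aux_euler (a := lam - u + v) (b := lam - u - v) (c := 2 * lam) (by linarith)
    (by linarith) (by linarith) F hF hFseries (w := (z : ℂ)) (by simp; linarith)
  have hGcb : Complex.Gamma (2 * lam - (lam - u - v)) ≠ 0 :=
    Complex.Gamma_ne_zero_of_re_pos (by rw [Complex.sub_re, hcr, hbr]; linarith)
  simp only [Complex.ofReal_neg, neg_neg] at hE
  rw [← hEu] at hE
  have hE := mul_left_cancel₀ hGcb hE
  set g : ℝ → ℂ := fun y : ℝ => Complex.Gamma (σ + y * Complex.I) *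
      Complex.Gamma (lam - u + v - (σ + y * Complex.I)) *
      Complex.Gamma (lam - u - v - (σ + y * Complex.I)) /
      Complex.Gamma (2 * lam - (σ + y * Complex.I)) *
      (-(z : ℂ)) ^ (-(σ + y * Complex.I)) with hg
  have hI : Integrable g := by simpa [hg] using hI
  have hrel : (fun τ : ℝ => gammaFactor u v lam (Δ + τ * Complex.I) *
        Complex.exp (((Δ : ℂ) + τ * Complex.I) / 2 * Real.log (-1 / z))) =
      fun τ => Complex.exp ((lam - 1 / 2) * Real.log (-z)) * g (lam.im + τ / 2) := by
    funext τ
    have hw : (σ : ℂ) + ((lam.im + τ / 2 : ℝ) : ℂ) * Complex.I =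
        lam - 1 / 2 + (Δ + τ * Complex.I) / 2 := by
      conv_rhs => rw [← Complex.re_add_im lam]
      rw [hσ]; push_cast; ring
    simp only [hg]
    rw [hw, gammaFactor, show (-1 : ℝ) / z = (-z)⁻¹ by rw [inv_neg, neg_div, one_div], Real.log_inv]
    rw [show (-(z : ℂ)) = ((-z : ℝ) : ℂ) by push_cast; ring, aux_cpow hx]
    rw [show 2 * lam - (lam - 1 / 2 + (Δ + τ * Complex.I) / 2) =
        lam + 1 / 2 - (Δ + τ * Complex.I) / 2 by ring,
      show lam - u + v - (lam - 1 / 2 + (Δ + τ * Complex.I) / 2) =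
        1 / 2 - u + v - (Δ + τ * Complex.I) / 2 by ring,
      show lam - u - v - (lam - 1 / 2 + (Δ + τ * Complex.I) / 2) =
        1 / 2 - u - v - (Δ + τ * Complex.I) / 2 by ring,
      show -(lam - 1 / 2 + (Δ + τ * Complex.I) / 2) * (Real.log (-z) : ℂ) =
        -((lam - 1 / 2) * (Real.log (-z) : ℂ)) +
          (Δ + τ * Complex.I) / 2 * ((-Real.log (-z) : ℝ) : ℂ) by push_cast; ring,
      Complex.exp_add, Complex.exp_neg]
    have := Complex.exp_ne_zero ((lam - 1 / 2) * (Real.log (-z) : ℂ))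
    field_simp
  rw [hrel]
  refine ⟨?_, ?_⟩
  · exact (((hI.comp_add_left lam.im).comp_div (two_ne_zero (α := ℝ)))).const_mul _
  · rw [← hE, integral_const_mul,
      Measure.integral_comp_div (fun y => g (lam.im + y)) 2, integral_add_left_eq_self g lam.im,
      show (1 / 2 - lam) * (Real.log (-z) : ℂ) = -((lam - 1 / 2) * (Real.log (-z) : ℂ)) by ring,
      Complex.exp_neg]
    have := Complex.exp_ne_zero ((lam - 1 / 2) * (Real.log (-z) : ℂ))
    simp only [abs_two, Complex.real_smul, Complex.ofReal_ofNat]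
    field_simp
end
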